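/- arXiv:0810.5175 — 2 statements merged into one kernel-verified Lean document; each statement's English description precedes it below -/
import Mathlib

section
/- Long time estimate, small energy regime: there exist absolute constants c₀ > 0 and C_{L,0} > 0 such that for every compact time interval J, every classical solution u of ∂ₜₜu − Δu = −f(u) on J with energy E and a priori bound sup_{t∈J} ‖u(t,·)‖_{H̃²(ℝ³)} ≤ M, if E ≤ c₀·g(M)^{−1/2} then ‖u‖⁴_{L⁴ₜL¹²ₓ(J×ℝ³)} ≤ C_{L,0}. -/
open MeasureTheory Set

noncomputable section

abbrev Space : Type := EuclideanSpace ℝ (Fin 3)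

/-- The loglog weight `g(u) = (log log (10 + u²))^c`. -/
def g (c u : ℝ) : ℝ := Real.log (Real.log (10 + u ^ 2)) ^ c

/-- The nonlinearity `f(u) = u⁵ g(u)`. -/
def f (c u : ℝ) : ℝ := u ^ 5 * g c u

/-- The potential `F(u) = ∫₀ᵘ f(v) dv`. -/
def Fpot (c u : ℝ) : ℝ := ∫ v in (0:ℝ)..u, f c v

/-- First time derivative `∂ₜ u`. -/
def dt1 (u : ℝ → Space → ℝ) (t : ℝ) (x : Space) : ℝ := deriv (fun s => u s x) t

/-- Second time derivative `∂ₜₜ u`. -/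
def dt2 (u : ℝ → Space → ℝ) (t : ℝ) (x : Space) : ℝ := deriv (fun s => dt1 u s x) t

/-- The spatial Laplacian. -/
def lap (h : Space → ℝ) (x : Space) : ℝ :=
  ∑ i : Fin 3, fderiv ℝ (fun y => fderiv ℝ h y (EuclideanSpace.single i 1)) x
    (EuclideanSpace.single i 1)

/-- A classical solution of `∂ₜₜ u - Δ u = -f(u)` on the time interval `J`:
infinitely differentiable, compactly supported in space for each fixed time,
and satisfying the equation. -/
structure IsClassicalSol (c : ℝ) (J : Set ℝ) (u : ℝ → Space → ℝ) : Prop where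
  smooth : ContDiffOn ℝ (⊤ : ℕ∞) (fun p : ℝ × Space => u p.1 p.2) (J ×ˢ (Set.univ : Set Space))
  compactSpt : ∀ t ∈ J, HasCompactSupport (u t)
  eqn : ∀ t ∈ J, ∀ x : Space, dt2 u t x - lap (u t) x = - f c (u t x)

/-- The conserved energy. -/
def energy (c : ℝ) (u : ℝ → Space → ℝ) (t : ℝ) : ℝ :=
  (1/2) * (∫ x : Space, (dt1 u t x) ^ 2)
    + (1/2) * (∫ x : Space, ‖gradient (u t) x‖ ^ 2)
    + ∫ x : Space, Fpot c (u t x)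

/-- Spatial `L^r` norm. -/
def LxNorm (r : ℝ) (h : Space → ℝ) : ℝ := (∫ x : Space, |h x| ^ r) ^ (1 / r)

/-- Mixed norm `L^q_t L^r_x (J × ℝ³)`. -/
def LtLxNorm (q r : ℝ) (J : Set ℝ) (u : ℝ → Space → ℝ) : ℝ :=
  (∫ t in J, (LxNorm r (u t)) ^ q) ^ (1 / q)

/-- The homogeneous `H̃² = Ḣ² ∩ Ḣ¹` norm. -/
def H2tildeNorm (h : Space → ℝ) : ℝ :=
  (∫ x : Space, ‖iteratedFDeriv ℝ 2 h x‖ ^ 2) ^ ((1:ℝ)/2)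
    + (∫ x : Space, ‖gradient h x‖ ^ 2) ^ ((1:ℝ)/2)

/-- The inhomogeneous `H¹` norm. -/
def H1Norm (h : Space → ℝ) : ℝ :=
  (∫ x : Space, (h x) ^ 2) ^ ((1:ℝ)/2)
    + (∫ x : Space, ‖gradient h x‖ ^ 2) ^ ((1:ℝ)/2)

/-- Spatial `L^r` norm restricted to the interior of the light cone at time `t`,
i.e. the norm of `h · 1_{|x| < t}`. -/
def LxConeNorm (r t : ℝ) (h : Space → ℝ) : ℝ :=
  (∫ x in Metric.ball (0:Space) t, |h x| ^ r) ^ (1 / r)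

/-- Mixed norm `L^q_t L^r_x (Γ₊(J))` on the truncated forward light cone. -/
def LtLxConeNorm (q r : ℝ) (J : Set ℝ) (u : ℝ → Space → ℝ) : ℝ :=
  (∫ t in J, (LxConeNorm r t (u t)) ^ q) ^ (1 / q)

/-- The local energy `e(t)` (integral over the ball `|x| ≤ t`). -/
def locEnergy (c : ℝ) (u : ℝ → Space → ℝ) (t : ℝ) : ℝ :=
  (1/2) * (∫ x in Metric.closedBall (0:Space) t, (dt1 u t x) ^ 2)
    + (1/2) * (∫ x in Metric.closedBall (0:Space) t, ‖gradient (u t) x‖ ^ 2)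
    + ∫ x in Metric.closedBall (0:Space) t, Fpot c (u t x)

section PartOne
open scoped ENNReal

abbrev sph : Measure (Metric.sphere (0:Space) 1) := (volume : Measure Space).toSphere

lemma polar_lintegral (F : Space → ℝ≥0∞) (hF : Measurable F) :
    ∫⁻ y, F y = ∫⁻ r in Ioi (0:ℝ), ∫⁻ w, ENNReal.ofReal (r^2) * F (r • (w:Space)) ∂sph := by
  have h1 : ∫⁻ y, F y = ∫⁻ y : ({(0:Space)}ᶜ : Set Space), F y ∂(volume.comap Subtype.val) := by
    rw [lintegral_subtype_comap (measurableSet_singleton _).compl F, restrict_compl_singleton]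
  have h2 := (volume : Measure Space).measurePreserving_homeomorphUnitSphereProd.symm
    (homeomorphUnitSphereProd Space).toMeasurableEquiv
  rw [h1, ← h2.lintegral_comp (f := fun y : ({(0:Space)}ᶜ : Set Space) => F y)
    (hF.comp measurable_subtype_coe)]
  rw [lintegral_prod_symm]
  · have : Module.finrank ℝ Space - 1 = 2 := by simp
    rw [this, Measure.volumeIoiPow, lintegral_withDensity_eq_lintegral_mul₀']
    · rw [← lintegral_subtype_comap measurableSet_Ioi]
      refine lintegral_congr fun r => ?_
      simp only [Pi.mul_apply]
      rw [← lintegral_const_mul]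
      · rfl
      · refine hF.comp (measurable_subtype_coe.comp ?_)
        exact (Homeomorph.toMeasurableEquiv _).symm.measurable.comp (by fun_prop)
    · exact (Measurable.ennreal_ofReal (by fun_prop)).aemeasurable
    · apply Measurable.aemeasurable
      apply Measurable.lintegral_prod_left' (f := fun p : (Metric.sphere (0:Space) 1) × (Ioi (0:ℝ)) => F ↑((homeomorphUnitSphereProd Space).toMeasurableEquiv.symm p))
      refine hF.comp (measurable_subtype_coe.comp ?_)
      exact (Homeomorph.toMeasurableEquiv _).symm.measurable
  · apply Measurable.aemeasurable
    refine hF.comp (measurable_subtype_coe.comp ?_)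
    exact (Homeomorph.toMeasurableEquiv _).symm.measurable

lemma tail_six : ∃ C : ℝ, 0 < C ∧ ∀ τ : ℝ, 0 < τ →
    ∫⁻ y : Space, (if τ ≤ ‖y‖ then ENNReal.ofReal (‖y‖⁻¹) else 0)^6 ≤ ENNReal.ofReal (C * (τ^3)⁻¹) := by
  refine ⟨sph.real univ + 1, by positivity, fun τ hτ => ?_⟩
  rw [polar_lintegral _ (by
    refine Measurable.pow_const (Measurable.ite ?_ ?_ measurable_const) 6
    · exact measurableSet_le measurable_const measurable_norm
    · fun_prop)]
  have : ∀ r ∈ Ioi (0:ℝ), ∫⁻ w, ENNReal.ofReal (r^2) * (if τ ≤ ‖r • (w:Space)‖ then ENNReal.ofReal (‖r • (w:Space)‖⁻¹) else 0)^6 ∂sph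
     = (Ici τ).indicator (fun r => ENNReal.ofReal (r^(-4:ℝ)) * sph univ) r := by
    intro r hr
    have hr' : 0 < r := hr
    have : ∀ w : Metric.sphere (0:Space) 1, ‖r • (w:Space)‖ = r := by
      intro w; rw [norm_smul]; simp [abs_of_pos hr']
    simp only [this, lintegral_const]
    by_cases h : τ ≤ r
    · rw [if_pos h, indicator_of_mem (by exact h), ← ENNReal.ofReal_pow (by positivity), ← ENNReal.ofReal_mul (by positivity)]
      congr 2
      rw [Real.rpow_neg hr'.le]
      norm_cast
      field_simp
    · rw [if_neg h, indicator_of_notMem (by exact h)]; simp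
  rw [setLIntegral_congr_fun measurableSet_Ioi this, setLIntegral_indicator measurableSet_Ici]
  have e : Ici τ ∩ Ioi 0 = Ici τ := inter_eq_left.2 (fun x hx => lt_of_lt_of_le hτ hx)
  rw [e, setLIntegral_congr Ioi_ae_eq_Ici.symm, lintegral_mul_const _ (by fun_prop),
    ← ofReal_integral_eq_lintegral_ofReal (integrableOn_Ioi_rpow_of_lt (by norm_num) hτ)
     (by filter_upwards [ae_restrict_mem measurableSet_Ioi] with r hr
         exact Real.rpow_nonneg (hτ.trans hr).le _), integral_Ioi_rpow_of_lt (by norm_num) hτ,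
    ← ENNReal.ofReal_toReal (measure_ne_top sph univ), ← ENNReal.ofReal_mul]
  · apply ENNReal.ofReal_le_ofReal
    have h3 : (-4:ℝ)+1 = -(3:ℕ) := by norm_num
    rw [h3, Real.rpow_neg hτ.le, Real.rpow_natCast]
    have : 0 ≤ (τ^3)⁻¹ := by positivity
    change _ * sph.real univ ≤ _
    have h5 : 0 ≤ sph.real univ := measureReal_nonneg
    push_cast
    nlinarith [mul_nonneg this h5]
  · have h3 : (-4:ℝ)+1 = -(3:ℕ) := by norm_num
    rw [h3, Real.rpow_neg hτ.le, Real.rpow_natCast]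
    push_cast
    rw [neg_div_neg_eq]
    positivity

lemma cyl_lintegral (H : ℝ × ℝ → ℝ≥0∞) (hH : Measurable H) :
    ∫⁻ x : Space, H (‖x‖, x 0) =
      ENNReal.ofReal (2 * Real.pi) * ∫⁻ x1 : ℝ, ∫⁻ r in Ioi |x1|, ENNReal.ofReal r * H (r, x1) := by
  have e1 := (PiLp.volume_preserving_toLp (Fin 3))
  have e2 := (volume_preserving_piFinSuccAbove (fun _ : Fin 3 => ℝ) 0).symm
  have e3 := (MeasurePreserving.id (volume : Measure ℝ)).prod (volume_preserving_finTwoArrow ℝ).symm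
  have E := (e1.comp e2).comp e3
  have hm : Measurable (fun x : Space => H (‖x‖, x 0)) := by
    apply hH.comp; fun_prop
  rw [← E.lintegral_comp hm]
  have key : ∀ p : ℝ × ℝ × ℝ, H (‖((WithLp.toLp 2 ∘ ⇑(MeasurableEquiv.piFinSuccAbove (fun _ : Fin 3 => ℝ) 0).symm) ∘ Prod.map id ⇑MeasurableEquiv.finTwoArrow.symm) p‖,
     (((WithLp.toLp 2 ∘ ⇑(MeasurableEquiv.piFinSuccAbove (fun _ : Fin 3 => ℝ) 0).symm) ∘ Prod.map id ⇑MeasurableEquiv.finTwoArrow.symm) p : Space) 0)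
     = H (Real.sqrt (p.1^2 + (p.2.1^2+p.2.2^2)), p.1) := by
    intro p
    congr 2
    rw [EuclideanSpace.norm_eq]
    congr 1
    simp [Fin.sum_univ_three, MeasurableEquiv.piFinSuccAbove, MeasurableEquiv.finTwoArrow]
    ring
  refine (lintegral_congr key).trans ?_
  have hm2 : Measurable (fun p : ℝ × ℝ × ℝ => H (Real.sqrt (p.1^2 + (p.2.1^2+p.2.2^2)), p.1)) := by
    apply hH.comp; fun_prop
  rw [lintegral_prod _ hm2.aemeasurable, ← lintegral_const_mul' _ _ ENNReal.ofReal_ne_top]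
  refine lintegral_congr fun x1 => ?_
  have hp := lintegral_comp_polarCoord_symm (fun q : ℝ × ℝ => H (Real.sqrt (x1^2 + (q.1^2+q.2^2)), x1))
  refine hp.symm.trans ?_
  have h1 : ∀ p ∈ polarCoord.target, ENNReal.ofReal p.1 • H (Real.sqrt (x1^2 + ((polarCoord.symm p).1^2+(polarCoord.symm p).2^2)), x1)
     = ENNReal.ofReal p.1 * H (Real.sqrt (x1^2 + p.1^2), x1) := by
    intro p hp
    simp only [polarCoord_symm_apply, smul_eq_mul]
    congr 3
    have := Real.sin_sq_add_cos_sq p.2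
    congr 2
    linear_combination p.1^2 * this
  rw [setLIntegral_congr_fun polarCoord.open_target.measurableSet h1]
  rw [polarCoord_target, Measure.volume_eq_prod, ← Measure.prod_restrict, lintegral_prod _ (by
    apply Measurable.aemeasurable
    apply Measurable.mul (by fun_prop)
    apply hH.comp; fun_prop)]
  simp only [lintegral_const, Measure.restrict_apply MeasurableSet.univ, univ_inter, Real.volume_Ioo]
  rw [lintegral_mul_const _ (by
    apply Measurable.mul (by fun_prop)
    apply hH.comp; fun_prop), mul_comm]
  congr 1
  · congr 1; ring
  · have himg : (fun ρ : ℝ => Real.sqrt (x1^2+ρ^2)) '' (Ioi 0) = Ioi |x1| := by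
      ext r
      simp only [mem_image, mem_Ioi]
      constructor
      · rintro ⟨ρ, hρ, rfl⟩
        apply Real.lt_sqrt_of_sq_lt
        rw [sq_abs]; nlinarith [pow_pos hρ 2]
      · intro hr
        have h0 : 0 ≤ |x1| := abs_nonneg _
        have h2 : x1^2 < r^2 := sq_lt_sq' (by linarith [neg_abs_le x1]) (by linarith [le_abs_self x1])
        refine ⟨Real.sqrt (r^2 - x1^2), Real.sqrt_pos.2 (by linarith), ?_⟩
        rw [Real.sq_sqrt (by linarith)]
        rw [show x1^2 + (r^2-x1^2) = r^2 by ring, Real.sqrt_sq (by linarith)]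
    have hpos : ∀ ρ : ℝ, ρ ∈ Ioi (0:ℝ) → 0 < x1^2+ρ^2 := by
      intro ρ hρ
      have : 0 < ρ := hρ
      positivity
    rw [← himg, lintegral_image_eq_lintegral_abs_deriv_mul (f' := fun ρ => ρ / Real.sqrt (x1^2+ρ^2)) measurableSet_Ioi]
    · refine setLIntegral_congr_fun measurableSet_Ioi ?_
      intro ρ hρ
      have hs : 0 < Real.sqrt (x1^2+ρ^2) := Real.sqrt_pos.2 (hpos ρ hρ)
      have h0 : 0 < ρ := hρ
      simp only
      rw [← mul_assoc, ← ENNReal.ofReal_mul (by positivity), abs_of_pos (by positivity), div_mul_cancel₀ _ hs.ne']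
    · intro ρ hρ
      have h1 : HasDerivAt (fun ρ : ℝ => x1^2+ρ^2) (2*ρ) ρ := by
        simpa using (hasDerivAt_pow 2 ρ).const_add (x1^2)
      have := h1.sqrt (hpos ρ hρ).ne'
      rw [mul_div_mul_left _ _ (by norm_num)] at this
      exact this.hasDerivWithinAt
    · intro a ha b hb hab
      have ha' : 0 < a := ha
      have hb' : 0 < b := hb
      simp only at hab
      rw [Real.sqrt_inj (hpos a ha).le (hpos b hb).le] at hab
      have : a^2 = b^2 := by linarith
      exact (pow_left_inj₀ ha'.le hb'.le (by norm_num)).1 this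

lemma exists_rot (e : Space) : ∃ A : Space ≃ₗᵢ[ℝ] Space, A e = EuclideanSpace.single 0 ‖e‖ := by
  refine ⟨_, Submodule.reflection_sub (v := e) (w := EuclideanSpace.single 0 ‖e‖) ?_⟩
  simp

lemma bipolar (Ψ : ℝ × ℝ → ℝ≥0∞) (hΨ : Measurable Ψ) (e : Space) (he : e ≠ 0) :
    ∫⁻ x : Space, Ψ (‖x‖, ‖x - e‖) * ENNReal.ofReal (‖x‖⁻¹) * ENNReal.ofReal (‖x - e‖⁻¹)
      ≤ ENNReal.ofReal (2 * Real.pi * ‖e‖⁻¹) * ∫⁻ t in Ioi (0:ℝ), ∫⁻ t' in Ioi (0:ℝ),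
          (if |t - t'| ≤ ‖e‖ then Ψ (t, t') else 0) := by
  obtain ⟨A, hA⟩ := exists_rot e
  set d := ‖e‖ with hd
  have hd0 : 0 < d := norm_pos_iff.2 he
  let q : ℝ → ℝ → ℝ := fun r x1 => Real.sqrt (r^2 - 2*d*x1 + d^2)
  let H : ℝ × ℝ → ℝ≥0∞ := fun p => Ψ (p.1, q p.1 p.2) * ENNReal.ofReal (p.1⁻¹) * ENNReal.ofReal ((q p.1 p.2)⁻¹)
  have hqm : Measurable (fun p : ℝ × ℝ => q p.1 p.2) := by
    simp only [q]; fun_prop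
  have hH : Measurable H := by
    refine Measurable.mul (Measurable.mul ?_ ?_) ?_
    · exact hΨ.comp (measurable_fst.prodMk hqm)
    · fun_prop
    · exact hqm.inv.ennreal_ofReal
  have h1 : ∀ x : Space, Ψ (‖x‖, ‖x - e‖) * ENNReal.ofReal (‖x‖⁻¹) * ENNReal.ofReal (‖x - e‖⁻¹)
      = H (‖A x‖, (A x) 0) := by
    intro x
    have h2 : ‖x - e‖ = q ‖x‖ ((A x) 0) := by
      rw [← A.norm_map (x - e), map_sub, hA]
      simp only [q]
      rw [← A.norm_map x]
      generalize A x = y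
      rw [← Real.sqrt_sq (norm_nonneg (y - _)), norm_sub_sq_real]
      congr 2
      · simp [EuclideanSpace.inner_single_right]; ring
      · simp
    simp only [H, A.norm_map, h2]
  rw [lintegral_congr h1, A.measurePreserving.lintegral_comp (f := fun y => H (‖y‖, y 0))
    (by apply hH.comp; fun_prop), cyl_lintegral H hH]
  have hq0 : ∀ r x1 : ℝ, |x1| < r → 0 < r^2 - 2*d*x1+d^2 := by
    intro r x1 h
    have := abs_lt.1 h
    nlinarith [sq_nonneg (r-d), mul_pos hd0 (sub_pos.2 this.2)]
  calc _ = ENNReal.ofReal (2 * Real.pi) * ∫⁻ x1 : ℝ, ∫⁻ r in Ioi (0:ℝ), (if |x1| < r then Ψ (r, q r x1) * ENNReal.ofReal ((q r x1)⁻¹) else 0) := by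
        congr 1
        refine lintegral_congr fun x1 => ?_
        rw [← lintegral_indicator measurableSet_Ioi, ← lintegral_indicator measurableSet_Ioi]
        refine lintegral_congr fun r => ?_
        by_cases h : |x1| < r
        · have hr : 0 < r := (abs_nonneg _).trans_lt h
          rw [indicator_of_mem (by exact h), indicator_of_mem (by exact hr), if_pos h]
          simp only [H]
          rw [mul_comm (Ψ _), ← mul_assoc, ← mul_assoc, ← ENNReal.ofReal_mul hr.le, mul_inv_cancel₀ hr.ne']
          simp
        · rw [indicator_of_notMem (by exact h)]
          simp [indicator, h]
    _ = ENNReal.ofReal (2 * Real.pi) * ∫⁻ r in Ioi (0:ℝ), ∫⁻ x1 : ℝ, (if |x1| < r then Ψ (r, q r x1) * ENNReal.ofReal ((q r x1)⁻¹) else 0) := by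
        congr 1
        rw [lintegral_lintegral_swap]
        apply Measurable.aemeasurable
        refine Measurable.ite ?_ ?_ measurable_const
        · exact measurableSet_lt (measurable_fst.abs : Measurable (fun p : ℝ × ℝ => |p.1|)) measurable_snd
        · have hqm' : Measurable (fun p : ℝ × ℝ => q p.2 p.1) := hqm.comp measurable_swap
          exact (hΨ.comp (measurable_snd.prodMk hqm')).mul hqm'.inv.ennreal_ofReal
    _ ≤ ENNReal.ofReal (2 * Real.pi) * ∫⁻ r in Ioi (0:ℝ), ENNReal.ofReal d⁻¹ * ∫⁻ t' in Ioi (0:ℝ),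
          (if |r - t'| ≤ d then Ψ (r, t') else 0) := by
        refine mul_le_mul' le_rfl ?_
        refine setLIntegral_mono' measurableSet_Ioi fun r hr => ?_
        have hr0 : 0 < r := hr
        have hinj : InjOn (q r) (Ioo (-r) r) := by
          intro a ha b hb hab
          simp only [q] at hab
          rw [Real.sqrt_inj (hq0 r a (abs_lt.2 ha)).le (hq0 r b (abs_lt.2 hb)).le] at hab
          have : 2*d*(b-a) = 0 := by linarith
          have : b - a = 0 := by
            rcases mul_eq_zero.1 this with h | h
            · linarith
            · exact h
          linarith
        have himg : q r '' (Ioo (-r) r) ⊆ Ioi 0 := by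
          rintro _ ⟨x1, hx, rfl⟩
          exact Real.sqrt_pos.2 (hq0 r x1 (abs_lt.2 hx))
        have hcv := lintegral_image_eq_lintegral_abs_deriv_mul (f := q r) (f' := fun x1 => -(d / q r x1))
          measurableSet_Ioo (fun x1 (hx : x1 ∈ Ioo (-r) r) => by
            have h0 := hq0 r x1 (abs_lt.2 hx)
            have h1 : HasDerivAt (fun x1 : ℝ => r^2 - 2*d*x1+d^2) (-(2*d)) x1 := by
              simpa using (((hasDerivAt_id x1).const_mul (2*d)).const_sub (r^2)).add_const (d^2)
            have := h1.sqrt h0.ne'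
            rw [neg_div, mul_div_mul_left _ _ (by norm_num)] at this
            exact this.hasDerivWithinAt) hinj
            (fun t' => if |r - t'| ≤ d then Ψ (r, t') else 0)
        calc _ = ENNReal.ofReal d⁻¹ * ∫⁻ x1 in Ioo (-r) r, ENNReal.ofReal |(-(d / q r x1))| * (if |r - q r x1| ≤ d then Ψ (r, q r x1) else 0) := by
              rw [← lintegral_const_mul' _ _ (by simp), ← lintegral_indicator measurableSet_Ioo]
              refine lintegral_congr fun x1 => ?_
              by_cases h : |x1| < r
              · have h0 := hq0 r x1 h
                have hq : 0 < q r x1 := Real.sqrt_pos.2 h0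
                have hqq : (q r x1)^2 = r^2 - 2*d*x1+d^2 := Real.sq_sqrt h0.le
                have h' := abs_lt.1 h
                rw [if_pos h, indicator_of_mem (by exact h'), if_pos, abs_neg, abs_of_pos (by positivity), ← mul_assoc, ← ENNReal.ofReal_mul (by positivity)]
                · rw [mul_comm]; congr 2; field_simp
                · apply abs_le_of_sq_le_sq _ hd0.le
                  have h8 : r - d ≤ q r x1 := by
                    apply Real.le_sqrt_of_sq_le; nlinarith
                  have h9 : d - r ≤ q r x1 := by
                    apply Real.le_sqrt_of_sq_le; nlinarith
                  have h10 : q r x1 ≤ r + d := by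
                    apply Real.sqrt_le_iff.2; constructor
                    · linarith
                    · nlinarith
                  nlinarith
              · rw [if_neg h, indicator_of_notMem]
                intro h'; exact h (abs_lt.2 h')
          _ ≤ _ := by
              rw [← hcv]
              exact mul_le_mul' le_rfl (lintegral_mono_set himg)
    _ = _ := by
        rw [lintegral_const_mul' _ _ (by simp), ← mul_assoc, ← ENNReal.ofReal_mul (by positivity)]
end PartOne

section PartTwo
open scoped ENNReal

def kk (τ : ℝ) (y : Space) : ℝ≥0∞ := if τ ≤ ‖y‖ then ENNReal.ofReal (‖y‖⁻¹) else 0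

lemma kk_meas : Measurable (fun p : ℝ × Space => kk p.1 p.2) := by
  unfold kk
  refine Measurable.ite (measurableSet_le (by fun_prop) (by fun_prop)) (by fun_prop) measurable_const

lemma young_aux (P Q : Space → ℝ≥0∞) (hP : Measurable P) (hQ : Measurable Q) (τ : ℝ) :
    ∫⁻ x, ∫⁻ y, P x * Q y * kk τ (y - x) ≤
      (∫⁻ y, (kk τ y)^6)^(1/6:ℝ) * ((∫⁻ x, P x ^ (12/11:ℝ))^(11/12:ℝ) * (∫⁻ x, Q x ^ (12/11:ℝ))^(11/12:ℝ)) := by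
  have hk : Measurable (kk τ) := kk_meas.comp (measurable_const.prodMk measurable_id)
  have hk2 : Measurable (fun p : Space × Space => kk τ (p.2 - p.1)) := hk.comp (by fun_prop)
  let F : Fin 3 → Space × Space → ℝ≥0∞ := ![fun p => P p.1 ^ (12/11:ℝ) * (kk τ (p.2 - p.1))^6,
    fun p => Q p.2 ^ (12/11:ℝ) * (kk τ (p.2 - p.1))^6, fun p => P p.1 ^ (12/11:ℝ) * Q p.2 ^ (12/11:ℝ)]
  let w : Fin 3 → ℝ := ![1/12, 1/12, 10/12]
  have hF : ∀ i ∈ (Finset.univ : Finset (Fin 3)), AEMeasurable (F i) ((volume : Measure Space).prod volume) := by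
    intro i _
    apply Measurable.aemeasurable
    fin_cases i <;> simp [F]
    · exact ((hP.comp measurable_fst).pow_const _).mul (hk2.pow_const _)
    · exact ((hQ.comp measurable_snd).pow_const _).mul (hk2.pow_const _)
    · exact ((hP.comp measurable_fst).pow_const _).mul ((hQ.comp measurable_snd).pow_const _)
  have H := ENNReal.lintegral_prod_norm_pow_le (μ := (volume : Measure Space).prod volume) Finset.univ (f := F) hF
    (p := w) (by simp [Fin.sum_univ_three, w]; norm_num) (by intro i _; fin_cases i <;> norm_num [w])
  rw [← lintegral_prod (fun p : Space × Space => P p.1 * Q p.2 * kk τ (p.2 - p.1)) (by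
    exact (((hP.comp measurable_fst).mul (hQ.comp measurable_snd)).mul hk2).aemeasurable)]
  simp only [Fin.prod_univ_three, F, w, Matrix.cons_val_zero, Matrix.cons_val_one, Matrix.cons_val] at H
  have e0 : ∫⁻ p : Space × Space, P p.1 ^ (12/11:ℝ) * (kk τ (p.2 - p.1))^6 ∂((volume : Measure Space).prod volume) = (∫⁻ x, P x ^ (12/11:ℝ)) * ∫⁻ y, (kk τ y)^6 := by
    rw [lintegral_prod _ (by exact (((hP.comp measurable_fst).pow_const _).mul (hk2.pow_const _)).aemeasurable)]
    rw [← lintegral_mul_const _ (hP.pow_const _)]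
    refine lintegral_congr fun x => ?_
    simp only
    rw [lintegral_const_mul _ (by exact (hk.comp (measurable_id.sub_const x)).pow_const _)]
    congr 1
    exact lintegral_sub_right_eq_self (fun y => (kk τ y)^6) x
  have hsym : ∀ y : Space, kk τ (-y) = kk τ y := by intro y; simp [kk]
  have e1 : ∫⁻ p : Space × Space, Q p.2 ^ (12/11:ℝ) * (kk τ (p.2 - p.1))^6 ∂((volume : Measure Space).prod volume) = (∫⁻ x, Q x ^ (12/11:ℝ)) * ∫⁻ y, (kk τ y)^6 := by
    rw [lintegral_prod_symm _ (by exact (((hQ.comp measurable_snd).pow_const _).mul (hk2.pow_const _)).aemeasurable)]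
    rw [← lintegral_mul_const _ (hQ.pow_const _)]
    refine lintegral_congr fun x => ?_
    simp only
    rw [lintegral_const_mul _ (by exact (hk.comp (measurable_id.const_sub x)).pow_const _)]
    congr 1
    exact lintegral_sub_left_eq_self (fun y => (kk τ y)^6) x
  have e2 : ∫⁻ p : Space × Space, P p.1 ^ (12/11:ℝ) * Q p.2 ^ (12/11:ℝ) ∂((volume : Measure Space).prod volume) = (∫⁻ x, P x ^ (12/11:ℝ)) * (∫⁻ x, Q x ^ (12/11:ℝ)) :=
    lintegral_prod_mul (hP.pow_const _).aemeasurable (hQ.pow_const _).aemeasurable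
  rw [e0, e1, e2] at H
  refine le_trans (le_of_eq (lintegral_congr fun p => ?_)) (H.trans (le_of_eq ?_))
  · generalize P p.1 = a
    generalize Q p.2 = b
    generalize kk τ (p.2 - p.1) = c
    rw [← ENNReal.rpow_natCast]
    simp only [ENNReal.mul_rpow_of_nonneg _ _ (show (0:ℝ) ≤ 1/12 by norm_num), ENNReal.mul_rpow_of_nonneg _ _ (show (0:ℝ) ≤ 10/12 by norm_num), ← ENNReal.rpow_mul]
    have h : ∀ a : ℝ≥0∞, a = a ^ ((12/11:ℝ) * (1/12)) * a ^ ((12/11:ℝ) * (10/12)) := by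
      intro a
      rw [← ENNReal.rpow_add_of_nonneg _ _ (by norm_num) (by norm_num)]
      norm_num
    have h' : c = c ^ (((6:ℕ):ℝ) * (1/12)) * c ^ (((6:ℕ):ℝ) * (1/12)) := by
      rw [← ENNReal.rpow_add_of_nonneg _ _ (by norm_num) (by norm_num)]
      norm_num
    calc a * b * c = (a ^ ((12/11:ℝ) * (1/12)) * a ^ ((12/11:ℝ) * (10/12))) * (b ^ ((12/11:ℝ) * (1/12)) * b ^ ((12/11:ℝ) * (10/12))) * (c ^ (((6:ℕ):ℝ) * (1/12)) * c ^ (((6:ℕ):ℝ) * (1/12))) := by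
          rw [← h, ← h, ← h']
      _ = _ := by ring
  · generalize ∫⁻ x, P x ^ (12/11:ℝ) = a
    generalize ∫⁻ x, Q x ^ (12/11:ℝ) = b
    generalize ∫⁻ y, (kk τ y)^6 = c
    simp only [ENNReal.mul_rpow_of_nonneg _ _ (show (0:ℝ) ≤ 1/12 by norm_num), ENNReal.mul_rpow_of_nonneg _ _ (show (0:ℝ) ≤ 10/12 by norm_num)]
    have h : ∀ a : ℝ≥0∞, a ^ (11/12:ℝ) = a ^ ((1/12:ℝ)) * a ^ ((10/12:ℝ)) := by
      intro a
      rw [← ENNReal.rpow_add_of_nonneg _ _ (by norm_num) (by norm_num)]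
      norm_num
    have h' : c ^ (1/6:ℝ) = c ^ (1/12:ℝ) * c ^ (1/12:ℝ) := by
      rw [← ENNReal.rpow_add_of_nonneg _ _ (by norm_num) (by norm_num)]
      norm_num
    rw [h a, h b, h']
    ring

lemma young3 : ∃ C : ℝ, 0 < C ∧ ∀ (P Q : Space → ℝ≥0∞), Measurable P → Measurable Q → ∀ τ : ℝ, 0 < τ →
    ∫⁻ x, ∫⁻ y, P x * Q y * kk τ (y - x) ≤
      ENNReal.ofReal (C * τ^(-(1/2):ℝ)) * ((∫⁻ x, P x ^ (12/11:ℝ))^(11/12:ℝ) * (∫⁻ x, Q x ^ (12/11:ℝ))^(11/12:ℝ)) := by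
  obtain ⟨C, hC, h⟩ := tail_six
  refine ⟨C^(1/6:ℝ), by positivity, fun P Q hP hQ τ hτ => (young_aux P Q hP hQ τ).trans ?_⟩
  refine mul_le_mul' ?_ le_rfl
  refine (ENNReal.rpow_le_rpow (h τ hτ) (by norm_num)).trans (le_of_eq ?_)
  rw [ENNReal.ofReal_rpow_of_pos (by positivity), Real.mul_rpow hC.le (by positivity)]
  congr 2
  rw [← Real.rpow_natCast, ← Real.rpow_neg hτ.le, ← Real.rpow_mul hτ.le]
  norm_num

lemma lintegral_abs_eq (F : ℝ → ℝ≥0∞) (_hF : Measurable F) : ∫⁻ τ, F |τ| = 2 * ∫⁻ τ in Ioi (0:ℝ), F τ := by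
  rw [← lintegral_add_compl _ (measurableSet_Ioi (a := (0:ℝ))), two_mul]
  congr 1
  · exact setLIntegral_congr_fun measurableSet_Ioi fun τ hτ => by rw [abs_of_pos hτ]
  · rw [compl_Ioi, setLIntegral_congr Iio_ae_eq_Iic.symm]
    rw [← lintegral_indicator measurableSet_Iio, ← lintegral_indicator measurableSet_Ioi, ← lintegral_neg_eq_self]
    refine lintegral_congr fun τ => ?_
    by_cases h : 0 < τ
    · simp [indicator, h, abs_of_pos h]
    · simp [indicator, h]

def ww (τ : ℝ) : ℝ≥0∞ := ENNReal.ofReal (|τ| ^ (-(1/2):ℝ))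

lemma ww_meas : Measurable ww := by unfold ww; fun_prop

lemma ww_near (ρ : ℝ) (hρ : 0 < ρ) : ∫⁻ τ, (if |τ| < ρ then ww τ else 0) = ENNReal.ofReal (4 * ρ^(1/2:ℝ)) := by
  have := lintegral_abs_eq (fun τ => if τ < ρ then ENNReal.ofReal (τ ^ (-(1/2):ℝ)) else 0)
    (Measurable.ite (measurableSet_Iio) (by fun_prop) measurable_const)
  simp only [ww]
  rw [this]
  have e : ∫⁻ τ in Ioi (0:ℝ), (if τ < ρ then ENNReal.ofReal (τ ^ (-(1/2):ℝ)) else 0) = ∫⁻ τ in Ioo (0:ℝ) ρ, ENNReal.ofReal (τ ^ (-(1/2):ℝ)) := by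
    rw [← lintegral_indicator measurableSet_Ioi, ← lintegral_indicator measurableSet_Ioo]
    refine lintegral_congr fun τ => ?_
    by_cases h : 0 < τ <;> by_cases h2 : τ < ρ <;> simp [indicator, h, h2]
  rw [e, setLIntegral_congr Ioo_ae_eq_Ioc, ← ofReal_integral_eq_lintegral_ofReal, ← intervalIntegral.integral_of_le hρ.le, integral_rpow (by left; norm_num)]
  · rw [← ENNReal.ofReal_ofNat, ← ENNReal.ofReal_mul (by norm_num)]
    congr 1
    norm_num
    ring
  · exact (intervalIntegral.intervalIntegrable_rpow' (by norm_num)).1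
  · filter_upwards [ae_restrict_mem measurableSet_Ioc] with τ hτ
    exact Real.rpow_nonneg hτ.1.le _

lemma ww_far (ρ : ℝ) (hρ : 0 < ρ) : ∫⁻ τ, (if |τ| < ρ then 0 else ww τ) ^ (4:ℝ) = ENNReal.ofReal (2 * ρ⁻¹) := by
  have := lintegral_abs_eq (fun τ => (if τ < ρ then 0 else ENNReal.ofReal (τ ^ (-(1/2):ℝ)))^(4:ℝ))
    ((Measurable.ite (measurableSet_Iio) measurable_const (by fun_prop)).pow_const _)
  simp only [ww]
  rw [this]
  have e : ∫⁻ τ in Ioi (0:ℝ), (if τ < ρ then 0 else ENNReal.ofReal (τ ^ (-(1/2):ℝ)))^(4:ℝ) = ∫⁻ τ in Ici ρ, ENNReal.ofReal (τ ^ (-2:ℝ)) := by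
    rw [← lintegral_indicator measurableSet_Ioi, ← lintegral_indicator measurableSet_Ici]
    refine lintegral_congr fun τ => ?_
    by_cases h2 : τ < ρ
    · simp [indicator, h2, not_le.2 h2]
    · have h : 0 < τ := hρ.trans_le (not_lt.1 h2)
      simp only [indicator, mem_Ioi, h, h2, mem_Ici, not_lt.1 h2, if_true, if_false]
      rw [ENNReal.ofReal_rpow_of_pos (by positivity), ← Real.rpow_mul h.le]
      norm_num
  rw [e, setLIntegral_congr Ioi_ae_eq_Ici.symm, ← ofReal_integral_eq_lintegral_ofReal (integrableOn_Ioi_rpow_of_lt (by norm_num) hρ), integral_Ioi_rpow_of_lt (by norm_num) hρ]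
  · rw [← ENNReal.ofReal_ofNat, ← ENNReal.ofReal_mul (by norm_num)]
    congr 1
    norm_num
    rw [Real.rpow_neg_one]
  · filter_upwards [ae_restrict_mem measurableSet_Ioi] with τ hτ
    exact Real.rpow_nonneg (hρ.trans hτ).le _
end PartTwo

section PartThree
open scoped ENNReal

lemma hls_inner (φ : ℝ → ℝ≥0∞) (hφ : Measurable φ) (hS0 : ∫⁻ t, φ t ^ (4/3:ℝ) ≠ 0)
    (hS : ∫⁻ t, φ t ^ (4/3:ℝ) ≠ ∞) (t : ℝ) (ht : φ t ≠ ∞) :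
    ∫⁻ s, (if φ s ≤ φ t then φ s * ww (t - s) else 0) ≤
      6 * (φ t ^ (1/3:ℝ) * (∫⁻ t, φ t ^ (4/3:ℝ)) ^ (1/2:ℝ)) := by
  by_cases h0 : φ t = 0
  · rw [h0]
    simp only [nonpos_iff_eq_zero]
    have : ∀ s, (if φ s = 0 then φ s * ww (t - s) else 0) = 0 := by
      intro s; split_ifs with h <;> simp [h]
    simp [this]
  set S := ∫⁻ t, φ t ^ (4/3:ℝ) with hSdef
  set a := (φ t).toReal with ha
  have hφa : φ t = ENNReal.ofReal a := (ENNReal.ofReal_toReal ht).symm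
  have ha0 : 0 < a := ENNReal.toReal_pos h0 ht
  set b := S.toReal with hb
  have hSb : S = ENNReal.ofReal b := (ENNReal.ofReal_toReal hS).symm
  have hb0 : 0 < b := ENNReal.toReal_pos hS0 hS
  set ρ := b * a ^ (-(4/3):ℝ) with hρ
  have hρ0 : 0 < ρ := by positivity
  have hw : Measurable (fun s => ww (t - s)) := ww_meas.comp (by fun_prop)
  have hset : MeasurableSet {s : ℝ | |t - s| < ρ} := measurableSet_lt (by fun_prop) (by fun_prop)
  have hm1 : Measurable (fun s => if |t - s| < ρ then ww (t-s) else 0) := Measurable.ite hset hw measurable_const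
  have hm2 : Measurable (fun s => if |t - s| < ρ then 0 else ww (t-s)) := Measurable.ite hset measurable_const hw
  calc _ ≤ ∫⁻ s, (φ t * (if |t - s| < ρ then ww (t-s) else 0) + φ s * (if |t - s| < ρ then 0 else ww (t-s))) := by
        refine lintegral_mono fun s => ?_
        simp only
        split_ifs with h1 h2
        · simp; gcongr
        · simp
        · simp
        · simp
    _ = φ t * (∫⁻ s, (if |t - s| < ρ then ww (t-s) else 0)) + ∫⁻ s, φ s * (if |t - s| < ρ then 0 else ww (t-s)) := by
        rw [lintegral_add_left (by exact hm1.const_mul _), lintegral_const_mul _ hm1]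
    _ ≤ φ t * ENNReal.ofReal (4 * ρ^(1/2:ℝ)) + S ^ (1/(4/3):ℝ) * (ENNReal.ofReal (2 * ρ⁻¹))^(1/4:ℝ) := by
        refine add_le_add (mul_le_mul' le_rfl (le_of_eq ?_)) ?_
        · rw [← ww_near ρ hρ0]
          exact lintegral_sub_left_eq_self (fun τ => if |τ| < ρ then ww τ else 0) t
        · have := ENNReal.lintegral_mul_le_Lp_mul_Lq volume (p := 4/3) (q := 4)
            (Real.holderConjugate_iff.mpr ⟨by norm_num, by norm_num⟩) hφ.aemeasurable hm2.aemeasurable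
          refine this.trans (le_of_eq ?_)
          congr 2
          rw [← ww_far ρ hρ0]
          exact lintegral_sub_left_eq_self (fun τ => (if |τ| < ρ then 0 else ww τ)^(4:ℝ)) t
    _ ≤ _ := by
        rw [hφa, hSb, ENNReal.ofReal_rpow_of_pos (by positivity), ENNReal.ofReal_rpow_of_pos (by positivity), ENNReal.ofReal_rpow_of_pos (by positivity), ENNReal.ofReal_rpow_of_pos (by positivity), ← ENNReal.ofReal_mul (by positivity), ← ENNReal.ofReal_mul (by positivity), ← ENNReal.ofReal_mul (by positivity), ← ENNReal.ofReal_add (by positivity) (by positivity), ← ENNReal.ofReal_ofNat, ← ENNReal.ofReal_mul (by norm_num)]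
        apply ENNReal.ofReal_le_ofReal
        have e1 : a * (4 * ρ^(1/2:ℝ)) = 4 * (a^(1/3:ℝ) * b^(1/2:ℝ)) := by
          rw [hρ, Real.mul_rpow hb0.le (by positivity), ← Real.rpow_mul ha0.le]
          have : a^(1/3:ℝ) = a * a^(-(4/3)*(1/2):ℝ) := by
            rw [← Real.rpow_one_add' ha0.le (by norm_num)]; norm_num
          rw [this]; ring
        have e2 : b^(1/(4/3):ℝ) * (2*ρ⁻¹)^(1/4:ℝ) = 2^(1/4:ℝ) * (a^(1/3:ℝ) * b^(1/2:ℝ)) := by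
          rw [Real.mul_rpow (by norm_num) (by positivity), hρ, mul_inv, ← Real.rpow_neg ha0.le, ← Real.rpow_neg_one b, Real.mul_rpow (by positivity) (by positivity), ← Real.rpow_mul hb0.le, ← Real.rpow_mul ha0.le]
          have : b^(1/2:ℝ) = b^(1/(4/3):ℝ) * b^(-1*(1/4):ℝ) := by
            rw [← Real.rpow_add hb0]; norm_num
          rw [this]; norm_num; ring
        rw [e1, e2]
        have : (2:ℝ)^(1/4:ℝ) ≤ 2 := by
          calc (2:ℝ)^(1/4:ℝ) ≤ 2^(1:ℝ) := Real.rpow_le_rpow_of_exponent_le (by norm_num) (by norm_num)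
            _ = 2 := by norm_num
        have hp : 0 ≤ a^(1/3:ℝ) * b^(1/2:ℝ) := by positivity
        nlinarith

lemma hls_diag (φ : ℝ → ℝ≥0∞) (hφ : Measurable φ) :
    ∫⁻ t, ∫⁻ s, φ t * φ s * ww (t - s) ≤ 12 * (∫⁻ t, φ t ^ (4/3:ℝ)) ^ (3/2:ℝ) := by
  by_cases hS0 : ∫⁻ t, φ t ^ (4/3:ℝ) = 0
  · rw [lintegral_eq_zero_iff (hφ.pow_const _)] at hS0
    have : ∫⁻ t, ∫⁻ s, φ t * φ s * ww (t - s) = 0 := by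
      rw [← lintegral_zero (μ := (volume : Measure ℝ))]
      refine lintegral_congr_ae ?_
      filter_upwards [hS0] with t ht
      have : φ t = 0 := by
        have h : φ t ^ (4/3:ℝ) = 0 := ht
        rw [ENNReal.rpow_eq_zero_iff] at h
        rcases h with h | h
        · exact h.1
        · exfalso; have := h.2; norm_num at this
      simp [this]
    rw [this]; exact zero_le
  by_cases hS : ∫⁻ t, φ t ^ (4/3:ℝ) = ∞
  · rw [hS, ENNReal.top_rpow_of_pos (by norm_num), ENNReal.mul_top (by norm_num)]; exact le_top
  have hfin : ∀ᵐ t, φ t ≠ ∞ := by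
    filter_upwards [ae_lt_top (hφ.pow_const (4/3:ℝ)) hS] with t ht h
    rw [h, ENNReal.top_rpow_of_pos (by norm_num)] at ht
    exact lt_irrefl _ ht
  set S := ∫⁻ t, φ t ^ (4/3:ℝ)
  let A : ℝ → ℝ → ℝ≥0∞ := fun t s => if φ s ≤ φ t then φ t * φ s * ww (t - s) else 0
  have hA : Measurable (fun p : ℝ × ℝ => A p.1 p.2) := by
    refine Measurable.ite (measurableSet_le (hφ.comp measurable_snd) (hφ.comp measurable_fst)) ?_ measurable_const
    exact ((hφ.comp measurable_fst).mul (hφ.comp measurable_snd)).mul (ww_meas.comp (by fun_prop))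
  have hsym : ∀ x, ww (-x) = ww x := by intro x; simp [ww]
  have hI : ∫⁻ t, ∫⁻ s, A t s ≤ 6 * S ^ (3/2:ℝ) := by
    calc ∫⁻ t, ∫⁻ s, A t s ≤ ∫⁻ t, 6 * S^(1/2:ℝ) * φ t ^ (4/3:ℝ) := by
          refine lintegral_mono_ae ?_
          filter_upwards [hfin] with t ht
          have := hls_inner φ hφ hS0 hS t ht
          calc ∫⁻ s, A t s = φ t * ∫⁻ s, (if φ s ≤ φ t then φ s * ww (t - s) else 0) := by
                rw [← lintegral_const_mul' _ _ ht]
                refine lintegral_congr fun s => ?_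
                simp only [A, mul_ite, mul_zero, mul_assoc]
            _ ≤ φ t * (6 * (φ t ^ (1/3:ℝ) * S ^ (1/2:ℝ))) := mul_le_mul' le_rfl this
            _ = _ := by
                have : φ t ^ (4/3:ℝ) = φ t ^ (1:ℝ) * φ t ^ (1/3:ℝ) := by
                  rw [← ENNReal.rpow_add_of_nonneg _ _ (by norm_num) (by norm_num)]; norm_num
                rw [this, ENNReal.rpow_one]; ring
      _ = _ := by
          rw [lintegral_const_mul _ (hφ.pow_const _)]
          change 6 * S ^ (1/2:ℝ) * S = _
          have : S ^ (3/2:ℝ) = S ^ (1/2:ℝ) * S ^ (1:ℝ) := by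
            rw [← ENNReal.rpow_add_of_nonneg _ _ (by norm_num) (by norm_num)]; norm_num
          rw [this, ENNReal.rpow_one]; ring
  calc _ ≤ ∫⁻ t, ∫⁻ s, (A t s + A s t) := by
        refine lintegral_mono fun t => lintegral_mono fun s => ?_
        simp only [A]
        rcases le_total (φ s) (φ t) with h | h
        · rw [if_pos h]; exact le_self_add
        · rw [if_pos h, ← neg_sub s t, hsym, mul_comm (φ t)]; exact le_add_self
    _ = (∫⁻ t, ∫⁻ s, A t s) + ∫⁻ t, ∫⁻ s, A s t := by
        rw [← lintegral_add_left (by exact hA.lintegral_prod_right')]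
        refine lintegral_congr fun t => ?_
        rw [lintegral_add_left (by exact hA.comp (measurable_const.prodMk measurable_id))]
    _ = (∫⁻ t, ∫⁻ s, A t s) + ∫⁻ t, ∫⁻ s, A t s := by
        congr 1
        rw [lintegral_lintegral_swap]
        exact (hA.comp measurable_swap).aemeasurable
    _ ≤ 6 * S ^ (3/2:ℝ) + 6 * S ^ (3/2:ℝ) := add_le_add hI hI
    _ = _ := by rw [← add_mul]; norm_num

lemma swap4 {α β : Type*} [MeasurableSpace α] [MeasurableSpace β] (μ : Measure α) (ν : Measure β)
    [SFinite μ] [SFinite ν] (K : (α × α) × (β × β) → ℝ≥0∞) (hK : Measurable K) :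
    ∫⁻ x, ∫⁻ x', ∫⁻ t, ∫⁻ t', K ((x,x'),(t,t')) ∂ν ∂ν ∂μ ∂μ
      = ∫⁻ t, ∫⁻ t', ∫⁻ x, ∫⁻ x', K ((x,x'),(t,t')) ∂μ ∂μ ∂ν ∂ν := by
  have h1 : ∫⁻ x, ∫⁻ x', ∫⁻ t, ∫⁻ t', K ((x,x'),(t,t')) ∂ν ∂ν ∂μ ∂μ = ∫⁻ p, ∫⁻ q, K (p, q) ∂(ν.prod ν) ∂(μ.prod μ) := by
    rw [lintegral_prod _ (hK.lintegral_prod_right').aemeasurable]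
    refine lintegral_congr fun x => lintegral_congr fun x' => ?_
    rw [lintegral_prod _ (by exact (hK.comp (measurable_const.prodMk measurable_id)).aemeasurable)]
  have h2 : ∫⁻ t, ∫⁻ t', ∫⁻ x, ∫⁻ x', K ((x,x'),(t,t')) ∂μ ∂μ ∂ν ∂ν = ∫⁻ q, ∫⁻ p, K (p, q) ∂(μ.prod μ) ∂(ν.prod ν) := by
    rw [lintegral_prod _ (hK.lintegral_prod_left').aemeasurable]
    refine lintegral_congr fun x => lintegral_congr fun x' => ?_
    rw [lintegral_prod _ (by exact (hK.comp (measurable_id.prodMk measurable_const)).aemeasurable)]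
  rw [h1, h2, lintegral_lintegral_swap]
  exact hK.aemeasurable

lemma dual_strichartz : ∃ C : ℝ, 0 < C ∧ ∀ G : ℝ × Space → ℝ≥0∞, Measurable G →
    ∫⁻ z : Space, (∫⁻ x : Space, G (‖z - x‖, x) * ENNReal.ofReal (‖z - x‖⁻¹))^2 ≤
      ENNReal.ofReal C * (∫⁻ t in Ioi (0:ℝ), (∫⁻ x, G (t, x) ^ (12/11:ℝ))^(11/9:ℝ))^(3/2:ℝ) := by
  obtain ⟨CY, hCY, hY⟩ := young3
  refine ⟨2 * Real.pi * CY * 12, by positivity, fun G hG => ?_⟩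
  obtain ⟨B, hBd⟩ : ∃ B : Space → Space → ℝ≥0∞, ∀ z x, B z x = G (‖z - x‖, x) * ENNReal.ofReal (‖z - x‖⁻¹) := ⟨_, fun _ _ => rfl⟩
  simp only [← hBd]
  have hB : Measurable (fun p : Space × Space => B p.1 p.2) := by
    have h1 : Measurable (fun p : Space × Space => (‖p.1 - p.2‖, p.2)) := by fun_prop
    have h2 : Measurable (fun p : Space × Space => ENNReal.ofReal (‖p.1 - p.2‖⁻¹)) := by fun_prop
    simp only [hBd]
    exact (hG.comp h1).mul h2
  have hB1 : ∀ z, Measurable (B z) := fun z => hB.comp (measurable_const.prodMk measurable_id)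
  have hB2 : ∀ x, Measurable (fun z => B z x) := fun x => hB.comp (measurable_id.prodMk measurable_const)
  have hGt : ∀ t, Measurable (fun x => G (t, x)) := fun t => hG.comp (measurable_const.prodMk measurable_id)
  have hGx : ∀ x, Measurable (fun t => G (t, x)) := fun x => hG.comp (measurable_id.prodMk measurable_const)
  let φ : ℝ → ℝ≥0∞ := (Ioi (0:ℝ)).indicator (fun t => (∫⁻ x, G (t, x) ^ (12/11:ℝ))^(11/12:ℝ))
  have hφ : Measurable φ := by
    refine Measurable.indicator ?_ measurableSet_Ioi
    refine Measurable.pow_const ?_ _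
    exact Measurable.lintegral_prod_right' (f := fun p : ℝ × Space => G p ^ (12/11:ℝ)) (hG.pow_const _)
  have step1 : ∫⁻ z, (∫⁻ x, B z x)^2 = ∫⁻ x, ∫⁻ x', ∫⁻ z, B z x * B z x' := by
    have : ∀ z, (∫⁻ x, B z x)^2 = ∫⁻ p : Space × Space, B z p.1 * B z p.2 ∂((volume : Measure Space).prod volume) := by
      intro z
      rw [lintegral_prod_mul (hB1 z).aemeasurable (hB1 z).aemeasurable, sq]
    rw [lintegral_congr this, lintegral_lintegral_swap, lintegral_prod]
    · apply Measurable.aemeasurable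
      refine Measurable.lintegral_prod_right' (f := fun q : (Space × Space) × Space => B q.2 q.1.1 * B q.2 q.1.2) ?_
      exact (hB.comp (g := fun p : Space × Space => B p.1 p.2) (by fun_prop : Measurable (fun q : (Space × Space) × Space => (q.2, q.1.1)))).mul
        (hB.comp (by fun_prop : Measurable (fun q : (Space × Space) × Space => (q.2, q.1.2))))
    · apply Measurable.aemeasurable
      exact (hB.comp (g := fun p : Space × Space => B p.1 p.2) (by fun_prop : Measurable (fun q : Space × (Space × Space) => (q.1, q.2.1)))).mul
        (hB.comp (by fun_prop : Measurable (fun q : Space × (Space × Space) => (q.1, q.2.2))))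
  let K : (Space × Space) × (ℝ × ℝ) → ℝ≥0∞ := fun q => G (q.2.1, q.1.1) * G (q.2.2, q.1.2) * kk |q.2.1 - q.2.2| (q.1.2 - q.1.1)
  have hK : Measurable K := by
    refine Measurable.mul (Measurable.mul (hG.comp (by fun_prop)) (hG.comp (by fun_prop))) ?_
    exact kk_meas.comp (by fun_prop : Measurable (fun q : (Space × Space) × (ℝ × ℝ) => (|q.2.1 - q.2.2|, q.1.2 - q.1.1)))
  have step2 : ∀ x x', x ≠ x' → ∫⁻ z, B z x * B z x' ≤ ENNReal.ofReal (2 * Real.pi) * ∫⁻ t in Ioi (0:ℝ), ∫⁻ t' in Ioi (0:ℝ), K ((x,x'),(t,t')) := by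
    intro x x' hx
    have hΨ : Measurable (fun p : ℝ × ℝ => G (p.1, x) * G (p.2, x')) :=
      ((hGx x).comp measurable_fst).mul ((hGx x').comp measurable_snd)
    have := bipolar (fun p => G (p.1, x) * G (p.2, x')) hΨ (x' - x) (sub_ne_zero.2 hx.symm)
    rw [← lintegral_add_right_eq_self _ x]
    calc _ = _ := ?_
      _ ≤ _ := this
      _ = _ := ?_
    · refine lintegral_congr fun z => ?_
      simp only [hBd]
      rw [add_sub_cancel_right, show z + x - x' = z - (x' - x) by abel]
      ring
    · rw [ENNReal.ofReal_mul (by positivity), mul_assoc]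
      congr 1
      rw [← lintegral_const_mul' _ _ ENNReal.ofReal_ne_top]
      refine lintegral_congr fun t => ?_
      rw [← lintegral_const_mul' _ _ ENNReal.ofReal_ne_top]
      refine lintegral_congr fun t' => ?_
      simp only [K, kk]
      split_ifs
      · ring
      · simp
  have step3 : ∀ t t', t ≠ t' → ∫⁻ x, ∫⁻ x', K ((x,x'),(t,t')) ≤ ENNReal.ofReal CY * ((∫⁻ x, G (t, x) ^ (12/11:ℝ))^(11/12:ℝ) * (∫⁻ x, G (t', x) ^ (12/11:ℝ))^(11/12:ℝ) * ww (t - t')) := by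
    intro t t' htt
    have := hY _ _ (hGt t) (hGt t') |t - t'| (abs_pos.2 (sub_ne_zero.2 htt))
    refine this.trans (le_of_eq ?_)
    rw [ENNReal.ofReal_mul hCY.le]
    simp only [ww]
    ring
  calc _ = ∫⁻ x, ∫⁻ x', ∫⁻ z, B z x * B z x' := step1
    _ ≤ ∫⁻ x, ∫⁻ x', ENNReal.ofReal (2 * Real.pi) * ∫⁻ t in Ioi (0:ℝ), ∫⁻ t' in Ioi (0:ℝ), K ((x,x'),(t,t')) := by
        refine lintegral_mono fun x => lintegral_mono_ae ?_
        have : ∀ᵐ x' : Space, x' ≠ x := by simp [ae_iff]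
        filter_upwards [this] with x' hx'
        exact step2 x x' hx'.symm
    _ = ENNReal.ofReal (2 * Real.pi) * ∫⁻ t in Ioi (0:ℝ), ∫⁻ t' in Ioi (0:ℝ), ∫⁻ x, ∫⁻ x', K ((x,x'),(t,t')) := by
        rw [← swap4 volume (volume.restrict (Ioi (0:ℝ))) K hK, ← lintegral_const_mul' _ _ ENNReal.ofReal_ne_top]
        refine lintegral_congr fun x => ?_
        rw [← lintegral_const_mul' _ _ ENNReal.ofReal_ne_top]
    _ ≤ ENNReal.ofReal (2 * Real.pi) * ∫⁻ t in Ioi (0:ℝ), ∫⁻ t' in Ioi (0:ℝ), ENNReal.ofReal CY * (φ t * φ t' * ww (t - t')) := by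
        refine mul_le_mul' le_rfl ?_
        refine setLIntegral_mono' measurableSet_Ioi fun t ht => lintegral_mono_ae ?_
        have : ∀ᵐ x' : ℝ, x' ≠ t := by simp [ae_iff]
        filter_upwards [ae_restrict_of_ae this, ae_restrict_mem measurableSet_Ioi] with t' h1 h2
        simp only [φ, indicator_of_mem ht, indicator_of_mem h2]
        exact step3 t t' h1.symm
    _ ≤ ENNReal.ofReal (2 * Real.pi) * ∫⁻ t, ∫⁻ t', ENNReal.ofReal CY * (φ t * φ t' * ww (t - t')) := by
        refine mul_le_mul' le_rfl ?_
        refine (setLIntegral_le_lintegral _ _).trans (lintegral_mono fun t => setLIntegral_le_lintegral _ _)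
    _ = ENNReal.ofReal (2 * Real.pi) * (ENNReal.ofReal CY * ∫⁻ t, ∫⁻ t', (φ t * φ t' * ww (t - t'))) := by
        congr 1
        rw [← lintegral_const_mul' _ _ ENNReal.ofReal_ne_top]
        refine lintegral_congr fun t => ?_
        rw [← lintegral_const_mul' _ _ ENNReal.ofReal_ne_top]
    _ ≤ ENNReal.ofReal (2 * Real.pi) * (ENNReal.ofReal CY * (12 * (∫⁻ t, φ t ^ (4/3:ℝ)) ^ (3/2:ℝ))) := by
        gcongr
        exact hls_diag φ hφ
    _ = _ := by
        have e12 : ENNReal.ofReal (2 * Real.pi * CY * 12) = ENNReal.ofReal (2 * Real.pi) * ENNReal.ofReal CY * 12 := by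
          rw [ENNReal.ofReal_mul (by positivity), ENNReal.ofReal_mul (by positivity), ENNReal.ofReal_ofNat]
        have : ∫⁻ t, φ t ^ (4/3:ℝ) = ∫⁻ t in Ioi (0:ℝ), (∫⁻ x, G (t, x) ^ (12/11:ℝ))^(11/9:ℝ) := by
          rw [← lintegral_indicator measurableSet_Ioi]
          refine lintegral_congr fun t => ?_
          by_cases h : t ∈ Ioi (0:ℝ)
          · simp only [φ, indicator_of_mem h]
            rw [← ENNReal.rpow_mul]; norm_num
          · simp only [φ, indicator_of_notMem h]
            rw [ENNReal.zero_rpow_of_pos (by norm_num)]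
        rw [this, e12]; ring
end PartThree

section PartFour
open scoped ENNReal

lemma scale_lintegral (l : ℝ) (hl : 0 < l) (F : ℝ → ℝ≥0∞) (hF : Measurable F) :
    ∫⁻ R in Ioi (0:ℝ), F R = ENNReal.ofReal l⁻¹ * ∫⁻ ρ in Ioi (0:ℝ), F (ρ / l) := by
  have h := Real.smul_map_volume_mul_left hl.ne'
  rw [← lintegral_indicator measurableSet_Ioi, ← lintegral_indicator measurableSet_Ioi]
  have hm : Measurable ((Ioi (0:ℝ)).indicator F) := hF.indicator measurableSet_Ioi
  have h2 : ∫⁻ R, (Ioi (0:ℝ)).indicator F R = ENNReal.ofReal |l⁻¹| * ∫⁻ ρ, (Ioi (0:ℝ)).indicator F (l⁻¹ * ρ) := by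
    have h := Real.smul_map_volume_mul_left (inv_ne_zero hl.ne')
    conv_lhs => rw [← h]
    rw [lintegral_smul_measure, lintegral_map hm (by fun_prop), smul_eq_mul]
  rw [h2, abs_of_pos (inv_pos.2 hl)]
  congr 1
  refine lintegral_congr fun ρ => ?_
  have : (l⁻¹ * ρ ∈ Ioi (0:ℝ)) ↔ ρ ∈ Ioi (0:ℝ) := by simp [hl]
  by_cases h : ρ ∈ Ioi (0:ℝ)
  · rw [indicator_of_mem h, indicator_of_mem (this.2 h)]; ring_nf
  · rw [indicator_of_notMem h, indicator_of_notMem (fun h' => h (this.1 h'))]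

/-- scaled pairing -/
lemma J_bound : ∃ C : ℝ, 0 < C ∧ ∀ (l : ℝ), 0 < l → ∀ G : ℝ × Space → ℝ≥0∞, Measurable G →
    ∀ h : Space → ℝ≥0∞, Measurable h →
    ∫⁻ R in Ioi (0:ℝ), ∫⁻ x, G (R, x) * ∫⁻ w, ENNReal.ofReal R * h (x + (l * R) • (w:Space)) ∂sph
      ≤ ENNReal.ofReal (C * l ^ (-(5/4):ℝ)) * ((∫⁻ x, h x ^ 2) ^ (1/2:ℝ) *
        (∫⁻ t in Ioi (0:ℝ), (∫⁻ x, G (t, x) ^ (12/11:ℝ))^(11/9:ℝ))^(3/4:ℝ)) := by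
  obtain ⟨C, hC, hD⟩ := dual_strichartz
  refine ⟨C ^ (1/2:ℝ), by positivity, fun l hl G hG h hh => ?_⟩
  obtain ⟨B, hBd⟩ : ∃ B : Space → Space → ℝ≥0∞, ∀ z x, B z x = G (‖z - x‖ / l, x) * ENNReal.ofReal (‖z - x‖⁻¹) := ⟨_, fun _ _ => rfl⟩
  have hin : Measurable (fun p : ℝ × Space => ∫⁻ w, ENNReal.ofReal p.1 * h (p.2 + (l * p.1) • (w:Space)) ∂sph) := by
    refine Measurable.lintegral_prod_right' (f := fun q : (ℝ × Space) × Metric.sphere (0:Space) 1 => ENNReal.ofReal q.1.1 * h (q.1.2 + (l * q.1.1) • (q.2:Space))) ?_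
    exact Measurable.mul (by fun_prop) (hh.comp (by fun_prop))
  have hGx : ∀ x, Measurable (fun t => G (t, x)) := fun x => hG.comp (measurable_id.prodMk measurable_const)
  have key : ∀ x, ∫⁻ R in Ioi (0:ℝ), G (R, x) * ∫⁻ w, ENNReal.ofReal R * h (x + (l * R) • (w:Space)) ∂sph
      = ENNReal.ofReal (l⁻¹ ^ 2) * ∫⁻ z, h z * (G (‖z - x‖ / l, x) * ENNReal.ofReal (‖z - x‖⁻¹)) := by
    intro x
    have hm : Measurable (fun z => h z * (G (‖z - x‖ / l, x) * ENNReal.ofReal (‖z - x‖⁻¹))) := by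
      refine hh.mul (Measurable.mul ((hGx x).comp (by fun_prop : Measurable (fun z : Space => ‖z - x‖ / l))) ?_)
      fun_prop
    rw [← lintegral_add_right_eq_self _ x, polar_lintegral _ (by exact hm.comp (measurable_id.add_const x)),
      scale_lintegral l hl _ (by exact (hGx x).mul (hin.comp (measurable_id.prodMk measurable_const))),
      sq, ENNReal.ofReal_mul (by positivity), mul_assoc]
    congr 1
    rw [← lintegral_const_mul' _ _ ENNReal.ofReal_ne_top]
    refine setLIntegral_congr_fun measurableSet_Ioi fun r hr => ?_
    have hr : 0 < r := hr
    have hw : ∀ w : Metric.sphere (0:Space) 1, ‖(r • (w:Space))‖ = r := by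
      intro w; rw [norm_smul, Real.norm_of_nonneg hr.le]; simp
    simp only [add_sub_cancel_right]
    rw [← lintegral_const_mul' _ _ ENNReal.ofReal_ne_top, ← lintegral_const_mul _ (by
      exact Measurable.mul (by fun_prop) (hh.comp (by fun_prop)))]
    refine lintegral_congr fun w => ?_
    rw [hw, mul_div_cancel₀ r hl.ne', add_comm x]
    have e1 : ENNReal.ofReal (r / l) = ENNReal.ofReal l⁻¹ * ENNReal.ofReal r := by
      rw [← ENNReal.ofReal_mul (by positivity)]; ring_nf
    have e2 : ENNReal.ofReal (r ^ 2) * ENNReal.ofReal (r⁻¹) = ENNReal.ofReal r := by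
      rw [← ENNReal.ofReal_mul (by positivity)]; congr 1; field_simp
    rw [e1, ← e2]; ring
  set S := (∫⁻ t in Ioi (0:ℝ), (∫⁻ x, G (t, x) ^ (12/11:ℝ))^(11/9:ℝ)) with hS
  have hGt : Measurable (fun p : ℝ × Space => G (p.1 / l, p.2)) := hG.comp (by fun_prop)
  have hD' := hD (fun p => G (p.1 / l, p.2)) hGt
  have hSl : ∫⁻ t in Ioi (0:ℝ), (∫⁻ x, G (t / l, x) ^ (12/11:ℝ))^(11/9:ℝ) = ENNReal.ofReal l * S := by
    rw [hS, scale_lintegral l hl (fun t => (∫⁻ x, G (t, x) ^ (12/11:ℝ))^(11/9:ℝ)), ← mul_assoc, ← ENNReal.ofReal_mul hl.le, mul_inv_cancel₀ hl.ne']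
    · simp
    · refine Measurable.pow_const ?_ _
      exact Measurable.lintegral_prod_right' (f := fun p : ℝ × Space => G p ^ (12/11:ℝ)) (hG.pow_const _)
  simp only [hSl, ← hBd] at hD' key
  have hB : Measurable (fun p : Space × Space => B p.1 p.2) := by
    have h1 : Measurable (fun p : Space × Space => (‖p.1 - p.2‖ / l, p.2)) := by fun_prop
    have h2 : Measurable (fun p : Space × Space => ENNReal.ofReal (‖p.1 - p.2‖⁻¹)) := by fun_prop
    simp only [hBd]
    exact (hG.comp h1).mul h2
  have hT : Measurable (fun z => ∫⁻ x, B z x) := hB.lintegral_prod_right'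
  calc _ = ∫⁻ x, ∫⁻ R in Ioi (0:ℝ), G (R, x) * ∫⁻ w, ENNReal.ofReal R * h (x + (l * R) • (w:Space)) ∂sph := by
        rw [lintegral_lintegral_swap]
        exact (hG.mul hin).aemeasurable
    _ = ENNReal.ofReal (l⁻¹ ^ 2) * ∫⁻ x, ∫⁻ z, h z * B z x := by
        rw [← lintegral_const_mul' _ _ ENNReal.ofReal_ne_top]
        exact lintegral_congr key
    _ = ENNReal.ofReal (l⁻¹ ^ 2) * ∫⁻ z, h z * ∫⁻ x, B z x := by
        rw [lintegral_lintegral_swap]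
        · congr 1
          refine lintegral_congr fun z => ?_
          rw [lintegral_const_mul]
          exact hB.comp (measurable_const.prodMk measurable_id)
        · have h3 : Measurable (fun p : Space × Space => (p.2, p.1)) := by fun_prop
          exact ((hh.comp measurable_snd).mul (hB.comp h3)).aemeasurable
    _ ≤ ENNReal.ofReal (l⁻¹ ^ 2) * ((∫⁻ z, h z ^ 2) ^ (1/2:ℝ) * (∫⁻ z, (∫⁻ x, B z x) ^ 2) ^ (1/2:ℝ)) := by
        refine mul_le_mul' le_rfl ?_
        have := ENNReal.lintegral_mul_le_Lp_mul_Lq volume Real.HolderConjugate.two_two hh.aemeasurable hT.aemeasurable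
        simpa using this
    _ ≤ ENNReal.ofReal (l⁻¹ ^ 2) * ((∫⁻ z, h z ^ 2) ^ (1/2:ℝ) * (ENNReal.ofReal C * (ENNReal.ofReal l * S) ^ (3/2:ℝ)) ^ (1/2:ℝ)) := by
        refine mul_le_mul' le_rfl (mul_le_mul' le_rfl (ENNReal.rpow_le_rpow hD' (by norm_num)))
    _ = _ := by
        rw [ENNReal.mul_rpow_of_nonneg _ _ (by norm_num), ← ENNReal.rpow_mul, ENNReal.mul_rpow_of_nonneg _ _ (by norm_num),
          ENNReal.ofReal_rpow_of_pos hC, ENNReal.ofReal_rpow_of_pos hl, show (3/2*(1/2):ℝ) = 3/4 by norm_num]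
        have : C ^ (1/2:ℝ) * l ^ (-(5/4):ℝ) = l⁻¹^2 * C ^ (1/2:ℝ) * l^(3/4:ℝ) := by
          have : l⁻¹^2 = l ^ (-2:ℝ) := by rw [Real.rpow_neg hl.le]; norm_num
          rw [this, mul_comm (l ^ (-2:ℝ)), mul_assoc, ← Real.rpow_add hl]; norm_num
        rw [this, ENNReal.ofReal_mul (by positivity), ENNReal.ofReal_mul (by positivity)]
        ring
end PartFour

section PartFive
open scoped ENNReal

lemma sph_lintegral_rot (A : Space ≃ₗᵢ[ℝ] Space) (φ : Space → ℝ≥0∞) (hφ : Measurable φ) :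
    ∫⁻ w, φ (A (w:Space)) ∂sph = ∫⁻ w, φ (w:Space) ∂sph := by
  have key : ∀ ψ : Space → ℝ≥0∞, Measurable ψ →
      ∫⁻ y : Space, (if ‖y‖ < 1 then ψ (‖y‖⁻¹ • y) else 0) = (∫⁻ r in Ioo (0:ℝ) 1, ENNReal.ofReal (r^2)) * ∫⁻ w, ψ (w:Space) ∂sph := by
    intro ψ hψ
    have hm : Measurable (fun y : Space => if ‖y‖ < 1 then ψ (‖y‖⁻¹ • y) else 0) :=
      Measurable.ite (measurableSet_lt measurable_norm measurable_const) (hψ.comp (by fun_prop)) measurable_const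
    rw [polar_lintegral _ hm, ← lintegral_mul_const _ (by fun_prop)]
    rw [← lintegral_indicator measurableSet_Ioi, ← lintegral_indicator measurableSet_Ioo]
    refine lintegral_congr fun r => ?_
    by_cases hr : 0 < r
    · have hw : ∀ w : Metric.sphere (0:Space) 1, ‖(r • (w:Space))‖ = r := by
        intro w; rw [norm_smul, Real.norm_of_nonneg hr.le]; simp
      rw [indicator_of_mem (mem_Ioi.2 hr)]
      simp only [hw, smul_smul, inv_mul_cancel₀ hr.ne', one_smul]
      by_cases h1 : r < 1
      · rw [indicator_of_mem (mem_Ioo.2 ⟨hr, h1⟩)]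
        simp only [h1, if_true]
        rw [lintegral_const_mul' _ _ ENNReal.ofReal_ne_top]
      · rw [indicator_of_notMem (fun h => h1 h.2)]
        simp [h1]
    · rw [indicator_of_notMem (s := Ioi (0:ℝ)) (fun h => hr h), indicator_of_notMem (s := Ioo (0:ℝ) 1) (fun h => hr h.1)]
  have h1 := key φ hφ
  have h2 := key (fun y => φ (A y)) (hφ.comp A.continuous.measurable)
  have h3 := A.measurePreserving.lintegral_comp (f := fun y : Space => if ‖y‖ < 1 then φ (‖y‖⁻¹ • y) else 0)
    (Measurable.ite (measurableSet_lt measurable_norm measurable_const) (hφ.comp (by fun_prop)) measurable_const)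
  simp only [LinearIsometryEquiv.norm_map, map_smul] at h2 h3
  rw [h3, h1] at h2
  have hc : (∫⁻ r in Ioo (0:ℝ) 1, ENNReal.ofReal (r^2)) = ENNReal.ofReal (1/3) := by
    rw [← ofReal_integral_eq_lintegral_ofReal, integral_Ioc_eq_integral_Ioo.symm, ← intervalIntegral.integral_of_le (by norm_num)]
    · norm_num
    · exact (((continuous_pow 2).integrableOn_Icc (a := (0:ℝ)) (b := 1))).mono_set Ioo_subset_Icc_self
    · filter_upwards with r using sq_nonneg r
  rw [hc] at h2
  exact ((ENNReal.mul_right_inj (by simp) ENNReal.ofReal_ne_top).1 h2).symm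

lemma sph_integral_rot (A : Space ≃ₗᵢ[ℝ] Space) (φ : Space → ℝ) (hφ : Continuous φ) :
    ∫ w, φ (A (w:Space)) ∂sph = ∫ w, φ (w:Space) ∂sph := by
  have hν : (sph.map (Subtype.val : Metric.sphere (0:Space) 1 → Space)).map A = sph.map (Subtype.val : Metric.sphere (0:Space) 1 → Space) := by
    ext s hs
    have hAm : Measurable A := A.continuous.measurable
    rw [← lintegral_indicator_one hs, ← lintegral_indicator_one hs, lintegral_map (measurable_one.indicator hs) hAm,
      lintegral_map (by exact (measurable_one.indicator hs).comp hAm) measurable_subtype_coe, lintegral_map (measurable_one.indicator hs) measurable_subtype_coe]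
    exact sph_lintegral_rot A _ (measurable_one.indicator hs)
  have h1 : ∫ y, φ y ∂((sph.map (Subtype.val : Metric.sphere (0:Space) 1 → Space)).map A) = ∫ w, φ (A (w:Space)) ∂sph := by
    rw [integral_map A.continuous.aemeasurable hφ.aestronglyMeasurable, integral_map measurable_subtype_coe.aemeasurable (by exact (hφ.comp A.continuous).aestronglyMeasurable)]
  rw [← h1, hν, integral_map measurable_subtype_coe.aemeasurable hφ.aestronglyMeasurable]

lemma int_prod_sph (a b : ℝ) (F : ℝ → Metric.sphere (0:Space) 1 → ℝ)
    (hF : ContinuousOn (Function.uncurry F) (uIcc a b ×ˢ univ)) :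
    Integrable (Function.uncurry F) ((volume.restrict (uIoc a b)).prod sph) := by
  have h := hF.integrableOn_compact (μ := (volume : Measure ℝ).prod sph) (isCompact_uIcc.prod isCompact_univ)
  have h2 : (volume.restrict (uIoc a b)).prod sph = ((volume : Measure ℝ).prod sph).restrict ((uIoc a b) ×ˢ univ) := by
    rw [← Measure.prod_restrict, Measure.restrict_univ]
  rw [h2]
  exact h.mono_set (prod_mono uIoc_subset_uIcc subset_rfl)

/-- rotation generator -/
def BB (i j : Fin 3) (y : Space) : Space := y i • EuclideanSpace.single j 1 - y j • EuclideanSpace.single i 1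

def RR (i j : Fin 3) (θ : ℝ) (y : Space) : Space :=
  y + (Real.cos θ - 1) • (y i • EuclideanSpace.single i 1 + y j • EuclideanSpace.single j 1) + Real.sin θ • BB i j y

lemma RR_coord (i j : Fin 3) (hij : i ≠ j) (θ : ℝ) (y : Space) :
    RR i j θ y i = Real.cos θ * y i - Real.sin θ * y j ∧ RR i j θ y j = Real.cos θ * y j + Real.sin θ * y i := by
  constructor <;> simp [RR, BB, hij, hij.symm] <;> ring

lemma RR_deriv (i j : Fin 3) (hij : i ≠ j) (θ : ℝ) (y : Space) :
    HasDerivAt (fun θ => RR i j θ y) (BB i j (RR i j θ y)) θ := by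
  have h1 : HasDerivAt (fun θ => RR i j θ y) ((-Real.sin θ) • (y i • EuclideanSpace.single i 1 + y j • EuclideanSpace.single j 1) + Real.cos θ • BB i j y) θ :=
    ((((Real.hasDerivAt_cos θ).sub_const 1).smul_const _).const_add y).add ((Real.hasDerivAt_sin θ).smul_const _)
  have h2 : BB i j (RR i j θ y) = ((-Real.sin θ) • (y i • EuclideanSpace.single i (1:ℝ) + y j • EuclideanSpace.single j (1:ℝ)) + Real.cos θ • BB i j y : Space) := by
    conv_lhs => rw [BB, (RR_coord i j hij θ y).1, (RR_coord i j hij θ y).2]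
    rw [BB]; module
  rw [h2]; exact h1

lemma RR_norm (i j : Fin 3) (hij : i ≠ j) (θ : ℝ) (y : Space) : ‖RR i j θ y‖ = ‖y‖ := by
  have hs := Real.sin_sq_add_cos_sq θ
  have hs' : Real.sin θ ^ 2 = 1 - Real.cos θ ^ 2 := by linarith
  rw [EuclideanSpace.norm_eq, EuclideanSpace.norm_eq]
  congr 1
  simp only [Real.norm_eq_abs, sq_abs]
  fin_cases i <;> fin_cases j <;> simp [Fin.sum_univ_three, RR, BB] at hij ⊢ <;> ring_nf <;> rw [hs'] <;> ring

def RRe (i j : Fin 3) (hij : i ≠ j) (θ : ℝ) : Space ≃ₗᵢ[ℝ] Space :=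
  LinearIsometry.toLinearIsometryEquiv
    { toFun := RR i j θ
      map_add' := fun a b => by simp only [RR, BB, PiLp.add_apply]; module
      map_smul' := fun a b => by simp only [RR, BB, PiLp.smul_apply, smul_eq_mul, RingHom.id_apply]; module
      norm_map' := RR_norm i j hij θ } rfl

lemma RRe_apply (i j : Fin 3) (hij : i ≠ j) (θ : ℝ) (y : Space) : RRe i j hij θ y = RR i j θ y := rfl

lemma RR_cont (i j : Fin 3) : Continuous (fun p : ℝ × Space => RR i j p.1 p.2) := by
  unfold RR BB; fun_prop

lemma BB_cont (i j : Fin 3) : Continuous (BB i j) := by unfold BB; fun_prop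

lemma rot_id (i j : Fin 3) (hij : i ≠ j) (φ : Space → ℝ) (hφ : ContDiff ℝ 1 φ) (x : Space) (r : ℝ) :
    ∫ w, fderiv ℝ φ (x + r • (w:Space)) (r • BB i j (w:Space)) ∂sph = 0 := by
  set D : Space → ℝ := fun y => fderiv ℝ φ (x + r • y) (r • BB i j y) with hD
  have hDc : Continuous D := by
    have h1 := hφ.continuous_fderiv (by norm_num)
    have h2 := BB_cont i j
    exact (h1.comp (by fun_prop)).clm_apply (by fun_prop)
  have hφc := hφ.continuous
  have hder : ∀ y θ, HasDerivAt (fun θ => φ (x + r • RR i j θ y)) (D (RR i j θ y)) θ := by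
    intro y θ
    have h1 := ((hφ.differentiable (by norm_num)) (x + r • RR i j θ y)).hasFDerivAt
    exact h1.comp_hasDerivAt θ (((RR_deriv i j hij θ y).const_smul r).const_add x)
  have hR1 : ∀ y, Continuous (fun θ => RR i j θ y) := fun y => (RR_cont i j).comp (Continuous.prodMk continuous_id continuous_const)
  have hftc : ∀ y, ∫ θ in (0:ℝ)..1, D (RR i j θ y) = φ (x + r • RR i j 1 y) - φ (x + r • y) := by
    intro y
    rw [intervalIntegral.integral_eq_sub_of_hasDerivAt (fun θ _ => hder y θ) ((hDc.comp (hR1 y)).intervalIntegrable _ _)]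
    simp [RR]
  have h0 : ∫ w, (∫ θ in (0:ℝ)..1, D (RR i j θ (w:Space))) ∂sph = 0 := by
    simp only [hftc]
    rw [integral_sub]
    · have := sph_integral_rot (RRe i j hij 1) (fun y => φ (x + r • y)) (by fun_prop)
      simp only [RRe_apply] at this
      rw [this, sub_self]
    · refine Continuous.integrable_of_hasCompactSupport ?_ (HasCompactSupport.of_compactSpace _)
      have := (RR_cont i j).comp (Continuous.prodMk (continuous_const (y := (1:ℝ))) (continuous_subtype_val (p := fun y : Space => y ∈ Metric.sphere (0:Space) 1)))
      exact hφc.comp (continuous_const.add (this.const_smul r))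
    · refine Continuous.integrable_of_hasCompactSupport ?_ (HasCompactSupport.of_compactSpace _)
      exact hφc.comp (by fun_prop)
  rw [← intervalIntegral_integral_swap (int_prod_sph 0 1 (fun θ w => D (RR i j θ (w:Space))) (Continuous.continuousOn (by
    exact hDc.comp ((RR_cont i j).comp (by fun_prop : Continuous (fun p : ℝ × Metric.sphere (0:Space) 1 => (p.1, (p.2:Space))))))))] at h0
  have h1 : ∀ θ, ∫ w, D (RR i j θ (w:Space)) ∂sph = ∫ w, D (w:Space) ∂sph := fun θ => sph_integral_rot (RRe i j hij θ) D hDc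
  simp [h1] at h0
  exact h0

def BBL (i j : Fin 3) : Space →L[ℝ] Space :=
  LinearMap.toContinuousLinearMap
    { toFun := BB i j
      map_add' := fun a b => by simp only [BB, PiLp.add_apply]; module
      map_smul' := fun a b => by simp only [BB, PiLp.smul_apply, smul_eq_mul, RingHom.id_apply]; module }

lemma BBL_apply (i j : Fin 3) (y : Space) : BBL i j y = BB i j y := rfl

lemma rot_id2 (i j : Fin 3) (hij : i ≠ j) (h : Space → ℝ) (hh : ContDiff ℝ 2 h) (x : Space) (r : ℝ) (hr : r ≠ 0) :
    ∫ w, (r * fderiv ℝ (fderiv ℝ h) (x + r • (w:Space)) (BB i j w) (BB i j w) + fderiv ℝ h (x + r • (w:Space)) (BB i j (BB i j w))) ∂sph = 0 := by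
  have hd : ContDiff ℝ 1 (fderiv ℝ h) := hh.fderiv_right (by norm_num)
  have hφ : ContDiff ℝ 1 (fun y => fderiv ℝ h y (BBL i j (y - x))) :=
    hd.clm_apply ((BBL i j).contDiff.comp (contDiff_id.sub contDiff_const))
  have := rot_id i j hij _ hφ x r
  have e : ∀ y v, fderiv ℝ (fun y => fderiv ℝ h y (BBL i j (y - x))) y v = fderiv ℝ (fderiv ℝ h) y v (BB i j (y - x)) + fderiv ℝ h y (BB i j v) := by
    intro y v
    have h1 := ((hd.differentiable (by norm_num)) y).hasFDerivAt
    have h2 : HasFDerivAt (fun y => BBL i j (y - x)) (BBL i j) y := by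
      have := (BBL i j).hasFDerivAt.comp y ((hasFDerivAt_id y).sub_const x)
      rw [ContinuousLinearMap.comp_id] at this; exact this
    have h3 := h1.clm_apply h2
    rw [h3.fderiv]
    simp [BBL_apply, add_comm]
  simp only [e, map_smul, add_sub_cancel_left] at this
  have h4 : ∀ w : Metric.sphere (0:Space) 1, BB i j (r • (w:Space)) = r • BB i j w := fun w => (BBL i j).map_smul r _
  have h5 : ∀ w : Metric.sphere (0:Space) 1, BB i j (r • BB i j w) = r • BB i j (BB i j w) := fun w => (BBL i j).map_smul r _
  simp only [h4, h5, map_smul, smul_eq_mul, FunLike.coe_smul, Pi.smul_apply] at this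
  have h6 := congrArg (fun a => r⁻¹ * a) this
  simp only [mul_zero] at h6
  rw [← integral_const_mul] at h6
  rw [← h6]
  refine integral_congr_ae (Filter.Eventually.of_forall fun w => ?_)
  simp only
  field_simp

lemma lap_eq (h : Space → ℝ) (hh : ContDiff ℝ 2 h) (y : Space) :
    lap h y = ∑ i : Fin 3, fderiv ℝ (fderiv ℝ h) y (EuclideanSpace.single i 1) (EuclideanSpace.single i 1) := by
  have hd : ContDiff ℝ 1 (fderiv ℝ h) := hh.fderiv_right (by norm_num)
  unfold lap
  refine Finset.sum_congr rfl fun i _ => ?_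
  rw [((hd.differentiable (by norm_num) y).hasFDerivAt.clm_apply (hasFDerivAt_const (EuclideanSpace.single i (1:ℝ)) y)).fderiv]
  simp

lemma sphere_id (h : Space → ℝ) (hh : ContDiff ℝ 2 h) (x : Space) (r : ℝ) (hr : r ≠ 0) :
    ∫ w, (r * fderiv ℝ (fderiv ℝ h) (x + r • (w:Space)) w w + 2 * fderiv ℝ h (x + r • (w:Space)) w
      - r * lap h (x + r • (w:Space))) ∂sph = 0 := by
  have hd : ContDiff ℝ 1 (fderiv ℝ h) := hh.fderiv_right (by norm_num)
  have hdd : Continuous (fderiv ℝ (fderiv ℝ h)) := hd.continuous_fderiv (by norm_num)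
  have hdc : Continuous (fderiv ℝ h) := hd.continuous
  have hI : ∀ i j, Integrable (fun w : Metric.sphere (0:Space) 1 => r * fderiv ℝ (fderiv ℝ h) (x + r • (w:Space)) (BB i j w) (BB i j w) + fderiv ℝ h (x + r • (w:Space)) (BB i j (BB i j w))) sph := by
    intro i j
    refine Continuous.integrable_of_hasCompactSupport ?_ (HasCompactSupport.of_compactSpace _)
    have := BB_cont i j
    fun_prop
  have h01 := rot_id2 0 1 (by decide) h hh x r hr
  have h02 := rot_id2 0 2 (by decide) h hh x r hr
  have h12 := rot_id2 1 2 (by decide) h hh x r hr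
  have hs : ∫ w, -((r * fderiv ℝ (fderiv ℝ h) (x + r • (w:Space)) (BB 0 1 w) (BB 0 1 w) + fderiv ℝ h (x + r • (w:Space)) (BB 0 1 (BB 0 1 w)))
     + (r * fderiv ℝ (fderiv ℝ h) (x + r • (w:Space)) (BB 0 2 w) (BB 0 2 w) + fderiv ℝ h (x + r • (w:Space)) (BB 0 2 (BB 0 2 w)))
     + (r * fderiv ℝ (fderiv ℝ h) (x + r • (w:Space)) (BB 1 2 w) (BB 1 2 w) + fderiv ℝ h (x + r • (w:Space)) (BB 1 2 (BB 1 2 w)))) ∂sph = 0 := by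
    rw [integral_neg, integral_add (by exact (hI 0 1).add (hI 0 2)) (hI 1 2), integral_add (hI 0 1) (hI 0 2), h01, h02, h12]; simp
  rw [← hs]
  refine integral_congr_ae (Filter.Eventually.of_forall fun w => ?_)
  simp only
  rw [lap_eq h hh]
  have hsym : ∀ a b, fderiv ℝ (fderiv ℝ h) (x + r • (w:Space)) a b = fderiv ℝ (fderiv ℝ h) (x + r • (w:Space)) b a := by
    intro a b
    exact (hh.contDiffAt.isSymmSndFDerivAt (by simp)) a b
  generalize fderiv ℝ (fderiv ℝ h) (x + r • (w:Space)) = H at *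
  generalize fderiv ℝ h (x + r • (w:Space)) = L at *
  obtain ⟨w, hw⟩ := w
  have hw1 : w 0 ^ 2 + w 1 ^ 2 + w 2 ^ 2 = 1 := by
    have : ‖w‖ = 1 := by simpa using hw
    rw [EuclideanSpace.norm_eq, Real.sqrt_eq_one] at this
    simpa [Fin.sum_univ_three] using this
  have hwe : w = w 0 • EuclideanSpace.single 0 (1:ℝ) + w 1 • EuclideanSpace.single 1 (1:ℝ) + w 2 • EuclideanSpace.single 2 (1:ℝ) := by
    ext i; fin_cases i <;> simp
  simp only [Fin.sum_univ_three]
  generalize he0 : (EuclideanSpace.single 0 (1:ℝ) : Space) = e0 at *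
  generalize he1 : (EuclideanSpace.single 1 (1:ℝ) : Space) = e1 at *
  generalize he2 : (EuclideanSpace.single 2 (1:ℝ) : Space) = e2 at *
  have b01 : BB 0 1 w = w 0 • e1 - w 1 • e0 := by rw [BB, he0, he1]
  have b02 : BB 0 2 w = w 0 • e2 - w 2 • e0 := by rw [BB, he0, he2]
  have b12 : BB 1 2 w = w 1 • e2 - w 2 • e1 := by rw [BB, he1, he2]
  have bb01 : BB 0 1 (BB 0 1 w) = -(w 0 • e0 + w 1 • e1) := by
    rw [b01]; simp only [BB, ← he0, ← he1]; simp; module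
  have bb02 : BB 0 2 (BB 0 2 w) = -(w 0 • e0 + w 2 • e2) := by
    rw [b02]; simp only [BB, ← he0, ← he2]; simp; module
  have bb12 : BB 1 2 (BB 1 2 w) = -(w 1 • e1 + w 2 • e2) := by
    rw [b12]; simp only [BB, ← he1, ← he2]; simp; module
  rw [bb01, bb02, bb12, b01, b02, b12]
  have hLw : L w = w 0 * L e0 + w 1 * L e1 + w 2 * L e2 := by
    conv_lhs => rw [hwe]
    simp
  have hHw : H w w = w 0 * (w 0 * H e0 e0 + w 1 * H e0 e1 + w 2 * H e0 e2) + w 1 * (w 0 * H e1 e0 + w 1 * H e1 e1 + w 2 * H e1 e2) + w 2 * (w 0 * H e2 e0 + w 1 * H e2 e1 + w 2 * H e2 e2) := by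
    conv_lhs => rw [hwe]
    simp
  rw [hLw, hHw]
  simp only [map_sub, map_add, map_neg, map_smul, FunLike.coe_sub, FunLike.coe_smul, Pi.sub_apply, Pi.smul_apply, smul_eq_mul]
  rw [hsym e1 e0, hsym e2 e0, hsym e2 e1]
  linear_combination (r * (H e0 e0 + H e1 e1 + H e2 e2)) * hw1
end PartFive

section PartSix
open scoped ENNReal

lemma clm_deriv {E : Type*} [NormedAddCommGroup E] [NormedSpace ℝ E] (D : E → E →L[ℝ] ℝ) (D2 : E →L[ℝ] E →L[ℝ] ℝ)
    (γ : ℝ → E) (γ' : E) (s : ℝ) (e : E) (hD : HasFDerivAt D D2 (γ s)) (hγ : HasDerivAt γ γ' s) :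
    HasDerivAt (fun s => D (γ s) e) (D2 γ' e) s := by
  have h2 := (hD.comp_hasDerivAt s hγ).clm_apply (hasDerivAt_const s e)
  simpa using h2

lemma bridge (u : ℝ → Space → ℝ) (α β : ℝ)
    (hv : ContDiffOn ℝ (⊤ : ℕ∞) (fun p : ℝ × Space => u p.1 p.2) (Ioo α β ×ˢ univ)) :
    ∃ (D : ℝ × Space → ℝ × Space →L[ℝ] ℝ) (D2 : ℝ × Space → ℝ × Space →L[ℝ] ℝ × Space →L[ℝ] ℝ),
      ContinuousOn D (Ioo α β ×ˢ univ) ∧ ContinuousOn D2 (Ioo α β ×ˢ univ) ∧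
      (∀ p ∈ Ioo α β ×ˢ (univ : Set Space), HasFDerivAt (fun p : ℝ × Space => u p.1 p.2) (D p) p) ∧
      (∀ p ∈ Ioo α β ×ˢ (univ : Set Space), HasFDerivAt D (D2 p) p) ∧
      (∀ p ∈ Ioo α β ×ˢ (univ : Set Space), ∀ a b, D2 p a b = D2 p b a) ∧
      (∀ s ∈ Ioo α β, ContDiff ℝ (⊤ : ℕ∞) (u s)) ∧
      (∀ s ∈ Ioo α β, ∀ y a, fderiv ℝ (u s) y a = D (s, y) (0, a)) ∧
      (∀ s ∈ Ioo α β, ∀ y a b, fderiv ℝ (fderiv ℝ (u s)) y a b = D2 (s, y) (0, a) (0, b)) ∧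
      (∀ s ∈ Ioo α β, ∀ y, dt1 u s y = D (s, y) (1, 0)) ∧
      (∀ s ∈ Ioo α β, ∀ y, dt2 u s y = D2 (s, y) (1, 0) (1, 0)) := by
  set v := (fun p : ℝ × Space => u p.1 p.2) with hvdef
  have hO : IsOpen (Ioo α β ×ˢ (univ : Set Space)) := isOpen_Ioo.prod isOpen_univ
  have hat : ∀ p ∈ Ioo α β ×ˢ (univ : Set Space), ContDiffAt ℝ (⊤ : ℕ∞) v p := fun p hp => hv.contDiffAt (hO.mem_nhds hp)
  have hd1 : ContDiffOn ℝ 2 (fderiv ℝ v) (Ioo α β ×ˢ univ) := hv.fderiv_of_isOpen hO (by norm_cast)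
  have hd2 : ContDiffOn ℝ 1 (fderiv ℝ (fderiv ℝ v)) (Ioo α β ×ˢ univ) := hd1.fderiv_of_isOpen hO (by norm_num)
  have hD : ∀ p ∈ Ioo α β ×ˢ (univ : Set Space), HasFDerivAt v (fderiv ℝ v p) p := fun p hp =>
    ((hat p hp).differentiableAt (by simp)).hasFDerivAt
  have hDD : ∀ p ∈ Ioo α β ×ˢ (univ : Set Space), HasFDerivAt (fderiv ℝ v) (fderiv ℝ (fderiv ℝ v) p) p := fun p hp =>
    ((hd1.contDiffAt (hO.mem_nhds hp)).differentiableAt (by norm_num)).hasFDerivAt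
  have hin : ∀ (s : ℝ) (y : Space), HasFDerivAt (fun y : Space => (s, y)) (ContinuousLinearMap.inr ℝ ℝ Space) y := fun s y =>
    hasFDerivAt_prodMk_right s y
  have hin1 : ∀ (s : ℝ) (y : Space), HasDerivAt (fun s : ℝ => (s, y)) ((1:ℝ), (0:Space)) s := fun s y =>
    (hasDerivAt_id s).prodMk (hasDerivAt_const s y)
  have hsm : ∀ s ∈ Ioo α β, ContDiff ℝ (⊤ : ℕ∞) (u s) := by
    intro s hs
    rw [contDiff_iff_contDiffAt]
    intro y
    have := (hat (s, y) ⟨hs, trivial⟩).comp y (contDiffAt_const.prodMk contDiffAt_id : ContDiffAt ℝ (⊤:ℕ∞) (fun y : Space => (s, y)) y)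
    exact this
  have hf1 : ∀ s ∈ Ioo α β, ∀ y, fderiv ℝ (u s) y = (fderiv ℝ v (s, y)).comp (ContinuousLinearMap.inr ℝ ℝ Space) := by
    intro s hs y
    exact ((hD (s, y) ⟨hs, trivial⟩).comp y (hin s y)).fderiv
  have ht1 : ∀ s ∈ Ioo α β, ∀ y, dt1 u s y = fderiv ℝ v (s, y) (1, 0) := by
    intro s hs y
    exact ((hD (s, y) ⟨hs, trivial⟩).comp_hasDerivAt s (hin1 s y)).deriv
  refine ⟨fderiv ℝ v, fderiv ℝ (fderiv ℝ v), hd1.continuousOn, hd2.continuousOn, hD, hDD, ?_, hsm, ?_, ?_, ht1, ?_⟩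
  · intro p hp a b
    exact ((hat p hp).isSymmSndFDerivAt (by simp; norm_cast)) a b
  · intro s hs y a
    rw [hf1 s hs]; simp
  · intro s hs y a b
    have h1 : fderiv ℝ (u s) = fun y => (fderiv ℝ v (s, y)).comp (ContinuousLinearMap.inr ℝ ℝ Space) := funext (hf1 s hs)
    have h2 := ((hDD (s, y) ⟨hs, trivial⟩).comp y (hin s y))
    have h3 := h2.clm_comp (hasFDerivAt_const (ContinuousLinearMap.inr ℝ ℝ Space) y)
    rw [h1]
    have h4 := h3.fderiv
    simp only [Function.comp_def] at h4
    rw [h4]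
    simp
  · intro s hs y
    have h2 := clm_deriv (fderiv ℝ v) _ (fun s => (s, y)) _ s ((1:ℝ), (0:Space)) (hDD (s, y) ⟨hs, trivial⟩) (hin1 s y)
    have h3 : (fun s => dt1 u s y) =ᶠ[nhds s] fun s => fderiv ℝ v (s, y) (1, 0) := by
      filter_upwards [isOpen_Ioo.mem_nhds hs] with s' hs' using ht1 s' hs' y
    unfold dt2
    rw [h3.deriv_eq]
    exact h2.deriv

set_option maxHeartbeats 400000 in
lemma kirchhoff_ineq (u q : ℝ → Space → ℝ) (α β : ℝ)
    (hv : ContDiffOn ℝ (⊤ : ℕ∞) (fun p : ℝ × Space => u p.1 p.2) (Ioo α β ×ˢ univ))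
    (heq : ∀ s ∈ Ioo α β, ∀ y, dt2 u s y - lap (u s) y = q s y)
    (h0 : (0:ℝ) ∈ Ioo α β) (t : ℝ) (ht : t ∈ Ioo α β) (ht0 : 0 < t) (x : Space) :
    sph univ * ‖u t x‖ₑ ≤ ∫⁻ w, ENNReal.ofReal t * ‖dt1 u 0 (x + t • (w:Space))‖ₑ ∂sph
      + ∫⁻ w, ENNReal.ofReal t * ‖fderiv ℝ (u 0) (x + t • (w:Space))‖ₑ ∂sph
      + ∫⁻ w, ‖u 0 (x + t • (w:Space))‖ₑ ∂sph
      + ∫⁻ s in Ioo 0 t, ∫⁻ w, ENNReal.ofReal (t - s) * ‖q s (x + (t - s) • (w:Space))‖ₑ ∂sph := by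
  obtain ⟨D, D2, hDc, hD2c, hD, hDD, hsym, hsm, hf1, hf2, ht1, ht2⟩ := bridge u α β hv
  have hIcc : uIcc 0 t ⊆ Ioo α β := by
    rw [uIcc_of_le ht0.le]; exact fun s hs => ⟨h0.1.trans_le hs.1, hs.2.trans_lt ht.2⟩
  have hwn : ∀ w : Metric.sphere (0:Space) 1, ‖(w:Space)‖ₑ = 1 := by
    intro w; rw [← ofReal_norm]; simp
  let γ : ℝ → Metric.sphere (0:Space) 1 → ℝ × Space := fun s w => (s, x + (t - s) • (w:Space))
  have hγm : ∀ s ∈ Ioo α β, ∀ w, γ s w ∈ Ioo α β ×ˢ (univ : Set Space) := fun s hs w => ⟨hs, trivial⟩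
  have hγc : Continuous (Function.uncurry γ) := by
    simp only [γ, Function.uncurry_def]; fun_prop
  let W : Metric.sphere (0:Space) 1 → ℝ → ℝ := fun w s => (t - s) * D (γ s w) (1, (w:Space)) + u s (x + (t - s) • (w:Space))
  let W' : ℝ → Metric.sphere (0:Space) 1 → ℝ := fun s w => (t - s) * D2 (γ s w) (1, -(w:Space)) (1, (w:Space)) - 2 * D (γ s w) (0, (w:Space))
  have hmaps : MapsTo (Function.uncurry γ) (uIcc 0 t ×ˢ univ) (Ioo α β ×ˢ (univ : Set Space)) := fun p hp => ⟨hIcc hp.1, trivial⟩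
  have hDγ : ContinuousOn (fun p : ℝ × Metric.sphere (0:Space) 1 => D (γ p.1 p.2)) (uIcc 0 t ×ˢ univ) := hDc.comp hγc.continuousOn hmaps
  have hD2γ : ContinuousOn (fun p : ℝ × Metric.sphere (0:Space) 1 => D2 (γ p.1 p.2)) (uIcc 0 t ×ˢ univ) := hD2c.comp hγc.continuousOn hmaps
  have hW'c : ContinuousOn (Function.uncurry W') (uIcc 0 t ×ˢ univ) := by
    simp only [W', Function.uncurry_def]
    refine ContinuousOn.sub (ContinuousOn.mul (by fun_prop) ((hD2γ.clm_apply ?_).clm_apply ?_)) (continuousOn_const.mul (hDγ.clm_apply ?_)) <;> fun_prop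
  have hWd : ∀ w, ∀ s ∈ Ioo α β, HasDerivAt (W w) (W' s w) s := by
    intro w s hs
    have hg : HasDerivAt (fun s => γ s w) (1, -(w:Space)) s := by
      have h1 : HasDerivAt (fun s : ℝ => (t - s) • (w:Space)) (-(w:Space)) s := by
        have := ((hasDerivAt_id s).const_sub t).smul_const (w:Space)
        rw [neg_one_smul] at this; exact this
      exact (hasDerivAt_id s).prodMk (h1.const_add x)
    have h2 := clm_deriv D _ (fun s => γ s w) _ s ((1:ℝ), (w:Space)) (hDD _ (hγm s hs w)) hg
    have h3 := ((hasDerivAt_id s).const_sub t).mul h2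
    have h4 := (hD _ (hγm s hs w)).comp_hasDerivAt s hg
    have h5 := h3.add h4
    have e : W' s w = (-1 * ((D (γ s w)) (1, (w:Space))) + (t - id s) * (((D2 (γ s w)) (1, -(w:Space))) (1, (w:Space)))) + (D (γ s w)) (1, -(w:Space)) := by
      have a1 : D (γ s w) (1, -(w:Space)) = D (γ s w) (1, 0) - D (γ s w) (0, (w:Space)) := by
        rw [← map_sub]; simp
      have a2 : D (γ s w) (1, (w:Space)) = D (γ s w) (1, 0) + D (γ s w) (0, (w:Space)) := by
        rw [← map_add]; simp
      simp only [W', id, a1, a2]; ring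
    rw [e]; exact h5
  have hftc : ∀ w, ∫ s in (0:ℝ)..t, W' s w = W w t - W w 0 := by
    intro w
    refine intervalIntegral.integral_eq_sub_of_hasDerivAt (fun s hs => hWd w s (hIcc hs)) ?_
    refine ContinuousOn.intervalIntegrable ?_
    exact hW'c.comp (f := fun s => (s, w)) (by fun_prop) (fun s hs => ⟨hs, trivial⟩)
  have hswap := intervalIntegral_integral_swap (int_prod_sph 0 t W' hW'c)
  have hcompint : ∀ φ : Metric.sphere (0:Space) 1 → ℝ, Continuous φ → Integrable φ sph := fun φ hφ =>
    hφ.integrable_of_hasCompactSupport (HasCompactSupport.of_compactSpace _)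
  have hDw : ∀ s ∈ uIcc 0 t, Continuous (fun w => D (γ s w)) := by
    intro s hs
    rw [← continuousOn_univ]
    exact hDγ.comp (f := fun w => (s, w)) (by fun_prop) (fun w _ => ⟨hs, trivial⟩)
  have hD2w : ∀ s ∈ uIcc 0 t, Continuous (fun w => D2 (γ s w)) := by
    intro s hs
    rw [← continuousOn_univ]
    exact hD2γ.comp (f := fun w => (s, w)) (by fun_prop) (fun w _ => ⟨hs, trivial⟩)
  have hsph : ∀ s ∈ uIcc 0 t, s ≠ t → ∫ w, W' s w ∂sph = ∫ w, (t - s) * q s (x + (t - s) • (w:Space)) ∂sph := by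
    intro s hs hst
    have hsO := hIcc hs
    have hus2 : ContDiff ℝ 2 (u s) := (hsm s hsO).of_le (by norm_cast)
    have h1 := sphere_id (u s) hus2 x (t - s) (sub_ne_zero.2 hst.symm)
    have i1 : Integrable (fun w => W' s w) sph := hcompint _ (by
      exact (continuous_const.mul (((hD2w s hs).clm_apply (by fun_prop)).clm_apply (by fun_prop))).sub
        (continuous_const.mul ((hDw s hs).clm_apply (by fun_prop))))
    have i2 : Integrable (fun w : Metric.sphere (0:Space) 1 => (t - s) * fderiv ℝ (fderiv ℝ (u s)) (x + (t - s) • (w:Space)) w w + 2 * fderiv ℝ (u s) (x + (t - s) • (w:Space)) w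
      - (t - s) * lap (u s) (x + (t - s) • (w:Space))) sph := by
      refine hcompint _ ?_
      have hd : ContDiff ℝ 1 (fderiv ℝ (u s)) := hus2.fderiv_right (by norm_num)
      have hdd : Continuous (fderiv ℝ (fderiv ℝ (u s))) := hd.continuous_fderiv (by norm_num)
      have hdc : Continuous (fderiv ℝ (u s)) := hd.continuous
      simp only [lap_eq (u s) hus2]
      fun_prop
    rw [← add_zero (∫ w, W' s w ∂sph), ← h1, ← integral_add i1 i2]
    refine integral_congr_ae (Filter.Eventually.of_forall fun w => ?_)
    simp only [← heq s hsO, W']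
    rw [hf2 s hsO, hf1 s hsO, ht2 s hsO]
    change (t - s) * D2 (γ s w) (1, -(w:Space)) (1, (w:Space)) - 2 * D (γ s w) (0, (w:Space)) + ((t - s) * D2 (γ s w) (0, (w:Space)) (0, (w:Space)) + 2 * D (γ s w) (0, (w:Space)) - _) = (t - s) * (D2 (γ s w) (1, 0) (1, 0) - _)
    have a1 : ((1:ℝ), -(w:Space)) = (1, 0) - (0, (w:Space)) := by simp
    have a2 : ((1:ℝ), (w:Space)) = (1, 0) + (0, (w:Space)) := by simp
    rw [a1, a2]
    simp only [map_sub, map_add, FunLike.coe_sub, Pi.sub_apply]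
    rw [hsym _ (hγm s hsO w) (0, (w:Space)) (1, 0)]
    ring
  have hmain : ∫ w, u t x ∂sph = ∫ w, W w 0 ∂sph + ∫ s in (0:ℝ)..t, ∫ w, (t - s) * q s (x + (t - s) • (w:Space)) ∂sph := by
    have e1 : ∫ s in (0:ℝ)..t, ∫ w, (t - s) * q s (x + (t - s) • (w:Space)) ∂sph = ∫ s in (0:ℝ)..t, ∫ w, W' s w ∂sph := by
      refine intervalIntegral.integral_congr_ae ?_
      have : ∀ᵐ s : ℝ, s ≠ t := by simp [ae_iff]
      filter_upwards [this] with s hs hs'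
      exact (hsph s (uIoc_subset_uIcc hs') hs).symm
    rw [e1, hswap]
    simp only [hftc]
    have i1 : Integrable (fun w => W w 0) sph := by
      refine hcompint _ ?_
      have c0 := (hsm 0 h0).continuous
      exact (continuous_const.mul ((hDw 0 (by simp)).clm_apply (by fun_prop))).add (c0.comp (by fun_prop))
    have e2 : ∀ w, W w t = u t x := by intro w; simp [W]
    simp only [e2]
    rw [integral_sub (integrable_const _) i1]; ring
  have e3 : sph univ * ‖u t x‖ₑ = ‖∫ w, u t x ∂sph‖ₑ := by
    rw [integral_const, enorm_smul]
    congr 1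
    rw [measureReal_def, Real.enorm_eq_ofReal ENNReal.toReal_nonneg, ENNReal.ofReal_toReal (measure_ne_top _ _)]
  rw [e3, hmain]
  refine (enorm_add_le _ _).trans (add_le_add ?_ ?_)
  · refine (enorm_integral_le_lintegral_enorm _).trans ?_
    have c0 := (hsm 0 h0).continuous
    have c1 : Continuous (fderiv ℝ (u 0)) := (hsm 0 h0).continuous_fderiv (by simp)
    have m1 : Measurable (fun w : Metric.sphere (0:Space) 1 => ENNReal.ofReal t * ‖fderiv ℝ (u 0) (x + t • (w:Space))‖ₑ) := by
      refine Continuous.measurable ?_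
      exact ENNReal.continuous_const_mul (ENNReal.ofReal_ne_top) |>.comp (by fun_prop)
    have m2 : Measurable (fun w : Metric.sphere (0:Space) 1 => ‖u 0 (x + t • (w:Space))‖ₑ) := by
      refine Continuous.measurable ?_
      fun_prop
    rw [← lintegral_add_right _ m1, ← lintegral_add_right _ m2]
    refine lintegral_mono fun w => ?_
    have : W w 0 = t * dt1 u 0 (x + t • (w:Space)) + t * fderiv ℝ (u 0) (x + t • (w:Space)) w + u 0 (x + t • (w:Space)) := by
      simp only [W, γ, sub_zero]
      rw [hf1 0 h0, ht1 0 h0, ← mul_add, ← map_add]; simp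
    rw [this]
    refine (enorm_add_le _ _).trans (add_le_add ((enorm_add_le _ _).trans (add_le_add ?_ ?_)) le_rfl)
    · rw [enorm_mul, Real.enorm_eq_ofReal ht0.le]
    · rw [enorm_mul, Real.enorm_eq_ofReal ht0.le]
      refine mul_le_mul' le_rfl ?_
      have := (fderiv ℝ (u 0) (x + t • (w:Space))).le_opENorm (w:Space)
      rwa [hwn, mul_one] at this
  · rw [intervalIntegral.integral_of_le ht0.le, integral_Ioc_eq_integral_Ioo]
    refine (enorm_integral_le_lintegral_enorm _).trans ?_
    refine setLIntegral_mono' measurableSet_Ioo fun s hs => ?_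
    refine (enorm_integral_le_lintegral_enorm _).trans (lintegral_mono fun w => ?_)
    rw [enorm_mul, Real.enorm_eq_ofReal (sub_nonneg.2 hs.2.le)]
end PartSix

section PartSeven
open scoped ENNReal

lemma swap3 {A B S : Type*} [MeasurableSpace A] [MeasurableSpace B] [MeasurableSpace S] (μ : Measure A) (ν : Measure B) (ρ : Measure S)
    [SFinite μ] [SFinite ν] [SFinite ρ] (Φ : S × (A × B) → ℝ≥0∞) (hΦ : Measurable Φ) :
    ∫⁻ t, ∫⁻ x, ∫⁻ s, Φ (s, (t, x)) ∂ρ ∂ν ∂μ = ∫⁻ s, ∫⁻ t, ∫⁻ x, Φ (s, (t, x)) ∂ν ∂μ ∂ρ := by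
  have h1 : ∫⁻ t, ∫⁻ x, ∫⁻ s, Φ (s, (t, x)) ∂ρ ∂ν ∂μ = ∫⁻ p, ∫⁻ s, Φ (s, p) ∂ρ ∂(μ.prod ν) := by
    rw [lintegral_prod _ (hΦ.lintegral_prod_left').aemeasurable]
  have h2 : ∫⁻ s, ∫⁻ t, ∫⁻ x, Φ (s, (t, x)) ∂ν ∂μ ∂ρ = ∫⁻ s, ∫⁻ p, Φ (s, p) ∂(μ.prod ν) ∂ρ := by
    refine lintegral_congr fun s => ?_
    rw [lintegral_prod _ (by exact (hΦ.comp measurable_prodMk_left).aemeasurable)]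
  rw [h1, h2, lintegral_lintegral_swap]
  exact (hΦ.comp measurable_swap).aemeasurable

lemma add4 {A B : Type*} [MeasurableSpace A] [MeasurableSpace B] (μ : Measure A) (ν : Measure B) [SFinite ν]
    (F1 F2 F3 F4 : A × B → ℝ≥0∞) (h1 : Measurable F1) (h2 : Measurable F2) (h3 : Measurable F3) :
    ∫⁻ t, ∫⁻ x, (F1 (t, x) + F2 (t, x) + F3 (t, x) + F4 (t, x)) ∂ν ∂μ = ∫⁻ t, ∫⁻ x, F1 (t, x) ∂ν ∂μ + ∫⁻ t, ∫⁻ x, F2 (t, x) ∂ν ∂μ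
      + ∫⁻ t, ∫⁻ x, F3 (t, x) ∂ν ∂μ + ∫⁻ t, ∫⁻ x, F4 (t, x) ∂ν ∂μ := by
  have a1 := h1.lintegral_prod_right' (ν := ν)
  have a2 := h2.lintegral_prod_right' (ν := ν)
  have a3 := h3.lintegral_prod_right' (ν := ν)
  rw [← lintegral_add_left a1, ← lintegral_add_left (by exact a1.add a2), ← lintegral_add_left (by exact (a1.add a2).add a3)]
  refine lintegral_congr fun t => ?_
  have p1 := h1.comp (measurable_prodMk_left (x := t))
  have p2 := h2.comp (measurable_prodMk_left (x := t))
  have p3 := h3.comp (measurable_prodMk_left (x := t))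
  rw [lintegral_add_left (by exact (p1.add p2).add p3), lintegral_add_left (by exact p1.add p2), lintegral_add_left (by exact p1)]

lemma lint_54 : ∫⁻ l in Ioi (1:ℝ), ENNReal.ofReal (l ^ (-(5/4):ℝ)) = ENNReal.ofReal 4 := by
  rw [← ofReal_integral_eq_lintegral_ofReal (integrableOn_Ioi_rpow_of_lt (by norm_num) (by norm_num))]
  · rw [integral_Ioi_rpow_of_lt (by norm_num) (by norm_num)]; norm_num
  · filter_upwards [ae_restrict_mem measurableSet_Ioi] with l hl
    exact Real.rpow_nonneg (by linarith [mem_Ioi.1 hl]) _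

lemma pairing : ∃ C : ℝ, 0 < C ∧ ∀ (V Q : ℝ × Space → ℝ≥0∞) (a b e : Space → ℝ≥0∞), Measurable V → Measurable Q →
    Measurable a → Measurable b → Measurable e →
    (∀ t, 0 < t → ∀ x, sph univ * V (t, x) ≤ ∫⁻ w, ENNReal.ofReal t * a (x + t • (w:Space)) ∂sph
      + ∫⁻ w, ENNReal.ofReal t * b (x + t • (w:Space)) ∂sph
      + ∫⁻ w, e (x + t • (w:Space)) ∂sph
      + ∫⁻ s in Ioo 0 t, ∫⁻ w, ENNReal.ofReal (t - s) * Q (s, x + (t - s) • (w:Space)) ∂sph) →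
    (∀ x (t : ℝ), 0 < t → ∀ w : Metric.sphere (0:Space) 1, e (x + t • (w:Space)) ≤ ∫⁻ l in Ioi (1:ℝ), ENNReal.ofReal t * b (x + (l * t) • (w:Space))) →
    (∀ t, ∫⁻ x, V (t, x) ^ (12:ℝ) ≠ ∞) →
    (∫⁻ t in Ioi (0:ℝ), (∫⁻ x, V (t, x) ^ (12:ℝ)) ^ (1/3:ℝ) ≠ ∞) →
    sph univ * (∫⁻ t in Ioi (0:ℝ), (∫⁻ x, V (t, x) ^ (12:ℝ)) ^ (1/3:ℝ)) ^ (1/4:ℝ) ≤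
      ENNReal.ofReal C * ((∫⁻ x, a x ^ 2) ^ (1/2:ℝ) + (∫⁻ x, b x ^ 2) ^ (1/2:ℝ) + ∫⁻ s in Ioi (0:ℝ), (∫⁻ x, Q (s, x) ^ 2) ^ (1/2:ℝ)) := by
  obtain ⟨C, hC, hJ⟩ := J_bound
  refine ⟨C * 5, by positivity, fun V Q a b e hV hQ ha hb he H1 H2 hm hX => ?_⟩
  set m : ℝ → ℝ≥0∞ := fun t => ∫⁻ x, V (t, x) ^ (12:ℝ) with hmdef
  have hmm : Measurable m := Measurable.lintegral_prod_right' (f := fun p : ℝ × Space => V p ^ (12:ℝ)) (hV.pow_const _)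
  set X := ∫⁻ t in Ioi (0:ℝ), m t ^ (1/3:ℝ) with hXdef
  obtain ⟨G, hGd⟩ : ∃ G : ℝ × Space → ℝ≥0∞, ∀ p, G p = V p ^ (11:ℝ) * m p.1 ^ (-(2/3):ℝ) := ⟨_, fun _ => rfl⟩
  have hG : Measurable G := by
    have : G = fun p => V p ^ (11:ℝ) * m p.1 ^ (-(2/3):ℝ) := funext hGd
    rw [this]
    exact (hV.pow_const _).mul ((hmm.comp measurable_fst).pow_const _)
  have hVt : ∀ t, Measurable (fun x => V (t, x)) := fun t => hV.comp measurable_prodMk_left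
  have hGt : ∀ t, Measurable (fun x => G (t, x)) := fun t => hG.comp measurable_prodMk_left
  have hmpow : ∀ t, ∀ p q : ℝ, p = 1 + q → 0 < p → m t * m t ^ q = m t ^ p := by
    intro t p q hpq hp
    rcases eq_or_ne (m t) 0 with h | h
    · rw [h, zero_mul, ENNReal.zero_rpow_of_pos hp]
    · rw [hpq, ENNReal.rpow_add _ _ h (hm t), ENNReal.rpow_one]
  have hVG : ∀ t, ∫⁻ x, V (t, x) * G (t, x) = m t ^ (1/3:ℝ) := by
    intro t
    rw [← hmpow t (1/3) (-(2/3)) (by norm_num) (by norm_num), hmdef, ← lintegral_mul_const _ ((hVt t).pow_const _)]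
    refine lintegral_congr fun x => ?_
    rw [hGd, ← mul_assoc]
    congr 1
    have := ENNReal.rpow_add_of_nonneg (x := V (t, x)) 1 11 (by norm_num) (by norm_num)
    rw [ENNReal.rpow_one] at this
    rw [← this]; norm_num
  have hG1 : ∀ t, ∫⁻ x, G (t, x) ^ (12/11:ℝ) = m t ^ (3/11:ℝ) := by
    intro t
    rw [← hmpow t (3/11) (-(8/11)) (by norm_num) (by norm_num)]
    change _ = (∫⁻ x, V (t, x) ^ (12:ℝ)) * m t ^ (-(8/11):ℝ)
    rw [← lintegral_mul_const _ ((hVt t).pow_const _)]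
    refine lintegral_congr fun x => ?_
    rw [hGd, ENNReal.mul_rpow_of_nonneg _ _ (by norm_num), ← ENNReal.rpow_mul, ← ENNReal.rpow_mul]
    norm_num
  have hG2 : ∀ t, (∫⁻ x, G (t, x) ^ (12/11:ℝ)) ^ (11/9:ℝ) = m t ^ (1/3:ℝ) := by
    intro t; rw [hG1, ← ENNReal.rpow_mul]; norm_num
  have hN : (∫⁻ t in Ioi (0:ℝ), (∫⁻ x, G (t, x) ^ (12/11:ℝ)) ^ (11/9:ℝ)) ^ (3/4:ℝ) = X ^ (3/4:ℝ) := by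
    simp only [hG2]; rfl
  have hinb : ∀ h : Space → ℝ≥0∞, Measurable h → ∀ l : ℝ, Measurable (fun p : ℝ × Space => ∫⁻ w, ENNReal.ofReal p.1 * h (p.2 + (l * p.1) • (w:Space)) ∂sph) := by
    intro h hh l
    refine Measurable.lintegral_prod_right' (f := fun q : (ℝ × Space) × Metric.sphere (0:Space) 1 => ENNReal.ofReal q.1.1 * h (q.1.2 + (l * q.1.1) • (q.2:Space))) ?_
    exact Measurable.mul (by fun_prop) (hh.comp (by fun_prop))
  -- the four terms
  have Tab : ∀ h : Space → ℝ≥0∞, Measurable h → ∫⁻ t in Ioi (0:ℝ), ∫⁻ x, G (t, x) * ∫⁻ w, ENNReal.ofReal t * h (x + t • (w:Space)) ∂sph ≤ ENNReal.ofReal C * ((∫⁻ x, h x ^ 2) ^ (1/2:ℝ) * X ^ (3/4:ℝ)) := by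
    intro h hh
    have := hJ 1 one_pos G hG h hh
    simpa only [one_mul, Real.one_rpow, mul_one, hN] using this
  have Te : ∫⁻ t in Ioi (0:ℝ), ∫⁻ x, G (t, x) * ∫⁻ w, e (x + t • (w:Space)) ∂sph ≤ ENNReal.ofReal C * (4 * ((∫⁻ x, b x ^ 2) ^ (1/2:ℝ) * X ^ (3/4:ℝ))) := by
    obtain ⟨Φ, hΦd⟩ : ∃ Φ : ℝ × (ℝ × Space) → ℝ≥0∞, ∀ p, Φ p = G p.2 * ∫⁻ w, ENNReal.ofReal p.2.1 * b (p.2.2 + (p.1 * p.2.1) • (w:Space)) ∂sph := ⟨_, fun _ => rfl⟩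
    have hb2 : Measurable (fun q : (ℝ × ℝ × Space) × Metric.sphere (0:Space) 1 => ENNReal.ofReal q.1.2.1 * b (q.1.2.2 + (q.1.1 * q.1.2.1) • (q.2:Space))) :=
      Measurable.mul (by fun_prop) (hb.comp (by fun_prop))
    have hΦ : Measurable Φ := by
      have : Φ = fun p => G p.2 * ∫⁻ w, ENNReal.ofReal p.2.1 * b (p.2.2 + (p.1 * p.2.1) • (w:Space)) ∂sph := funext hΦd
      rw [this]
      exact (hG.comp measurable_snd).mul hb2.lintegral_prod_right'
    calc _ ≤ ∫⁻ t in Ioi (0:ℝ), ∫⁻ x, ∫⁻ l in Ioi (1:ℝ), Φ (l, (t, x)) := by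
          refine setLIntegral_mono' measurableSet_Ioi fun t ht => lintegral_mono fun x => ?_
          simp only [hΦd]
          rw [lintegral_const_mul]
          · refine mul_le_mul' le_rfl ?_
            refine (lintegral_mono fun w => H2 x t ht w).trans (le_of_eq ?_)
            rw [lintegral_lintegral_swap]
            refine Measurable.aemeasurable ?_
            exact hb2.comp (by fun_prop : Measurable (fun q : Metric.sphere (0:Space) 1 × ℝ => ((q.2, t, x), q.1)))
          · exact hb2.lintegral_prod_right'.comp (by fun_prop : Measurable (fun l : ℝ => (l, t, x)))
      _ = ∫⁻ l in Ioi (1:ℝ), ∫⁻ t in Ioi (0:ℝ), ∫⁻ x, Φ (l, (t, x)) := swap3 _ _ _ Φ hΦ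
      _ ≤ ∫⁻ l in Ioi (1:ℝ), ENNReal.ofReal (l ^ (-(5/4):ℝ)) * (ENNReal.ofReal C * ((∫⁻ x, b x ^ 2) ^ (1/2:ℝ) * X ^ (3/4:ℝ))) := by
          refine setLIntegral_mono' measurableSet_Ioi fun l hl => ?_
          have := hJ l (lt_trans one_pos hl) G hG b hb
          simp only [hΦd]
          rw [hN, ENNReal.ofReal_mul hC.le] at this
          refine this.trans (le_of_eq (by ring))
      _ = _ := by
          rw [lintegral_mul_const _ (by fun_prop), lint_54]
          rw [ENNReal.ofReal_ofNat]; ring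
  have TQ : ∫⁻ t in Ioi (0:ℝ), ∫⁻ x, G (t, x) * (∫⁻ s in Ioo 0 t, ∫⁻ w, ENNReal.ofReal (t - s) * Q (s, x + (t - s) • (w:Space)) ∂sph) ≤
      ENNReal.ofReal C * ((∫⁻ s in Ioi (0:ℝ), (∫⁻ x, Q (s, x) ^ 2) ^ (1/2:ℝ)) * X ^ (3/4:ℝ)) := by
    obtain ⟨Φ, hΦd⟩ : ∃ Φ : ℝ × (ℝ × Space) → ℝ≥0∞, ∀ p, Φ p = G p.2 * ∫⁻ w, ENNReal.ofReal (p.2.1 - p.1) * Q (p.1, p.2.2 + (p.2.1 - p.1) • (w:Space)) ∂sph := ⟨_, fun _ => rfl⟩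
    have hb2 : Measurable (fun q : (ℝ × ℝ × Space) × Metric.sphere (0:Space) 1 => ENNReal.ofReal (q.1.2.1 - q.1.1) * Q (q.1.1, q.1.2.2 + (q.1.2.1 - q.1.1) • (q.2:Space))) :=
      Measurable.mul (by fun_prop) (hQ.comp (by fun_prop))
    have hΦ : Measurable Φ := by
      have : Φ = fun p => G p.2 * ∫⁻ w, ENNReal.ofReal (p.2.1 - p.1) * Q (p.1, p.2.2 + (p.2.1 - p.1) • (w:Space)) ∂sph := funext hΦd
      rw [this]
      exact (hG.comp measurable_snd).mul hb2.lintegral_prod_right'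
    calc _ ≤ ∫⁻ t in Ioi (0:ℝ), ∫⁻ x, ∫⁻ s in Ioi (0:ℝ), Φ (s, (t, x)) := by
          refine setLIntegral_mono' measurableSet_Ioi fun t ht => lintegral_mono fun x => ?_
          simp only [hΦd]
          rw [lintegral_const_mul]
          · exact mul_le_mul' le_rfl (lintegral_mono_set Ioo_subset_Ioi_self)
          · exact hb2.lintegral_prod_right'.comp (by fun_prop : Measurable (fun l : ℝ => (l, t, x)))
      _ = ∫⁻ s in Ioi (0:ℝ), ∫⁻ t in Ioi (0:ℝ), ∫⁻ x, Φ (s, (t, x)) := swap3 _ _ _ Φ hΦ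
      _ ≤ ∫⁻ s in Ioi (0:ℝ), (∫⁻ x, Q (s, x) ^ 2) ^ (1/2:ℝ) * (ENNReal.ofReal C * X ^ (3/4:ℝ)) := by
          refine setLIntegral_mono' measurableSet_Ioi fun s hs => ?_
          have hz : ∀ R ≤ (0:ℝ), ∫⁻ x, Φ (s, (R + s, x)) = 0 := by
            intro R hR
            simp [hΦd, ENNReal.ofReal_of_nonpos hR]
          have hGs : Measurable (fun p : ℝ × Space => G (p.1 + s, p.2)) := hG.comp (by fun_prop)
          have h1 := hJ 1 one_pos (fun p => G (p.1 + s, p.2)) hGs (fun x => Q (s, x)) (hQ.comp measurable_prodMk_left)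
          have h2 : ∫⁻ t in Ioi (0:ℝ), (∫⁻ x, G (t + s, x) ^ (12/11:ℝ)) ^ (11/9:ℝ) ≤ X := by
            simp only [hG2]
            rw [hXdef, ← lintegral_indicator measurableSet_Ioi, ← lintegral_indicator measurableSet_Ioi]
            rw [← lintegral_add_right_eq_self (indicator (Ioi (0:ℝ)) (fun t => m t ^ (1/3:ℝ))) s]
            refine lintegral_mono fun t => ?_
            by_cases ht : t ∈ Ioi (0:ℝ)
            · rw [indicator_of_mem ht, indicator_of_mem]
              exact add_pos (mem_Ioi.1 ht) (mem_Ioi.1 hs)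
            · rw [indicator_of_notMem ht]; exact bot_le
          calc _ ≤ ∫⁻ t, ∫⁻ x, Φ (s, (t, x)) := setLIntegral_le_lintegral _ _
            _ = ∫⁻ R, ∫⁻ x, Φ (s, (R + s, x)) := (lintegral_add_right_eq_self (fun t => ∫⁻ x, Φ (s, (t, x))) s).symm
            _ = ∫⁻ R in Ioi (0:ℝ), ∫⁻ x, Φ (s, (R + s, x)) := by
                rw [← lintegral_indicator measurableSet_Ioi]
                refine lintegral_congr fun R => ?_
                by_cases hR : R ∈ Ioi (0:ℝ)
                · rw [indicator_of_mem hR]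
                · rw [indicator_of_notMem hR, hz R (not_lt.1 hR)]
            _ ≤ ENNReal.ofReal C * ((∫⁻ x, Q (s, x) ^ 2) ^ (1/2:ℝ) * (∫⁻ t in Ioi (0:ℝ), (∫⁻ x, G (t + s, x) ^ (12/11:ℝ)) ^ (11/9:ℝ)) ^ (3/4:ℝ)) := by
                simp only [hΦd, add_sub_cancel_right]
                simpa only [one_mul, Real.one_rpow, mul_one] using h1
            _ ≤ ENNReal.ofReal C * ((∫⁻ x, Q (s, x) ^ 2) ^ (1/2:ℝ) * X ^ (3/4:ℝ)) :=
                mul_le_mul' le_rfl (mul_le_mul' le_rfl (ENNReal.rpow_le_rpow h2 (by norm_num)))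
            _ = _ := by ring
      _ = _ := by
          rw [lintegral_mul_const]
          · ring
          · refine Measurable.pow_const ?_ _
            exact Measurable.lintegral_prod_right' (f := fun p : ℝ × Space => Q p ^ 2) (hQ.pow_const _)
  set A := (∫⁻ x, a x ^ 2) ^ (1/2:ℝ)
  set B := (∫⁻ x, b x ^ 2) ^ (1/2:ℝ)
  set q := ∫⁻ s in Ioi (0:ℝ), (∫⁻ x, Q (s, x) ^ 2) ^ (1/2:ℝ)
  have hfin : sph univ * X ≤ ENNReal.ofReal (C * 5) * (A + B + q) * X ^ (3/4:ℝ) := by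
    have hma := hinb a ha 1
    have hmb := hinb b hb 1
    simp only [one_mul] at hma hmb
    have hme : Measurable (fun p : ℝ × Space => ∫⁻ w, e (p.2 + p.1 • (w:Space)) ∂sph) :=
      Measurable.lintegral_prod_right' (f := fun q : (ℝ × Space) × Metric.sphere (0:Space) 1 => e (q.1.2 + q.1.1 • (q.2:Space))) (he.comp (by fun_prop))
    have hk : ∀ {F : ℝ × Space → ℝ≥0∞}, Measurable F → Measurable (fun t => ∫⁻ x, F (t, x)) := fun hF => hF.lintegral_prod_right'
    calc sph univ * X = ∫⁻ t in Ioi (0:ℝ), ∫⁻ x, sph univ * (V (t, x) * G (t, x)) := by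
          rw [hXdef, ← lintegral_const_mul' _ _ (measure_ne_top _ _)]
          refine lintegral_congr fun t => ?_
          rw [← hVG, ← lintegral_const_mul' _ _ (measure_ne_top _ _)]
      _ ≤ ∫⁻ t in Ioi (0:ℝ), ∫⁻ x, (G (t, x) * (∫⁻ w, ENNReal.ofReal t * a (x + t • (w:Space)) ∂sph) + G (t, x) * (∫⁻ w, ENNReal.ofReal t * b (x + t • (w:Space)) ∂sph) + G (t, x) * (∫⁻ w, e (x + t • (w:Space)) ∂sph) + G (t, x) * (∫⁻ s in Ioo 0 t, ∫⁻ w, ENNReal.ofReal (t - s) * Q (s, x + (t - s) • (w:Space)) ∂sph)) := by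
          refine setLIntegral_mono' measurableSet_Ioi fun t ht => lintegral_mono fun x => ?_
          have := mul_le_mul' (le_refl (G (t, x))) (H1 t ht x)
          rw [mul_add, mul_add, mul_add] at this
          refine le_trans (le_of_eq (by ring)) this
      _ = (∫⁻ t in Ioi (0:ℝ), ∫⁻ x, G (t, x) * (∫⁻ w, ENNReal.ofReal t * a (x + t • (w:Space)) ∂sph)) + (∫⁻ t in Ioi (0:ℝ), ∫⁻ x, G (t, x) * (∫⁻ w, ENNReal.ofReal t * b (x + t • (w:Space)) ∂sph)) + (∫⁻ t in Ioi (0:ℝ), ∫⁻ x, G (t, x) * (∫⁻ w, e (x + t • (w:Space)) ∂sph)) + (∫⁻ t in Ioi (0:ℝ), ∫⁻ x, G (t, x) * (∫⁻ s in Ioo 0 t, ∫⁻ w, ENNReal.ofReal (t - s) * Q (s, x + (t - s) • (w:Space)) ∂sph)) := by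
          exact add4 _ _ (fun p => G p * _) (fun p => G p * _) (fun p => G p * _) (fun p => G p * (∫⁻ s in Ioo 0 p.1, ∫⁻ w, ENNReal.ofReal (p.1 - s) * Q (s, p.2 + (p.1 - s) • (w:Space)) ∂sph)) (hG.mul hma) (hG.mul hmb) (hG.mul hme)
      _ ≤ ENNReal.ofReal C * (A * X ^ (3/4:ℝ)) + ENNReal.ofReal C * (B * X ^ (3/4:ℝ)) + ENNReal.ofReal C * (4 * (B * X ^ (3/4:ℝ))) + ENNReal.ofReal C * (q * X ^ (3/4:ℝ)) :=
          add_le_add (add_le_add (add_le_add (Tab a ha) (Tab b hb)) Te) TQ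
      _ = ENNReal.ofReal C * (A + 5 * B + q) * X ^ (3/4:ℝ) := by ring
      _ ≤ _ := by
          refine mul_le_mul' ?_ le_rfl
          rw [ENNReal.ofReal_mul hC.le, ENNReal.ofReal_ofNat, mul_assoc]
          refine mul_le_mul' le_rfl ?_
          rw [mul_add, mul_add]
          have h15 : (1:ℝ≥0∞) ≤ 5 := by norm_num
          exact add_le_add (add_le_add (le_mul_of_one_le_left' h15) le_rfl) (le_mul_of_one_le_left' h15)
  rcases eq_or_ne X 0 with h0 | h0
  · rw [h0, ENNReal.zero_rpow_of_pos (by norm_num), mul_zero]; exact bot_le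
  · have e1 : sph univ * X = sph univ * X ^ (1/4:ℝ) * X ^ (3/4:ℝ) := by
      rw [mul_assoc, ← ENNReal.rpow_add _ _ h0 hX]; norm_num
    rw [e1] at hfin
    have hne0 : X ^ (3/4:ℝ) ≠ 0 := by simp [h0, hX]
    have hnet : X ^ (3/4:ℝ) ≠ ∞ := by simp [h0, hX]
    exact (ENNReal.mul_le_mul_iff_left hne0 hnet).1 hfin
end PartSeven

section PartEight
open scoped ENNReal

lemma ray_ftc (h : Space → ℝ) (hh : ContDiff ℝ 1 h) (hs : HasCompactSupport h) (x v : Space) (hv : v ≠ 0) (r : ℝ) :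
    ‖h (x + r • v)‖ₑ ≤ ∫⁻ l in Ioi r, ‖fderiv ℝ h (x + l • v)‖ₑ * ‖v‖ₑ := by
  have hc : Topology.IsClosedEmbedding (fun l : ℝ => x + (-l) • v) := by
    have h1 : Topology.IsClosedEmbedding (fun l : ℝ => l • v) := isClosedEmbedding_smul_left hv
    exact ((Homeomorph.addLeft x).isClosedEmbedding.comp h1).comp (Homeomorph.neg ℝ).isClosedEmbedding
  have hd : ContDiff ℝ 1 (fun l : ℝ => h (x + (-l) • v)) := hh.comp (by fun_prop)
  have := HasCompactSupport.enorm_le_lintegral_Ici_deriv hd (hs.comp_isClosedEmbedding hc) (-r)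
  simp only [neg_neg] at this
  refine this.trans ?_
  have h2 : ∀ l : ℝ, ‖deriv (fun l : ℝ => h (x + (-l) • v)) l‖ₑ ≤ ‖fderiv ℝ h (x + (-l) • v)‖ₑ * ‖v‖ₑ := by
    intro l
    have h3 : HasDerivAt (fun l : ℝ => x + (-l) • v) (-v) l := by
      have := ((hasDerivAt_id l).neg.smul_const v).const_add x
      simpa using this
    have h4 := ((hh.differentiable one_ne_zero) (x + (-l) • v)).hasFDerivAt.comp_hasDerivAt l h3
    have h5 : deriv (fun l : ℝ => h (x + (-l) • v)) l = fderiv ℝ h (x + (-l) • v) (-v) := h4.deriv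
    rw [h5, ← enorm_neg v]
    exact ContinuousLinearMap.le_opENorm _ _
  refine (lintegral_mono fun l => h2 l).trans (le_of_eq ?_)
  rw [setLIntegral_congr Iio_ae_eq_Iic.symm]
  rw [← lintegral_indicator measurableSet_Iio, ← lintegral_indicator measurableSet_Ioi, ← lintegral_neg_eq_self (indicator (Ioi r) _)]
  refine lintegral_congr fun l => ?_
  by_cases hl : l < -r
  · rw [indicator_of_mem (show l ∈ Iio (-r) from hl), indicator_of_mem (show -l ∈ Ioi r by simp only [mem_Ioi]; linarith)]
  · rw [indicator_of_notMem (show l ∉ Iio (-r) from hl), indicator_of_notMem (show -l ∉ Ioi r by simp only [mem_Ioi]; linarith)]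

lemma H2_inst (h : Space → ℝ) (hh : ContDiff ℝ 1 h) (hs : HasCompactSupport h) (x : Space) (t : ℝ) (ht : 0 < t) (w : Metric.sphere (0:Space) 1) :
    ‖h (x + t • (w:Space))‖ₑ ≤ ∫⁻ l in Ioi (1:ℝ), ENNReal.ofReal t * ‖fderiv ℝ h (x + (l * t) • (w:Space))‖ₑ := by
  have hw : ‖(w:Space)‖ = 1 := by simpa using w.2
  have h0 : t • (w:Space) ≠ 0 := by
    rw [← norm_ne_zero_iff, norm_smul, hw]; simp [ht.ne']
  have := ray_ftc h hh hs x (t • (w:Space)) h0 1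
  rw [one_smul] at this
  refine this.trans (le_of_eq (lintegral_congr fun l => ?_))
  rw [smul_smul, mul_comm, ← ofReal_norm (t • (w:Space)), norm_smul, hw, mul_one, Real.norm_of_nonneg ht.le]

lemma radial (φ : ℝ → ℝ≥0∞) (hφ : Measurable φ) :
    ∫⁻ y : Space, φ ‖y‖ = (∫⁻ r in Ioi (0:ℝ), ENNReal.ofReal (r^2) * φ r) * sph univ := by
  rw [polar_lintegral _ (by exact hφ.comp measurable_norm), ← lintegral_mul_const _ (by fun_prop)]
  refine setLIntegral_congr_fun measurableSet_Ioi fun r hr => ?_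
  have hr' : 0 < r := hr
  have : ∀ w : Metric.sphere (0:Space) 1, ‖r • (w:Space)‖ = r := by
    intro w
    have hw : ‖(w:Space)‖ = 1 := by simpa using w.2
    rw [norm_smul, hw, mul_one, Real.norm_of_nonneg hr'.le]
  simp only [this, lintegral_const]

lemma ker_in : ∫⁻ y : Space, ((Iio (1:ℝ)).indicator (fun r => ENNReal.ofReal (r ^ (-2:ℝ))) ‖y‖) ^ (6/5:ℝ) ≠ ∞ := by
  rw [radial (fun r => ((Iio (1:ℝ)).indicator (fun r => ENNReal.ofReal (r ^ (-2:ℝ))) r) ^ (6/5:ℝ)) (by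
    refine Measurable.pow_const (Measurable.indicator (by fun_prop) measurableSet_Iio) _)]
  refine ENNReal.mul_ne_top ?_ (measure_ne_top _ _)
  have h1 : ∫⁻ r in Ioi (0:ℝ), ENNReal.ofReal (r^2) * ((Iio (1:ℝ)).indicator (fun r => ENNReal.ofReal (r ^ (-2:ℝ))) r) ^ (6/5:ℝ)
      = ∫⁻ r in Ioo (0:ℝ) 1, ENNReal.ofReal (r ^ (-(2/5):ℝ)) := by
    rw [← lintegral_indicator measurableSet_Ioi, ← lintegral_indicator measurableSet_Ioo]
    refine lintegral_congr fun r => ?_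
    by_cases h0 : 0 < r
    · by_cases h1 : r < 1
      · rw [indicator_of_mem (show r ∈ Ioi (0:ℝ) from h0), indicator_of_mem (show r ∈ Ioo (0:ℝ) 1 from ⟨h0, h1⟩), indicator_of_mem (show r ∈ Iio (1:ℝ) from h1)]
        rw [ENNReal.ofReal_rpow_of_nonneg (by positivity) (by norm_num), ← ENNReal.ofReal_mul (by positivity), ← Real.rpow_mul h0.le, ← Real.rpow_natCast r 2, ← Real.rpow_add h0]
        norm_num
      · rw [indicator_of_mem (show r ∈ Ioi (0:ℝ) from h0), indicator_of_notMem (show r ∉ Ioo (0:ℝ) 1 from fun h => h1 h.2), indicator_of_notMem (show r ∉ Iio (1:ℝ) from h1)]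
        rw [ENNReal.zero_rpow_of_pos (by norm_num), mul_zero]
    · rw [indicator_of_notMem (show r ∉ Ioi (0:ℝ) from h0), indicator_of_notMem (show r ∉ Ioo (0:ℝ) 1 from fun h => h0 h.1)]
  rw [h1]
  have : IntegrableOn (fun r : ℝ => r ^ (-(2/5):ℝ)) (Ioo 0 1) := by
    rw [intervalIntegral.integrableOn_Ioo_rpow_iff one_pos]; norm_num
  exact (Integrable.lintegral_lt_top this).ne

lemma ker_out : ∫⁻ y : Space, ((Ici (1:ℝ)).indicator (fun r => ENNReal.ofReal (r ^ (-2:ℝ))) ‖y‖) ^ (2:ℝ) ≠ ∞ := by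
  rw [radial (fun r => ((Ici (1:ℝ)).indicator (fun r => ENNReal.ofReal (r ^ (-2:ℝ))) r) ^ (2:ℝ)) (by
    refine Measurable.pow_const (Measurable.indicator (by fun_prop) measurableSet_Ici) _)]
  refine ENNReal.mul_ne_top ?_ (measure_ne_top _ _)
  have h1 : ∫⁻ r in Ioi (0:ℝ), ENNReal.ofReal (r^2) * ((Ici (1:ℝ)).indicator (fun r => ENNReal.ofReal (r ^ (-2:ℝ))) r) ^ (2:ℝ)
      = ∫⁻ r in Ici (1:ℝ), ENNReal.ofReal (r ^ (-2:ℝ)) := by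
    rw [← lintegral_indicator measurableSet_Ioi, ← lintegral_indicator measurableSet_Ici]
    refine lintegral_congr fun r => ?_
    by_cases h1 : r ∈ Ici (1:ℝ)
    · have h0 : 0 < r := lt_of_lt_of_le one_pos h1
      rw [indicator_of_mem (show r ∈ Ioi (0:ℝ) from h0), indicator_of_mem h1]
      rw [ENNReal.ofReal_rpow_of_nonneg (by positivity) (by norm_num), ← ENNReal.ofReal_mul (by positivity), ← Real.rpow_mul h0.le, ← Real.rpow_natCast r 2, ← Real.rpow_add h0]
      norm_num
    · rw [indicator_of_notMem h1]
      by_cases h0 : r ∈ Ioi (0:ℝ)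
      · rw [indicator_of_mem h0, indicator_of_notMem h1, ENNReal.zero_rpow_of_pos (by norm_num), mul_zero]
      · rw [indicator_of_notMem h0]
  rw [h1, setLIntegral_congr Ioi_ae_eq_Ici.symm]
  have : IntegrableOn (fun r : ℝ => r ^ (-2:ℝ)) (Ioi 1) := integrableOn_Ioi_rpow_of_lt (by norm_num) (by norm_num)
  exact (Integrable.lintegral_lt_top this).ne

lemma pointwise_grad (h : Space → ℝ) (hh : ContDiff ℝ 1 h) (hs : HasCompactSupport h) (x : Space) :
    sph univ * ‖h x‖ₑ ≤ ∫⁻ y : Space, ‖fderiv ℝ h (x + y)‖ₑ * ENNReal.ofReal (‖y‖ ^ (-2:ℝ)) := by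
  have hD : Continuous (fderiv ℝ h) := hh.continuous_fderiv one_ne_zero
  have hDm : Measurable (fun y => ‖fderiv ℝ h y‖ₑ) := hD.enorm.measurable
  have hF : Measurable (fun y : Space => ‖fderiv ℝ h (x + y)‖ₑ * ENNReal.ofReal (‖y‖ ^ (-2:ℝ))) :=
    Measurable.mul (hDm.comp (by fun_prop)) (by fun_prop)
  rw [polar_lintegral _ hF]
  have h1 : sph univ * ‖h x‖ₑ = ∫⁻ w : Metric.sphere (0:Space) 1, ‖h x‖ₑ ∂sph := by
    rw [lintegral_const, mul_comm]
  have h2 : ∀ w : Metric.sphere (0:Space) 1, ‖h x‖ₑ ≤ ∫⁻ r in Ioi (0:ℝ), ‖fderiv ℝ h (x + r • (w:Space))‖ₑ := by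
    intro w
    have hw : ‖(w:Space)‖ = 1 := by simpa using w.2
    have := ray_ftc h hh hs x w (by rw [← norm_ne_zero_iff, hw]; norm_num) 0
    rw [zero_smul, add_zero] at this
    refine this.trans (le_of_eq (lintegral_congr fun l => ?_))
    rw [← ofReal_norm (w:Space), hw, ENNReal.ofReal_one, mul_one]
  rw [h1]
  refine (lintegral_mono h2).trans (le_of_eq ?_)
  rw [lintegral_lintegral_swap (by exact (hDm.comp (by fun_prop : Measurable (fun q : Metric.sphere (0:Space) 1 × ℝ => x + q.2 • (q.1:Space)))).aemeasurable)]
  refine setLIntegral_congr_fun measurableSet_Ioi fun r hr => lintegral_congr fun w => ?_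
  have hr' : 0 < r := hr
  have hw : ‖(w:Space)‖ = 1 := by simpa using w.2
  rw [norm_smul, hw, mul_one, Real.norm_of_nonneg hr'.le, mul_left_comm, ← ENNReal.ofReal_mul (by positivity), ← Real.rpow_natCast r 2, ← Real.rpow_add hr']
  norm_num

lemma gns (F : Type*) [NormedAddCommGroup F] [NormedSpace ℝ F] [FiniteDimensional ℝ F] :
    ∃ C : ℝ≥0∞, C ≠ ∞ ∧ ∀ u : Space → F, ContDiff ℝ 1 u → HasCompactSupport u →
      (∫⁻ x, ‖u x‖ₑ ^ (6:ℝ)) ^ (1/6:ℝ) ≤ C * (∫⁻ x, ‖fderiv ℝ u x‖ₑ ^ (2:ℝ)) ^ (1/2:ℝ) := by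
  refine ⟨_, ENNReal.coe_ne_top (r := SNormLESNormFDerivOfEqConst F (volume : Measure Space) 2), fun u hu hs => ?_⟩
  have := eLpNorm_le_eLpNorm_fderiv_of_eq (μ := (volume : Measure Space)) hu hs (p := 2) (p' := 6) (by norm_num) (by simp) (by simp; norm_num)
  rw [eLpNorm_nnreal_eq_lintegral (by norm_num), eLpNorm_nnreal_eq_lintegral (by norm_num)] at this
  simpa using this

lemma sob_inf : ∃ K : ℝ≥0∞, K ≠ ∞ ∧ ∀ h : Space → ℝ, ContDiff ℝ 2 h → HasCompactSupport h → ∀ x,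
    ‖h x‖ₑ ≤ K * ((∫⁻ x, ‖fderiv ℝ (fderiv ℝ h) x‖ₑ ^ (2:ℝ)) ^ (1/2:ℝ) + (∫⁻ x, ‖fderiv ℝ h x‖ₑ ^ (2:ℝ)) ^ (1/2:ℝ)) := by
  obtain ⟨C, hC, hG⟩ := gns (Space →L[ℝ] ℝ)
  obtain ⟨k1, hk1⟩ : ∃ k, k = (∫⁻ y : Space, ((Iio (1:ℝ)).indicator (fun r => ENNReal.ofReal (r ^ (-2:ℝ))) ‖y‖) ^ (6/5:ℝ)) ^ (1/(6/5):ℝ) := ⟨_, rfl⟩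
  obtain ⟨k2, hk2⟩ : ∃ k, k = (∫⁻ y : Space, ((Ici (1:ℝ)).indicator (fun r => ENNReal.ofReal (r ^ (-2:ℝ))) ‖y‖) ^ (2:ℝ)) ^ (1/2:ℝ) := ⟨_, rfl⟩
  have k1t : k1 ≠ ∞ := by rw [hk1]; exact ENNReal.rpow_ne_top_of_nonneg (by norm_num) ker_in
  have k2t : k2 ≠ ∞ := by rw [hk2]; exact ENNReal.rpow_ne_top_of_nonneg (by norm_num) ker_out
  have hs0 : sph univ ≠ 0 := by
    simp [Measure.toSphere_apply_univ, Real.pi_pos]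
  refine ⟨(sph univ)⁻¹ * (C * k1 + k2), by finiteness, fun h hh hs x => ?_⟩
  have hD1 : ContDiff ℝ 1 (fderiv ℝ h) := hh.fderiv_right (by norm_num)
  have hDm : Measurable (fun y => ‖fderiv ℝ h y‖ₑ) := hD1.continuous.enorm.measurable
  have p := pointwise_grad h (hh.of_le (by norm_num)) hs x
  have g1 := hG _ hD1 (hs.fderiv ℝ)
  set A := (∫⁻ x, ‖fderiv ℝ (fderiv ℝ h) x‖ₑ ^ (2:ℝ)) ^ (1/2:ℝ)
  set B := (∫⁻ x, ‖fderiv ℝ h x‖ₑ ^ (2:ℝ)) ^ (1/2:ℝ) with hB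
  have hm1 : Measurable (fun y : Space => (Iio (1:ℝ)).indicator (fun r => ENNReal.ofReal (r ^ (-2:ℝ))) ‖y‖) :=
    (Measurable.indicator (by fun_prop) measurableSet_Iio).comp measurable_norm
  have hm2 : Measurable (fun y : Space => (Ici (1:ℝ)).indicator (fun r => ENNReal.ofReal (r ^ (-2:ℝ))) ‖y‖) :=
    (Measurable.indicator (by fun_prop) measurableSet_Ici).comp measurable_norm
  have hDx : Measurable (fun y => ‖fderiv ℝ h (x + y)‖ₑ) := hDm.comp (by fun_prop)
  have q : ∫⁻ y : Space, ‖fderiv ℝ h (x + y)‖ₑ * ENNReal.ofReal (‖y‖ ^ (-2:ℝ)) ≤ (C * k1 + k2) * (A + B) := by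
    calc _ = ∫⁻ y : Space, (‖fderiv ℝ h (x + y)‖ₑ * (Iio (1:ℝ)).indicator (fun r => ENNReal.ofReal (r ^ (-2:ℝ))) ‖y‖
              + ‖fderiv ℝ h (x + y)‖ₑ * (Ici (1:ℝ)).indicator (fun r => ENNReal.ofReal (r ^ (-2:ℝ))) ‖y‖) := by
          refine lintegral_congr fun y => ?_
          by_cases hy : ‖y‖ < 1
          · rw [indicator_of_mem (show ‖y‖ ∈ Iio (1:ℝ) from hy), indicator_of_notMem (show ‖y‖ ∉ Ici (1:ℝ) by simpa using hy), mul_zero, add_zero]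
          · rw [indicator_of_notMem (show ‖y‖ ∉ Iio (1:ℝ) from hy), indicator_of_mem (show ‖y‖ ∈ Ici (1:ℝ) by simpa using hy), mul_zero, zero_add]
      _ = (∫⁻ y : Space, ‖fderiv ℝ h (x + y)‖ₑ * (Iio (1:ℝ)).indicator (fun r => ENNReal.ofReal (r ^ (-2:ℝ))) ‖y‖)
            + ∫⁻ y : Space, ‖fderiv ℝ h (x + y)‖ₑ * (Ici (1:ℝ)).indicator (fun r => ENNReal.ofReal (r ^ (-2:ℝ))) ‖y‖ :=
          lintegral_add_left (hDx.mul hm1) _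
      _ ≤ (∫⁻ y, ‖fderiv ℝ h (x + y)‖ₑ ^ (6:ℝ)) ^ (1/6:ℝ) * k1 + (∫⁻ y, ‖fderiv ℝ h (x + y)‖ₑ ^ (2:ℝ)) ^ (1/2:ℝ) * k2 := by
          rw [hk1, hk2]
          refine add_le_add ?_ ?_
          · exact ENNReal.lintegral_mul_le_Lp_mul_Lq volume (p := 6) (q := 6/5) (by constructor <;> norm_num) hDx.aemeasurable hm1.aemeasurable
          · exact ENNReal.lintegral_mul_le_Lp_mul_Lq volume (p := 2) (q := 2) (by constructor <;> norm_num) hDx.aemeasurable hm2.aemeasurable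
      _ = (∫⁻ y, ‖fderiv ℝ h y‖ₑ ^ (6:ℝ)) ^ (1/6:ℝ) * k1 + B * k2 := by
          rw [lintegral_add_left_eq_self (fun y => ‖fderiv ℝ h y‖ₑ ^ (6:ℝ)) x, lintegral_add_left_eq_self (fun y => ‖fderiv ℝ h y‖ₑ ^ (2:ℝ)) x]
      _ ≤ (C * A) * k1 + B * k2 := add_le_add (mul_le_mul' g1 le_rfl) le_rfl
      _ = (C * k1) * A + k2 * B := by ring
      _ ≤ (C * k1 + k2) * A + (C * k1 + k2) * B := add_le_add (mul_le_mul' le_self_add le_rfl) (mul_le_mul' le_add_self le_rfl)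
      _ = _ := by ring
  rw [mul_assoc, mul_comm (sph univ)⁻¹, ← div_eq_mul_inv]
  rw [ENNReal.le_div_iff_mul_le (Or.inl hs0) (Or.inl (measure_ne_top _ _)), mul_comm]
  exact p.trans q
end PartEight

section PartNine
open scoped ENNReal

lemma log_pos_aux (u : ℝ) : 1 < Real.log (10 + u ^ 2) := by
  rw [Real.lt_log_iff_exp_lt (by positivity)]
  have := Real.exp_one_lt_d9
  nlinarith [sq_nonneg u]

lemma loglog_pos (u : ℝ) : 0 < Real.log (Real.log (10 + u ^ 2)) := Real.log_pos (log_pos_aux u)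

lemma g_pos (c u : ℝ) : 0 < g c u := Real.rpow_pos_of_pos (loglog_pos u) c

lemma g_mono {c : ℝ} (hc : 0 < c) {u v : ℝ} (h : |u| ≤ |v|) : g c u ≤ g c v := by
  refine Real.rpow_le_rpow (loglog_pos u).le ?_ hc.le
  refine Real.log_le_log (by linarith [log_pos_aux u]) (Real.log_le_log (by positivity) ?_)
  have := sq_le_sq.2 h
  linarith

lemma g_scale {c : ℝ} (hc : 0 < c) (K : ℝ) (hK : 1 ≤ K) : ∃ C : ℝ, 0 < C ∧ ∀ M, g c (K * M) ≤ C * g c M := by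
  set L := Real.log (Real.log (10 + (0:ℝ) ^ 2)) with hL
  have hL0 : 0 < L := loglog_pos 0
  have hlK : 0 ≤ Real.log K := Real.log_nonneg hK
  set k := Real.log (1 + 2 * Real.log K) with hk
  have hk0 : 0 ≤ k := Real.log_nonneg (by linarith)
  have hpos : 0 < 1 + k / L := by positivity
  refine ⟨(1 + k / L) ^ c, by positivity, fun M => ?_⟩
  unfold g
  rw [← Real.mul_rpow hpos.le (loglog_pos M).le]
  refine Real.rpow_le_rpow (loglog_pos _).le ?_ hc.le
  have h1 : Real.log (10 + (K * M) ^ 2) ≤ (1 + 2 * Real.log K) * Real.log (10 + M ^ 2) := by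
    have : Real.log (10 + (K * M) ^ 2) ≤ Real.log (K ^ 2 * (10 + M ^ 2)) := by
      refine Real.log_le_log (by positivity) ?_
      nlinarith [sq_nonneg M, sq_nonneg (K - 1)]
    rw [Real.log_mul (by positivity) (by positivity), Real.log_pow] at this
    push_cast at this
    nlinarith [log_pos_aux M]
  have h2 : Real.log (Real.log (10 + (K * M) ^ 2)) ≤ k + Real.log (Real.log (10 + M ^ 2)) := by
    rw [hk, ← Real.log_mul (by linarith) (by linarith [log_pos_aux M])]
    exact Real.log_le_log (by linarith [log_pos_aux (K * M)]) h1
  have h3 : L ≤ Real.log (Real.log (10 + M ^ 2)) := by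
    refine Real.log_le_log (by linarith [log_pos_aux 0]) (Real.log_le_log (by norm_num) ?_)
    nlinarith [sq_nonneg M]
  have h4 : k ≤ k / L * Real.log (Real.log (10 + M ^ 2)) := by
    rw [div_mul_eq_mul_div, le_div_iff₀ hL0]
    exact mul_le_mul_of_nonneg_left h3 hk0
  linarith

lemma g_cont (c : ℝ) : Continuous (g c) := by
  unfold g
  refine Continuous.rpow_const (Continuous.log (Continuous.log (by fun_prop) ?_) ?_) ?_
  · intro u; positivity
  · intro u; linarith [log_pos_aux u]
  · intro u; exact Or.inl (loglog_pos u).ne'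

lemma f_cont (c : ℝ) : Continuous (f c) := by
  unfold f
  exact (continuous_pow 5).mul (g_cont c)

lemma Fpot_nonneg (c u : ℝ) : 0 ≤ Fpot c u := by
  unfold Fpot
  rcases le_total 0 u with h | h
  · refine intervalIntegral.integral_nonneg h fun v hv => ?_
    exact mul_nonneg (pow_nonneg hv.1 5) (g_pos c v).le
  · rw [intervalIntegral.integral_symm, ← intervalIntegral.integral_neg]
    refine intervalIntegral.integral_nonneg h fun v hv => ?_
    unfold f
    have := (g_pos c v).le
    have h5 : v ^ 5 ≤ 0 := Odd.pow_nonpos (by decide) hv.2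
    nlinarith

lemma lint_sq {G : Type*} [NormedAddCommGroup G] (φ : Space → G) (h : Continuous φ) (hs : HasCompactSupport φ) :
    ∫⁻ x, ‖φ x‖ₑ ^ (2:ℝ) = ENNReal.ofReal (∫ x, ‖φ x‖ ^ 2) := by
  have hi : Integrable (fun x => ‖φ x‖ ^ 2) := by
    refine Continuous.integrable_of_hasCompactSupport (by fun_prop) ?_
    exact hs.comp_left (g := fun y : G => ‖y‖ ^ 2) (by simp)
  rw [ofReal_integral_eq_lintegral_ofReal hi (Filter.Eventually.of_forall fun x => by positivity)]
  refine lintegral_congr fun x => ?_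
  rw [← ofReal_norm, ENNReal.ofReal_rpow_of_nonneg (norm_nonneg _) (by norm_num)]
  norm_num

lemma norm_grad (h : Space → ℝ) (x : Space) : ‖gradient h x‖ = ‖fderiv ℝ h x‖ := by
  unfold gradient; rw [LinearIsometryEquiv.norm_map]

lemma norm_iter2 (h : Space → ℝ) (x : Space) : ‖iteratedFDeriv ℝ 2 h x‖ = ‖fderiv ℝ (fderiv ℝ h) x‖ := by
  rw [← norm_iteratedFDeriv_fderiv, norm_iteratedFDeriv_one]

lemma sob_real : ∃ K : ℝ, 1 ≤ K ∧ ∀ h : Space → ℝ, ContDiff ℝ 2 h → HasCompactSupport h → ∀ x, |h x| ≤ K * H2tildeNorm h := by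
  obtain ⟨K, hK, hs⟩ := sob_inf
  refine ⟨K.toReal + 1, by linarith [ENNReal.toReal_nonneg (a := K)], fun h hh hc x => ?_⟩
  have hD1 : ContDiff ℝ 1 (fderiv ℝ h) := hh.fderiv_right (by norm_num)
  have h1 := hs h hh hc x
  rw [lint_sq _ (hD1.continuous_fderiv one_ne_zero) ((hc.fderiv ℝ).fderiv ℝ), lint_sq _ hD1.continuous (hc.fderiv ℝ)] at h1
  have n1 : 0 ≤ ∫ x, ‖fderiv ℝ (fderiv ℝ h) x‖ ^ 2 := integral_nonneg fun x => by positivity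
  have n2 : 0 ≤ ∫ x, ‖fderiv ℝ h x‖ ^ 2 := integral_nonneg fun x => by positivity
  have hH : H2tildeNorm h = (∫ x, ‖fderiv ℝ (fderiv ℝ h) x‖ ^ 2) ^ (1/2:ℝ) + (∫ x, ‖fderiv ℝ h x‖ ^ 2) ^ (1/2:ℝ) := by
    unfold H2tildeNorm
    simp only [norm_grad, norm_iter2]
  rw [ENNReal.ofReal_rpow_of_nonneg n1 (by norm_num), ENNReal.ofReal_rpow_of_nonneg n2 (by norm_num), ← ENNReal.ofReal_add (by positivity) (by positivity), ← hH, ← ENNReal.ofReal_toReal hK, ← ENNReal.ofReal_mul ENNReal.toReal_nonneg, ← ofReal_norm] at h1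
  have hH0 : 0 ≤ H2tildeNorm h := by rw [hH]; positivity
  have := (ENNReal.ofReal_le_ofReal_iff (mul_nonneg ENNReal.toReal_nonneg hH0)).1 h1
  rw [Real.norm_eq_abs] at this
  nlinarith

lemma f_bound {c : ℝ} (hc : 0 < c) {N v : ℝ} (h : |v| ≤ N) : ‖f c v‖ₑ ≤ ENNReal.ofReal (g c N) * ‖v‖ₑ ^ 5 := by
  unfold f
  rw [enorm_mul, mul_comm]
  refine mul_le_mul' ?_ (by rw [enorm_pow])
  rw [← ofReal_norm, Real.norm_of_nonneg (g_pos c v).le]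
  exact ENNReal.ofReal_le_ofReal (g_mono hc (h.trans (le_abs_self N)))

lemma holder_ten (p : Space → ℝ≥0∞) (hp : Measurable p) :
    (∫⁻ x, p x ^ (10:ℝ)) ^ (1/2:ℝ) ≤ (∫⁻ x, p x ^ (12:ℝ)) ^ (1/3:ℝ) * (∫⁻ x, p x ^ (6:ℝ)) ^ (1/6:ℝ) := by
  have h := ENNReal.lintegral_mul_le_Lp_mul_Lq volume (p := 3/2) (q := 3) (by constructor <;> norm_num) (hp.pow_const (8:ℝ)).aemeasurable (hp.pow_const (2:ℝ)).aemeasurable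
  simp only [Pi.mul_apply, ← ENNReal.rpow_mul] at h
  have e : ∀ x, p x ^ (8:ℝ) * p x ^ (2:ℝ) = p x ^ (10:ℝ) := fun x => by
    rw [← ENNReal.rpow_add_of_nonneg _ _ (by norm_num) (by norm_num)]; norm_num
  simp only [e] at h
  have h2 := ENNReal.rpow_le_rpow h (show (0:ℝ) ≤ 1/2 by norm_num)
  rw [ENNReal.mul_rpow_of_nonneg _ _ (by norm_num), ← ENNReal.rpow_mul, ← ENNReal.rpow_mul] at h2
  norm_num at h2 ⊢
  exact h2

lemma f_L2 {c : ℝ} (hc : 0 < c) {N : ℝ} (h : Space → ℝ) (hm : Measurable h) (hN : ∀ x, |h x| ≤ N) :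
    (∫⁻ x, ‖f c (h x)‖ₑ ^ 2) ^ (1/2:ℝ) ≤ ENNReal.ofReal (g c N) * ((∫⁻ x, ‖h x‖ₑ ^ (12:ℝ)) ^ (1/3:ℝ) * (∫⁻ x, ‖h x‖ₑ ^ (6:ℝ)) ^ (1/6:ℝ)) := by
  have h1 : ∫⁻ x, ‖f c (h x)‖ₑ ^ 2 ≤ ENNReal.ofReal (g c N) ^ 2 * ∫⁻ x, ‖h x‖ₑ ^ (10:ℝ) := by
    rw [← lintegral_const_mul' _ _ (by finiteness)]
    refine lintegral_mono fun x => ?_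
    refine (pow_le_pow_left' (f_bound hc (hN x)) 2).trans (le_of_eq ?_)
    rw [mul_pow, ← pow_mul]
    congr 1
    norm_cast
  refine (ENNReal.rpow_le_rpow h1 (by norm_num)).trans ?_
  rw [ENNReal.mul_rpow_of_nonneg _ _ (by norm_num)]
  refine mul_le_mul' (le_of_eq ?_) (holder_ten _ hm.enorm)
  rw [← ENNReal.rpow_natCast, ← ENNReal.rpow_mul]; norm_num

lemma m_bound {N : ℝ} (h : Space → ℝ) (hN : ∀ x, |h x| ≤ N) :
    ∫⁻ x, ‖h x‖ₑ ^ (12:ℝ) ≤ ENNReal.ofReal N ^ (6:ℝ) * ∫⁻ x, ‖h x‖ₑ ^ (6:ℝ) := by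
  rw [← lintegral_const_mul' _ _ (by finiteness)]
  refine lintegral_mono fun x => ?_
  have e : ‖h x‖ₑ ^ (12:ℝ) = ‖h x‖ₑ ^ (6:ℝ) * ‖h x‖ₑ ^ (6:ℝ) := by
    rw [← ENNReal.rpow_add_of_nonneg _ _ (by norm_num) (by norm_num)]; norm_num
  simp only [e]
  refine mul_le_mul' (ENNReal.rpow_le_rpow ?_ (by norm_num)) le_rfl
  rw [← ofReal_norm]
  exact ENNReal.ofReal_le_ofReal (hN x)
end PartNine

section PartTen
open scoped ENNReal

/-- Hypotheses on a solution near time `0`. -/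
structure FwdHyp (c : ℝ) (U : ℝ → Space → ℝ) (α β N E : ℝ) : Prop where
  hc : 0 < c
  h0 : (0:ℝ) ∈ Ioo α β
  sm : ContDiffOn ℝ (⊤ : ℕ∞) (fun p : ℝ × Space => U p.1 p.2) (Ioo α β ×ˢ univ)
  cs : ∀ s ∈ Ioo α β, HasCompactSupport (U s)
  eqn : ∀ s ∈ Ioo α β, ∀ y, dt2 U s y - lap (U s) y = - f c (U s y)
  bd : ∀ s ∈ Ioo α β, ∀ y, |U s y| ≤ N
  en : ∀ s ∈ Ioo α β, ∫⁻ x, ‖fderiv ℝ (U s) x‖ₑ ^ (2:ℝ) ≤ ENNReal.ofReal (2 * E)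
  en0 : ∫⁻ x, ‖dt1 U 0 x‖ₑ ^ (2:ℝ) ≤ ENNReal.ofReal (2 * E)

lemma forward : ∃ C1 : ℝ≥0∞, C1 ≠ ∞ ∧ ∀ (c : ℝ) (U : ℝ → Space → ℝ) (α β N E : ℝ), FwdHyp c U α β N E → ∀ τ, 0 < τ → τ < β →
    (∫⁻ t in Ioo 0 τ, (∫⁻ x, ‖U t x‖ₑ ^ (12:ℝ)) ^ (1/3:ℝ) ≠ ∞) ∧
    (∫⁻ t in Ioo 0 τ, (∫⁻ x, ‖U t x‖ₑ ^ (12:ℝ)) ^ (1/3:ℝ)) ^ (1/4:ℝ) ≤ C1 * ENNReal.ofReal (2 * E) ^ (1/2:ℝ) *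
      (1 + ENNReal.ofReal (g c N) * ∫⁻ t in Ioo 0 τ, (∫⁻ x, ‖U t x‖ₑ ^ (12:ℝ)) ^ (1/3:ℝ)) := by
  obtain ⟨C, hC, hP⟩ := pairing
  obtain ⟨S, hS, hG⟩ := gns ℝ
  have hs0 : sph univ ≠ 0 := by simp [Measure.toSphere_apply_univ, Real.pi_pos]
  refine ⟨(sph univ)⁻¹ * (ENNReal.ofReal C * (2 + S)), by finiteness, fun c U α β N E H τ hτ hτβ => ?_⟩
  obtain ⟨D, D2, hDc, hD2c, hD, hDD, hsym, hsm, hf1, hf2, ht1, ht2⟩ := bridge U α β H.sm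
  have hsub : Ioo 0 τ ⊆ Ioo α β := Ioo_subset_Ioo H.h0.1.le hτβ.le
  have hUc : ContinuousOn (fun p : ℝ × Space => U p.1 p.2) (Ioo 0 τ ×ˢ univ) := H.sm.continuousOn.mono (prod_mono hsub subset_rfl)
  have hO : MeasurableSet (Ioo 0 τ ×ˢ (univ : Set Space)) := measurableSet_Ioo.prod MeasurableSet.univ
  classical
  obtain ⟨V, hVd⟩ : ∃ V : ℝ × Space → ℝ≥0∞, V = (Ioo 0 τ ×ˢ (univ : Set Space)).piecewise (fun p => ‖U p.1 p.2‖ₑ) (fun _ => 0) := ⟨_, rfl⟩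
  obtain ⟨Q, hQd⟩ : ∃ Q : ℝ × Space → ℝ≥0∞, Q = (Ioo 0 τ ×ˢ (univ : Set Space)).piecewise (fun p => ‖f c (U p.1 p.2)‖ₑ) (fun _ => 0) := ⟨_, rfl⟩
  have hV : Measurable V := by
    rw [hVd]; exact ContinuousOn.measurable_piecewise hUc.enorm continuousOn_const hO
  have hQ : Measurable Q := by
    rw [hQd]; exact ContinuousOn.measurable_piecewise ((f_cont c).comp_continuousOn hUc).enorm continuousOn_const hO
  have hV1 : ∀ t ∈ Ioo 0 τ, ∀ x, V (t, x) = ‖U t x‖ₑ := fun t ht x => by rw [hVd, piecewise_eq_of_mem _ _ _ (show (t, x) ∈ Ioo 0 τ ×ˢ (univ : Set Space) from ⟨ht, trivial⟩)]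
  have hV0 : ∀ t ∉ Ioo 0 τ, ∀ x, V (t, x) = 0 := fun t ht x => by rw [hVd, piecewise_eq_of_notMem _ _ _ (show (t, x) ∉ Ioo 0 τ ×ˢ (univ : Set Space) from fun h => ht h.1)]
  have hQ1 : ∀ t ∈ Ioo 0 τ, ∀ x, Q (t, x) = ‖f c (U t x)‖ₑ := fun t ht x => by rw [hQd, piecewise_eq_of_mem _ _ _ (show (t, x) ∈ Ioo 0 τ ×ˢ (univ : Set Space) from ⟨ht, trivial⟩)]
  have hQ0 : ∀ t ∉ Ioo 0 τ, ∀ x, Q (t, x) = 0 := fun t ht x => by rw [hQd, piecewise_eq_of_notMem _ _ _ (show (t, x) ∉ Ioo 0 τ ×ˢ (univ : Set Space) from fun h => ht h.1)]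
  have hsix : ∀ s ∈ Ioo α β, (∫⁻ x, ‖U s x‖ₑ ^ (6:ℝ)) ^ (1/6:ℝ) ≤ S * ENNReal.ofReal (2 * E) ^ (1/2:ℝ) := by
    intro s hs
    refine (hG (U s) ((hsm s hs).of_le (by norm_cast)) (H.cs s hs)).trans ?_
    exact mul_le_mul' le_rfl (ENNReal.rpow_le_rpow (H.en s hs) (by norm_num))
  obtain ⟨R, hR⟩ : ∃ R, R = ENNReal.ofReal (2 * E) ^ (1/2:ℝ) := ⟨_, rfl⟩
  have hRt : R ≠ ∞ := by rw [hR]; exact ENNReal.rpow_ne_top_of_nonneg (by norm_num) ENNReal.ofReal_ne_top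
  obtain ⟨B, hBt, hB⟩ : ∃ B : ℝ≥0∞, B ≠ ∞ ∧ ∀ s ∈ Ioo α β, ∫⁻ x, ‖U s x‖ₑ ^ (12:ℝ) ≤ B := by
    refine ⟨ENNReal.ofReal N ^ (6:ℝ) * (S * R) ^ (6:ℝ), by finiteness, fun s hs => (m_bound (U s) (H.bd s hs)).trans ?_⟩
    refine mul_le_mul' le_rfl ?_
    have := ENNReal.rpow_le_rpow (hsix s hs) (show (0:ℝ) ≤ 6 by norm_num)
    rw [← ENNReal.rpow_mul, ← hR] at this
    norm_num at this ⊢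
    exact this
  have hm : ∀ t, ∫⁻ x, V (t, x) ^ (12:ℝ) = (Ioo 0 τ).indicator (fun t => ∫⁻ x, ‖U t x‖ₑ ^ (12:ℝ)) t := by
    intro t
    by_cases ht : t ∈ Ioo 0 τ
    · rw [indicator_of_mem ht]; simp only [hV1 t ht]
    · rw [indicator_of_notMem ht]; simp [hV0 t ht]
  have hX : ∫⁻ t in Ioi (0:ℝ), (∫⁻ x, V (t, x) ^ (12:ℝ)) ^ (1/3:ℝ) = ∫⁻ t in Ioo 0 τ, (∫⁻ x, ‖U t x‖ₑ ^ (12:ℝ)) ^ (1/3:ℝ) := by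
    rw [← lintegral_indicator measurableSet_Ioi, ← lintegral_indicator measurableSet_Ioo]
    refine lintegral_congr fun t => ?_
    by_cases ht : t ∈ Ioo 0 τ
    · rw [indicator_of_mem ht, indicator_of_mem (show t ∈ Ioi (0:ℝ) from ht.1), hm, indicator_of_mem ht]
    · rw [indicator_of_notMem ht]
      by_cases h : t ∈ Ioi (0:ℝ)
      · rw [indicator_of_mem h, hm, indicator_of_notMem ht, ENNReal.zero_rpow_of_pos (by norm_num)]
      · rw [indicator_of_notMem h]
  have hXt : ∫⁻ t in Ioo 0 τ, (∫⁻ x, ‖U t x‖ₑ ^ (12:ℝ)) ^ (1/3:ℝ) ≠ ∞ := by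
    refine ne_top_of_le_ne_top ?_ (setLIntegral_mono' (g := fun _ => B ^ (1/3:ℝ)) measurableSet_Ioo fun t ht => ENNReal.rpow_le_rpow (hB t (hsub ht)) (by norm_num))
    rw [setLIntegral_const, Real.volume_Ioo]
    exact ENNReal.mul_ne_top (ENNReal.rpow_ne_top_of_nonneg (by norm_num) hBt) ENNReal.ofReal_ne_top
  refine ⟨hXt, ?_⟩
  have hsm0 : ContDiff ℝ 1 (U 0) := (hsm 0 H.h0).of_le (by norm_cast)
  have ha : Continuous (dt1 U 0) := by
    have : dt1 U 0 = fun y => D (0, y) (1, 0) := funext fun y => ht1 0 H.h0 y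
    rw [this]
    have h1 : Continuous (fun y : Space => D (0, y)) := by
      rw [← continuousOn_univ]
      exact hDc.comp (by fun_prop) (fun y _ => ⟨H.h0, trivial⟩)
    exact h1.clm_apply continuous_const
  have hmain := hP V Q (fun x => ‖dt1 U 0 x‖ₑ) (fun x => ‖fderiv ℝ (U 0) x‖ₑ) (fun x => ‖U 0 x‖ₑ) hV hQ ha.enorm.measurable
    (hsm0.continuous_fderiv one_ne_zero).enorm.measurable hsm0.continuous.enorm.measurable
    (by
      intro t ht x
      by_cases htτ : t < τ
      · have hk := kirchhoff_ineq U (fun s y => - f c (U s y)) α β H.sm H.eqn H.h0 t ⟨H.h0.1.trans ht, htτ.trans hτβ⟩ ht x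
        rw [hV1 t ⟨ht, htτ⟩]
        refine hk.trans (add_le_add le_rfl (le_of_eq ?_))
        refine setLIntegral_congr_fun measurableSet_Ioo fun s hs => lintegral_congr fun w => ?_
        rw [hQ1 s ⟨hs.1, hs.2.trans htτ⟩, enorm_neg]
      · rw [hV0 t (fun h => htτ h.2), mul_zero]; exact bot_le)
    (fun x t ht w => H2_inst (U 0) hsm0 (H.cs 0 H.h0) x t ht w)
    (by
      intro t; rw [hm]
      by_cases ht : t ∈ Ioo 0 τ
      · rw [indicator_of_mem ht]; exact ne_top_of_le_ne_top hBt (hB t (hsub ht))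
      · rw [indicator_of_notMem ht]; exact ENNReal.zero_ne_top)
    (by rw [hX]; exact hXt)
  rw [hX] at hmain
  obtain ⟨X, hXX⟩ : ∃ X, X = ∫⁻ t in Ioo 0 τ, (∫⁻ x, ‖U t x‖ₑ ^ (12:ℝ)) ^ (1/3:ℝ) := ⟨_, rfl⟩
  have hq : ∫⁻ s in Ioi (0:ℝ), (∫⁻ x, Q (s, x) ^ 2) ^ (1/2:ℝ) ≤ ENNReal.ofReal (g c N) * (X * (S * R)) := by
    have e1 : ∫⁻ s in Ioi (0:ℝ), (∫⁻ x, Q (s, x) ^ 2) ^ (1/2:ℝ) ≤ ∫⁻ s in Ioo 0 τ, (∫⁻ x, ‖U s x‖ₑ ^ (12:ℝ)) ^ (1/3:ℝ) * (ENNReal.ofReal (g c N) * (S * R)) := by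
      rw [← lintegral_indicator measurableSet_Ioi, ← lintegral_indicator measurableSet_Ioo]
      refine lintegral_mono fun s => ?_
      by_cases hs : s ∈ Ioo 0 τ
      · rw [indicator_of_mem hs, indicator_of_mem (show s ∈ Ioi (0:ℝ) from hs.1)]
        simp only [hQ1 s hs]
        refine (f_L2 H.hc (U s) (hsm s (hsub hs)).continuous.measurable (H.bd s (hsub hs))).trans ?_
        have := hsix s (hsub hs)
        rw [← hR] at this
        refine (mul_le_mul' le_rfl (mul_le_mul' le_rfl this)).trans (le_of_eq (by ring))
      · rw [indicator_of_notMem hs]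
        by_cases h : s ∈ Ioi (0:ℝ)
        · rw [indicator_of_mem h]; simp [hQ0 s hs]
        · rw [indicator_of_notMem h]
    refine e1.trans (le_of_eq ?_)
    rw [lintegral_mul_const' _ _ (by finiteness), ← hXX]; ring
  rw [← hXX] at hmain ⊢
  have p1 : (∫⁻ x, ‖dt1 U 0 x‖ₑ ^ 2) ^ (1/2:ℝ) ≤ R := by
    rw [hR]; refine ENNReal.rpow_le_rpow ?_ (by norm_num)
    simpa using H.en0
  have p2 : (∫⁻ x, ‖fderiv ℝ (U 0) x‖ₑ ^ 2) ^ (1/2:ℝ) ≤ R := by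
    rw [hR]; refine ENNReal.rpow_le_rpow ?_ (by norm_num)
    simpa using H.en 0 H.h0
  have fin : sph univ * X ^ (1/4:ℝ) ≤ ENNReal.ofReal C * (2 + S) * R * (1 + ENNReal.ofReal (g c N) * X) := by
    refine hmain.trans ((mul_le_mul' le_rfl (add_le_add (add_le_add p1 p2) hq)).trans ?_)
    rw [mul_assoc, mul_assoc]
    refine mul_le_mul' le_rfl ?_
    calc R + R + ENNReal.ofReal (g c N) * (X * (S * R)) = 2 * (R * 1) + S * (R * (ENNReal.ofReal (g c N) * X)) := by ring
      _ ≤ (2 + S) * (R * 1) + (2 + S) * (R * (ENNReal.ofReal (g c N) * X)) := add_le_add (mul_le_mul' le_self_add le_rfl) (mul_le_mul' le_add_self le_rfl)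
      _ = _ := by ring
  rw [← hR]
  have : (sph univ)⁻¹ * (ENNReal.ofReal C * (2 + S)) * R * (1 + ENNReal.ofReal (g c N) * X) = (ENNReal.ofReal C * (2 + S) * R * (1 + ENNReal.ofReal (g c N) * X)) / sph univ := by
    rw [div_eq_mul_inv]; ring
  rw [this, ENNReal.le_div_iff_mul_le (Or.inl hs0) (Or.inl (measure_ne_top _ _)), mul_comm]
  exact fin
end PartTen

section PartEleven
open scoped ENNReal

lemma m_meas (U : ℝ → Space → ℝ) (α β : ℝ) (h : ContinuousOn (fun p : ℝ × Space => U p.1 p.2) (Ioo α β ×ˢ univ)) :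
    ∃ m : ℝ → ℝ≥0∞, Measurable m ∧ ∀ t ∈ Ioo α β, m t = (∫⁻ x, ‖U t x‖ₑ ^ (12:ℝ)) ^ (1/3:ℝ) := by
  classical
  have hO : MeasurableSet (Ioo α β ×ˢ (univ : Set Space)) := measurableSet_Ioo.prod MeasurableSet.univ
  obtain ⟨V, hVd⟩ : ∃ V : ℝ × Space → ℝ≥0∞, V = (Ioo α β ×ˢ (univ : Set Space)).piecewise (fun p => ‖U p.1 p.2‖ₑ) (fun _ => 0) := ⟨_, rfl⟩
  have hV : Measurable V := by
    rw [hVd]; exact ContinuousOn.measurable_piecewise h.enorm continuousOn_const hO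
  have hV1 : ∀ t ∈ Ioo α β, ∀ x, V (t, x) = ‖U t x‖ₑ := fun t ht x => by rw [hVd, piecewise_eq_of_mem _ _ _ (show (t, x) ∈ Ioo α β ×ˢ (univ : Set Space) from ⟨ht, trivial⟩)]
  refine ⟨fun t => (∫⁻ x, V (t, x) ^ (12:ℝ)) ^ (1/3:ℝ), ?_, fun t ht => by simp only [hV1 t ht]⟩
  exact (Measurable.lintegral_prod_right' (f := fun p : ℝ × Space => V p ^ (12:ℝ)) (hV.pow_const _)).pow_const _

lemma ivt_aux (φ : ℝ → ℝ≥0∞) (hφ : Measurable φ) (τ S : ℝ) (hτ : 0 < τ) (hS : 0 < S) (hfin : ∫⁻ t in Ioo 0 τ, φ t ≠ ∞)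
    (hbig : ENNReal.ofReal S < ∫⁻ t in Ioo 0 τ, φ t) : ∃ σ, 0 < σ ∧ σ ≤ τ ∧ ∫⁻ t in Ioo 0 σ, φ t = ENNReal.ofReal S := by
  have hE : ∀ σ, ∫⁻ t in Ioo 0 σ, φ t = ∫⁻ t in Ioc 0 σ, φ t := fun σ => setLIntegral_congr Ioo_ae_eq_Ioc
  simp only [hE] at *
  have hfinσ : ∀ σ ∈ Icc 0 τ, ∫⁻ t in Ioc 0 σ, φ t ≠ ∞ := fun σ hσ => ne_top_of_le_ne_top hfin (lintegral_mono_set (Ioc_subset_Ioc_right hσ.2))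
  have hint : IntegrableOn (fun t => (φ t).toReal) (Icc 0 τ) := by
    rw [integrableOn_Icc_iff_integrableOn_Ioc]
    exact integrable_toReal_of_lintegral_ne_top hφ.aemeasurable hfin
  have hc := intervalIntegral.continuousOn_primitive hint
  have hval : ∀ σ ∈ Icc 0 τ, ∫ t in Ioc 0 σ, (φ t).toReal = (∫⁻ t in Ioc 0 σ, φ t).toReal := fun σ hσ =>
    integral_toReal hφ.aemeasurable (ae_lt_top hφ (hfinσ σ hσ))
  have hm : S ∈ Icc (∫ t in Ioc 0 (0:ℝ), (φ t).toReal) (∫ t in Ioc 0 τ, (φ t).toReal) := by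
    constructor
    · simp [hS.le]
    · rw [hval τ ⟨hτ.le, le_rfl⟩]
      exact (ENNReal.ofReal_le_iff_le_toReal hfin).1 hbig.le
  obtain ⟨σ, hσ, h⟩ := intermediate_value_Icc hτ.le hc hm
  have h' : (∫⁻ t in Ioc 0 σ, φ t).toReal = S := by rw [← hval σ hσ]; exact h
  refine ⟨σ, ?_, hσ.2, ?_⟩
  · rcases hσ.1.eq_or_lt with h0 | h0
    · rw [← h0] at h'; simp at h'; linarith
    · exact h0
  · rw [← h', ENNReal.ofReal_toReal (hfinσ σ hσ)]

lemma bootstrap : ∃ C1 : ℝ, 0 < C1 ∧ ∀ (c : ℝ) (U : ℝ → Space → ℝ) (α β N E : ℝ), FwdHyp c U α β N E → 0 < E → C1 * E ^ 2 * g c N < 1 →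
    ∫⁻ t in Ioo 0 β, (∫⁻ x, ‖U t x‖ₑ ^ (12:ℝ)) ^ (1/3:ℝ) ≤ ENNReal.ofReal (C1 * E ^ 2) := by
  obtain ⟨C, hC, hF⟩ := forward
  set K := C.toReal + 1 with hK
  have hK0 : 0 < K := by have := ENNReal.toReal_nonneg (a := C); positivity
  have hCK : C ≤ ENNReal.ofReal K := by
    rw [← ENNReal.ofReal_toReal hC]; exact ENNReal.ofReal_le_ofReal (by linarith)
  refine ⟨64 * K ^ 4, by positivity, fun c U α β N E H hE hsmall => ?_⟩
  obtain ⟨φ, hφ, hφe⟩ := m_meas U α β H.sm.continuousOn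
  have hXe : ∀ σ ≤ β, ∫⁻ t in Ioo 0 σ, φ t = ∫⁻ t in Ioo 0 σ, (∫⁻ x, ‖U t x‖ₑ ^ (12:ℝ)) ^ (1/3:ℝ) := fun σ hσ =>
    setLIntegral_congr_fun measurableSet_Ioo fun t ht => hφe t (Ioo_subset_Ioo H.h0.1.le hσ ht)
  have key : ∀ τ, 0 < τ → τ < β → ∫⁻ t in Ioo 0 τ, φ t ≤ ENNReal.ofReal (64 * K ^ 4 * E ^ 2) := by
    intro τ hτ hτβ
    by_contra! hlt
    have hSpos : 0 < 64 * K ^ 4 * E ^ 2 := by positivity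
    obtain ⟨σ, hσ0, hστ, hσ⟩ := ivt_aux φ hφ τ _ hτ hSpos (by rw [hXe τ hτβ.le]; exact (hF c U α β N E H τ hτ hτβ).1) hlt
    have h2 := (hF c U α β N E H σ hσ0 (hστ.trans_lt hτβ)).2
    rw [← hXe σ (hστ.trans hτβ.le), hσ] at h2
    have h3 := h2.trans (mul_le_mul' (mul_le_mul' hCK le_rfl) le_rfl)
    have hg := g_pos c N
    have e1 : (1:ℝ≥0∞) + ENNReal.ofReal (g c N) * ENNReal.ofReal (64 * K ^ 4 * E ^ 2) = ENNReal.ofReal (1 + g c N * (64 * K ^ 4 * E ^ 2)) := by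
      rw [← ENNReal.ofReal_mul hg.le, ← ENNReal.ofReal_one, ← ENNReal.ofReal_add (by norm_num) (by positivity)]
    rw [e1, ENNReal.ofReal_rpow_of_nonneg hSpos.le (by norm_num), ENNReal.ofReal_rpow_of_nonneg (by positivity) (by norm_num), ← ENNReal.ofReal_mul hK0.le, ← ENNReal.ofReal_mul (by positivity), ENNReal.ofReal_le_ofReal_iff (by positivity)] at h3
    have e2 : (64 * K ^ 4 * E ^ 2) ^ (1/4:ℝ) = 2 * (K * (2 * E) ^ (1/2:ℝ)) := by
      have hp : 0 ≤ 2 * (K * (2 * E) ^ (1/2:ℝ)) := by positivity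
      have hq : ((2 * E) ^ (1/2:ℝ)) ^ 4 = 4 * E ^ 2 := by
        rw [← Real.rpow_natCast, ← Real.rpow_mul (by positivity)]
        norm_num
        ring
      have : 64 * K ^ 4 * E ^ 2 = (2 * (K * (2 * E) ^ (1/2:ℝ))) ^ 4 := by
        rw [mul_pow, mul_pow, hq]; ring
      rw [this, ← Real.rpow_natCast, ← Real.rpow_mul hp]; norm_num
    rw [e2] at h3
    have hpos : 0 < K * (2 * E) ^ (1/2:ℝ) := by positivity
    have : 2 ≤ 1 + g c N * (64 * K ^ 4 * E ^ 2) := by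
      by_contra! hcon
      nlinarith
    nlinarith
  rw [← hXe β le_rfl]
  have hβ : 0 < β := H.h0.2
  have hU : Ioo 0 β = ⋃ n : ℕ, Ioo 0 (β - β / (n + 2)) := by
    ext t
    simp only [mem_Ioo, mem_iUnion]
    constructor
    · rintro ⟨h1, h2⟩
      obtain ⟨n, hn⟩ := exists_nat_gt (β / (β - t))
      refine ⟨n, h1, ?_⟩
      have hbt : 0 < β - t := by linarith
      rw [div_lt_iff₀ hbt] at hn
      have : β / (n + 2) < β - t := by
        rw [div_lt_iff₀ (by positivity)]; nlinarith
      linarith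
    · rintro ⟨n, h1, h2⟩
      have : 0 < β / ((n:ℝ) + 2) := by positivity
      exact ⟨h1, by linarith⟩
  rw [hU, setLIntegral_iUnion_of_directed]
  · refine iSup_le fun n => ?_
    have h1 : 0 < β / ((n:ℝ) + 2) := by positivity
    have h2 : β / ((n:ℝ) + 2) < β := by
      rw [div_lt_iff₀ (by positivity)]
      have : (0:ℝ) ≤ n := Nat.cast_nonneg n
      nlinarith
    exact key _ (by linarith) (by linarith)
  · refine Monotone.directed_le fun a b hab => Ioo_subset_Ioo_right ?_
    have : (a:ℝ) ≤ b := by exact_mod_cast hab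
    gcongr
end PartEleven

section PartTwelve
open scoped ENNReal Topology

lemma baire_time (u : ℝ → Space → ℝ) (t₁ t₂ : ℝ) (h : t₁ < t₂) (hc : ContinuousOn (fun p : ℝ × Space => u p.1 p.2) (Ioo t₁ t₂ ×ˢ univ))
    (hs : ∀ t ∈ Ioo t₁ t₂, HasCompactSupport (u t)) :
    ∃ a ∈ Ioo t₁ t₂, HasCompactSupport (dt1 u a) := by
  haveI : BaireSpace (Ioo t₁ t₂) := isOpen_Ioo.baireSpace
  haveI : Nonempty (Ioo t₁ t₂) := (nonempty_Ioo.2 h).to_subtype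
  have hcl : ∀ n : ℕ, IsClosed {t : Ioo t₁ t₂ | ∀ x : Space, (n:ℝ) < ‖x‖ → u t x = 0} := by
    intro n
    simp only [setOf_forall]
    refine isClosed_iInter fun x => isClosed_iInter fun _ => ?_
    refine isClosed_eq ?_ continuous_const
    exact hc.comp_continuous (f := fun t : Ioo t₁ t₂ => ((t:ℝ), x)) (by fun_prop) (fun t => ⟨t.2, trivial⟩)
  have hU : ⋃ n : ℕ, {t : Ioo t₁ t₂ | ∀ x : Space, (n:ℝ) < ‖x‖ → u t x = 0} = univ := by
    refine eq_univ_of_forall fun t => mem_iUnion.2 ?_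
    obtain ⟨R, hR⟩ := (hs t t.2).isCompact.isBounded.subset_closedBall (0:Space)
    obtain ⟨n, hn⟩ := exists_nat_ge R
    refine ⟨n, fun x hx => ?_⟩
    by_contra hne
    have := hR (subset_tsupport _ (show x ∈ Function.support (u t) from hne))
    rw [mem_closedBall_zero_iff] at this
    linarith
  obtain ⟨n, a, ha⟩ := nonempty_interior_of_iUnion_of_closed hcl hU
  rw [mem_interior_iff_mem_nhds, nhds_subtype_eq_comap, Filter.mem_comap] at ha
  obtain ⟨W, hW, hWs⟩ := ha
  refine ⟨a, a.2, ?_⟩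
  refine HasCompactSupport.of_support_subset_isCompact (isCompact_closedBall (0:Space) n) ?_
  intro x hx
  by_contra hne
  apply hx
  rw [mem_closedBall_zero_iff, not_le] at hne
  have hev : (fun s => u s x) =ᶠ[𝓝 (a:ℝ)] fun _ => 0 := by
    filter_upwards [hW, isOpen_Ioo.mem_nhds a.2] with s hs hsI
    exact hWs (show (⟨s, hsI⟩ : Ioo t₁ t₂) ∈ Subtype.val ⁻¹' W from hs) x hne
  unfold dt1
  rw [hev.deriv_eq]; simp

lemma deriv_aff (F : ℝ → ℝ) (a e s : ℝ) : deriv (fun s => F (a + e * s)) s = e * deriv F (a + e * s) := by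
  have := deriv_comp_mul_left e (fun y => F (a + y)) s
  rw [deriv_comp_const_add] at this
  simpa using this

lemma energy_bounds (c : ℝ) (u : ℝ → Space → ℝ) (t E : ℝ) (h : energy c u t = E) :
    ∫ x : Space, (dt1 u t x) ^ 2 ≤ 2 * E ∧ ∫ x : Space, ‖fderiv ℝ (u t) x‖ ^ 2 ≤ 2 * E := by
  unfold energy at h
  simp only [norm_grad] at h
  have h1 : 0 ≤ ∫ x : Space, (dt1 u t x) ^ 2 := integral_nonneg fun x => by positivity
  have h2 : 0 ≤ ∫ x : Space, ‖fderiv ℝ (u t) x‖ ^ 2 := integral_nonneg fun x => by positivity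
  have h3 : 0 ≤ ∫ x : Space, Fpot c (u t x) := integral_nonneg fun x => Fpot_nonneg c _
  constructor <;> linarith

lemma fwd_of (c : ℝ) (hc : 0 < c) (u : ℝ → Space → ℝ) (t₁ t₂ N E a e α β : ℝ) (ha : a ∈ Ioo t₁ t₂) (he : e * e = 1)
    (h0 : (0:ℝ) ∈ Ioo α β) (hmap : ∀ s ∈ Ioo α β, a + e * s ∈ Ioo t₁ t₂)
    (hsm : ContDiffOn ℝ (⊤ : ℕ∞) (fun p : ℝ × Space => u p.1 p.2) (Ioo t₁ t₂ ×ˢ univ))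
    (hcs : ∀ s ∈ Ioo t₁ t₂, HasCompactSupport (u s))
    (heq : ∀ s ∈ Ioo t₁ t₂, ∀ y, dt2 u s y - lap (u s) y = - f c (u s y))
    (hbd : ∀ s ∈ Ioo t₁ t₂, ∀ y, |u s y| ≤ N)
    (hen : ∀ s ∈ Ioo t₁ t₂, ∫⁻ x, ‖fderiv ℝ (u s) x‖ₑ ^ (2:ℝ) ≤ ENNReal.ofReal (2 * E))
    (hen0 : ∫⁻ x, ‖dt1 u a x‖ₑ ^ (2:ℝ) ≤ ENNReal.ofReal (2 * E)) :
    FwdHyp c (fun s => u (a + e * s)) α β N E := by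
  have hd1 : ∀ s x, dt1 (fun s => u (a + e * s)) s x = e * dt1 u (a + e * s) x := fun s x => deriv_aff (fun r => u r x) a e s
  have hd2 : ∀ s x, dt2 (fun s => u (a + e * s)) s x = dt2 u (a + e * s) x := by
    intro s x
    unfold dt2
    simp only [hd1]
    rw [deriv_const_mul_field, deriv_aff (fun r => dt1 u r x) a e s, ← mul_assoc, he, one_mul]
  refine ⟨hc, h0, ?_, fun s hs => hcs _ (hmap s hs), fun s hs y => ?_, fun s hs => hbd _ (hmap s hs), fun s hs => hen _ (hmap s hs), ?_⟩
  · exact hsm.comp (f := fun p : ℝ × Space => (a + e * p.1, p.2)) (by fun_prop) (fun p hp => ⟨hmap p.1 hp.1, trivial⟩)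
  · rw [hd2]; exact heq _ (hmap s hs) y
  · have he' : ‖e‖ₑ = 1 := by
      have : |e| = 1 := by
        have := abs_mul_abs_self e
        rw [he] at this
        nlinarith [abs_nonneg e]
      rw [← ofReal_norm, Real.norm_eq_abs, this, ENNReal.ofReal_one]
    simp only [hd1, mul_zero, add_zero, enorm_mul, he', one_mul]
    exact hen0

lemma Lt_le (u : ℝ → Space → ℝ) (t₁ t₂ B : ℝ) (hB : 0 ≤ B)
    (hco : ∀ s ∈ Ioo t₁ t₂, Continuous (u s)) (hcs : ∀ s ∈ Ioo t₁ t₂, HasCompactSupport (u s))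
    (h : ∫⁻ t in Ioo t₁ t₂, (∫⁻ x, ‖u t x‖ₑ ^ (12:ℝ)) ^ (1/3:ℝ) ≤ ENNReal.ofReal B) :
    (LtLxNorm 4 12 (Icc t₁ t₂) u) ^ (4:ℕ) ≤ B := by
  have hn : ∀ t, 0 ≤ LxNorm 12 (u t) := fun t => by
    unfold LxNorm
    exact Real.rpow_nonneg (integral_nonneg fun x => Real.rpow_nonneg (abs_nonneg _) _) _
  have hI : 0 ≤ ∫ t in Icc t₁ t₂, (LxNorm 12 (u t)) ^ (4:ℝ) := integral_nonneg fun t => Real.rpow_nonneg (hn t) _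
  have e1 : (LtLxNorm 4 12 (Icc t₁ t₂) u) ^ (4:ℕ) = ∫ t in Icc t₁ t₂, (LxNorm 12 (u t)) ^ (4:ℝ) := by
    unfold LtLxNorm
    rw [← Real.rpow_natCast, ← Real.rpow_mul hI]; norm_num
  rw [e1]
  have h2 : ‖∫ t in Icc t₁ t₂, (LxNorm 12 (u t)) ^ (4:ℝ)‖ₑ ≤ ENNReal.ofReal B := by
    refine (enorm_integral_le_lintegral_enorm _).trans (le_trans (le_of_eq ?_) h)
    rw [setLIntegral_congr Ioo_ae_eq_Icc.symm]
    refine setLIntegral_congr_fun measurableSet_Ioo fun t ht => ?_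
    have hi : Integrable (fun x => |u t x| ^ (12:ℝ)) := by
      refine Continuous.integrable_of_hasCompactSupport ?_ ?_
      · exact (hco t ht).abs.rpow_const (fun x => Or.inr (by norm_num))
      · exact (hcs t ht).comp_left (g := fun y : ℝ => |y| ^ (12:ℝ)) (by simp)
    have hp : 0 ≤ ∫ x, |u t x| ^ (12:ℝ) := integral_nonneg fun x => Real.rpow_nonneg (abs_nonneg _) _
    have e2 : ∫⁻ x, ‖u t x‖ₑ ^ (12:ℝ) = ENNReal.ofReal (∫ x, |u t x| ^ (12:ℝ)) := by
      rw [ofReal_integral_eq_lintegral_ofReal hi (Filter.Eventually.of_forall fun x => Real.rpow_nonneg (abs_nonneg _) _)]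
      refine lintegral_congr fun x => ?_
      rw [← ofReal_norm, ENNReal.ofReal_rpow_of_nonneg (norm_nonneg _) (by norm_num), Real.norm_eq_abs]
    rw [e2, ENNReal.ofReal_rpow_of_nonneg hp (by norm_num), ← ofReal_norm, Real.norm_of_nonneg (Real.rpow_nonneg (hn t) _)]
    unfold LxNorm
    rw [← Real.rpow_mul hp]; norm_num
  rw [← ofReal_norm, Real.norm_of_nonneg hI] at h2
  exact (ENNReal.ofReal_le_ofReal_iff hB).1 h2

lemma shift_pos (φ : ℝ → ℝ≥0∞) (a b : ℝ) : ∫⁻ t in Ioo a b, φ t = ∫⁻ s in Ioo 0 (b - a), φ (a + 1 * s) := by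
  rw [← lintegral_indicator measurableSet_Ioo, ← lintegral_indicator measurableSet_Ioo, ← lintegral_add_left_eq_self _ a]
  refine lintegral_congr fun s => ?_
  by_cases hs : s ∈ Ioo 0 (b - a)
  · rw [indicator_of_mem hs, indicator_of_mem (show a + s ∈ Ioo a b from ⟨by linarith [hs.1], by linarith [hs.2]⟩), one_mul]
  · rw [indicator_of_notMem hs, indicator_of_notMem (fun h : a + s ∈ Ioo a b => hs ⟨by linarith [h.1], by linarith [h.2]⟩)]

lemma shift_neg (φ : ℝ → ℝ≥0∞) (a b : ℝ) : ∫⁻ t in Ioo b a, φ t = ∫⁻ s in Ioo 0 (a - b), φ (a + (-1) * s) := by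
  rw [← lintegral_indicator measurableSet_Ioo, ← lintegral_indicator measurableSet_Ioo, ← lintegral_sub_left_eq_self _ a]
  refine lintegral_congr fun s => ?_
  by_cases hs : s ∈ Ioo 0 (a - b)
  · rw [indicator_of_mem hs, indicator_of_mem (show a - s ∈ Ioo b a from ⟨by linarith [hs.2], by linarith [hs.1]⟩)]
    congr 1; ring
  · rw [indicator_of_notMem hs, indicator_of_notMem (fun h : a - s ∈ Ioo b a => hs ⟨by linarith [h.2], by linarith [h.1]⟩)]
end PartTwelve

theorem longtime_small_energy (c : ℝ) (hc : 0 < c) (hc' : c < 8 / 225) :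
    ∃ c₀ > (0:ℝ), ∃ CL0 > (0:ℝ),
      ∀ (t₁ t₂ : ℝ) (u : ℝ → Space → ℝ) (E M : ℝ),
        t₁ ≤ t₂ →
        IsClassicalSol c (Set.Icc t₁ t₂) u →
        (∀ t ∈ Set.Icc t₁ t₂, energy c u t = E) →
        (∀ t ∈ Set.Icc t₁ t₂, H2tildeNorm (u t) ≤ M) →
        E ≤ c₀ * (g c M) ^ (-(1/2) : ℝ) →
        (LtLxNorm 4 12 (Set.Icc t₁ t₂) u) ^ (4:ℕ) ≤ CL0 := by
  obtain ⟨C1, hC1, hboot⟩ := bootstrap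
  obtain ⟨K, hK, hsob⟩ := sob_real
  obtain ⟨C', hC', hgs⟩ := g_scale hc K hK
  have hg0 := g_pos c 0
  obtain ⟨c₀, hc₀, hc₀s⟩ : ∃ c₀ : ℝ, 0 < c₀ ∧ c₀ ^ 2 = 1 / (2 * C1 * C') :=
    ⟨Real.sqrt (1 / (2 * C1 * C')), Real.sqrt_pos.2 (by positivity), Real.sq_sqrt (by positivity)⟩
  refine ⟨c₀, hc₀, 2 * (C1 * (c₀ ^ 2 / g c 0)), by positivity, fun t₁ t₂ u E M ht hsol hen hH hE => ?_⟩
  have hgM := g_pos c M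
  have hIoo : Ioo t₁ t₂ ⊆ Icc t₁ t₂ := Ioo_subset_Icc_self
  rcases ht.eq_or_lt with heq | hlt
  · refine Lt_le u t₁ t₂ _ (by positivity) ?_ ?_ ?_ <;> simp [heq]
  have hsm : ContDiffOn ℝ (⊤ : ℕ∞) (fun p : ℝ × Space => u p.1 p.2) (Ioo t₁ t₂ ×ˢ univ) := hsol.smooth.mono (prod_mono hIoo subset_rfl)
  obtain ⟨D, D2, hDc, hD2c, hD, hDD, hsym, hsx, hf1, hf2, ht1, ht2⟩ := bridge u t₁ t₂ hsm
  have hcs : ∀ s ∈ Ioo t₁ t₂, HasCompactSupport (u s) := fun s hs => hsol.compactSpt s (hIoo hs)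
  obtain ⟨a, ha, hacs⟩ := baire_time u t₁ t₂ hlt hsm.continuousOn hcs
  obtain ⟨E', hE'⟩ : ∃ E', E' = c₀ * (g c M) ^ (-(1/2) : ℝ) := ⟨_, rfl⟩
  have hE'0 : 0 < E' := by rw [hE']; positivity
  rw [← hE'] at hE
  have hE'2 : E' ^ 2 = c₀ ^ 2 / g c M := by
    rw [hE', mul_pow, ← Real.rpow_natCast (g c M ^ (-(1/2) : ℝ)), ← Real.rpow_mul hgM.le]
    have h2 : ((-(1/2):ℝ)) * ((2:ℕ):ℝ) = -1 := by norm_num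
    rw [h2, Real.rpow_neg_one, div_eq_mul_inv]
  have hdc : Continuous (dt1 u a) := by
    have : dt1 u a = fun y => D (a, y) (1, 0) := funext fun y => ht1 a ha y
    rw [this]
    have h1 : Continuous (fun y : Space => D (a, y)) := by
      rw [← continuousOn_univ]
      exact hDc.comp (by fun_prop) (fun y _ => ⟨ha, trivial⟩)
    exact h1.clm_apply continuous_const
  have hM0 : 0 ≤ M := by
    refine le_trans ?_ (hH a (hIoo ha))
    unfold H2tildeNorm
    have n1 : 0 ≤ ∫ x, ‖iteratedFDeriv ℝ 2 (u a) x‖ ^ 2 := integral_nonneg fun x => by positivity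
    have n2 : 0 ≤ ∫ x, ‖gradient (u a) x‖ ^ 2 := integral_nonneg fun x => by positivity
    positivity
  have hbd : ∀ s ∈ Ioo t₁ t₂, ∀ y, |u s y| ≤ K * M := fun s hs y =>
    (hsob (u s) ((hsx s hs).of_le (by norm_cast)) (hcs s hs) y).trans (mul_le_mul_of_nonneg_left (hH s (hIoo hs)) (by linarith))
  have hen1 : ∀ s ∈ Ioo t₁ t₂, ∫⁻ x, ‖fderiv ℝ (u s) x‖ₑ ^ (2:ℝ) ≤ ENNReal.ofReal (2 * E') := by
    intro s hs
    have hs1 : ContDiff ℝ 1 (u s) := (hsx s hs).of_le (by norm_cast)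
    rw [lint_sq _ (hs1.continuous_fderiv one_ne_zero) ((hcs s hs).fderiv ℝ)]
    exact ENNReal.ofReal_le_ofReal ((energy_bounds c u s E (hen s (hIoo hs))).2.trans (by linarith))
  have hen0 : ∫⁻ x, ‖dt1 u a x‖ₑ ^ (2:ℝ) ≤ ENNReal.ofReal (2 * E') := by
    rw [lint_sq _ hdc hacs]
    refine ENNReal.ofReal_le_ofReal ?_
    simp only [Real.norm_eq_abs, sq_abs]
    exact (energy_bounds c u a E (hen a (hIoo ha))).1.trans (by linarith)
  have hsmall : C1 * E' ^ 2 * g c (K * M) < 1 := by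
    calc C1 * E' ^ 2 * g c (K * M) ≤ C1 * E' ^ 2 * (C' * g c M) := mul_le_mul_of_nonneg_left (hgs M) (by positivity)
      _ = 1 / 2 := by rw [hE'2, hc₀s]; field_simp
      _ < 1 := by norm_num
  have hbound : C1 * E' ^ 2 ≤ C1 * (c₀ ^ 2 / g c 0) := by
    rw [hE'2]
    have : g c 0 ≤ g c M := g_mono hc (by simp)
    gcongr
  have F1 := fwd_of c hc u t₁ t₂ (K * M) E' a 1 (t₁ - a) (t₂ - a) ha (by norm_num) ⟨by linarith [ha.1], by linarith [ha.2]⟩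
    (fun s hs => ⟨by linarith [hs.1], by linarith [hs.2]⟩) hsm hcs (fun s hs => hsol.eqn s (hIoo hs)) hbd hen1 hen0
  have F2 := fwd_of c hc u t₁ t₂ (K * M) E' a (-1) (a - t₂) (a - t₁) ha (by norm_num) ⟨by linarith [ha.2], by linarith [ha.1]⟩
    (fun s hs => ⟨by linarith [hs.2], by linarith [hs.1]⟩) hsm hcs (fun s hs => hsol.eqn s (hIoo hs)) hbd hen1 hen0
  have B1 := (hboot _ _ _ _ _ _ F1 hE'0 hsmall).trans (ENNReal.ofReal_le_ofReal hbound)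
  have B2 := (hboot _ _ _ _ _ _ F2 hE'0 hsmall).trans (ENNReal.ofReal_le_ofReal hbound)
  refine Lt_le u t₁ t₂ _ (by positivity) (fun s hs => (hsx s hs).continuous) hcs ?_
  rw [← shift_pos (fun t => (∫⁻ x, ‖u t x‖ₑ ^ (12:ℝ)) ^ (1/3:ℝ)) a t₂] at B1
  rw [← shift_neg (fun t => (∫⁻ x, ‖u t x‖ₑ ^ (12:ℝ)) ^ (1/3:ℝ)) a t₁] at B2
  have hun : Ioo t₁ t₂ = Ioo t₁ a ∪ Ico a t₂ := (Ioo_union_Ico_eq_Ioo ha.1 ha.2.le).symm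
  rw [hun]
  refine (lintegral_union_le _ _ _).trans ?_
  rw [setLIntegral_congr (Ioo_ae_eq_Ico (a := a) (b := t₂)).symm, two_mul, ENNReal.ofReal_add (by positivity) (by positivity)]
  exact add_le_add B2 B1
end
end

section
/- Logarithmic derivative bound for the loglog weight: let 0 < c ≤ 1 and g(u) := (Real.log (Real.log (10 + u²)))^c. Then g is differentiable on ℝ and |u·g'(u)| ≤ g(u) for every u ∈ ℝ. -/
open MeasureTheory Set

noncomputable section

/-- Logarithmic derivative bound for the loglog weight. -/
theorem loglog_derivative_bound (c : ℝ) (hc : 0 < c) (hc1 : c ≤ 1) :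
    Differentiable ℝ (g c) ∧ ∀ u : ℝ, |u * deriv (g c) u| ≤ g c u := by
  have hL : ∀ u : ℝ, 2 < Real.log (10 + u ^ 2) ∧
      2 * u ^ 2 / (10 + u ^ 2) ≤
        Real.log (10 + u ^ 2) * Real.log (Real.log (10 + u ^ 2)) := by
    intro u
    have hs : 0 < 10 + u ^ 2 := by positivity
    have h10 : 2 < Real.log 10 := by
      have h8 : Real.log 8 = 3 * Real.log 2 := by
        rw [show (8 : ℝ) = 2 ^ 3 by norm_num, Real.log_pow]; norm_num
      have := Real.log_two_gt_d9
      have h : Real.log 8 ≤ Real.log 10 := Real.log_le_log (by norm_num) (by norm_num)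
      linarith
    have h1 : Real.log 10 ≤ Real.log (10 + u ^ 2) :=
      Real.log_le_log (by norm_num) (by nlinarith [sq_nonneg u])
    have h2 : Real.log 10 - Real.log (10 + u ^ 2) ≤ 10 / (10 + u ^ 2) - 1 := by
      rw [← Real.log_div (by norm_num) hs.ne']
      exact Real.log_le_sub_one_of_pos (by positivity)
    refine ⟨by linarith, ?_⟩
    have e1 : 2 * u ^ 2 / (10 + u ^ 2) = 2 - 2 * (10 / (10 + u ^ 2)) := by
      field_simp; ring
    rw [e1]
    generalize Real.log (10 + u ^ 2) = L at *
    have hLp : 0 < L := by linarith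
    have h3 : 1 - Real.log L ≤ Real.exp 1 / L - 1 := by
      have := Real.log_le_sub_one_of_pos (x := Real.exp 1 / L) (by positivity)
      rwa [Real.log_div (Real.exp_pos 1).ne' hLp.ne', Real.log_exp] at this
    have h4 : L * (1 - Real.log L) ≤ Real.exp 1 - L := by
      have := mul_le_mul_of_nonneg_left h3 hLp.le
      have e : L * (Real.exp 1 / L - 1) = Real.exp 1 - L := by field_simp
      linarith
    have := Real.exp_one_lt_d9
    linarith
  have hd : ∀ u : ℝ, HasDerivAt (g c)
      ((2 * u / (10 + u ^ 2)) / Real.log (10 + u ^ 2) * c *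
        Real.log (Real.log (10 + u ^ 2)) ^ (c - 1)) u := by
    intro u
    have hs : 0 < 10 + u ^ 2 := by positivity
    have hl := (hL u).1
    have hll : 0 < Real.log (Real.log (10 + u ^ 2)) := Real.log_pos (by linarith)
    have h0 : HasDerivAt (fun u : ℝ => 10 + u ^ 2) (2 * u) u := by
      simpa using (hasDerivAt_pow 2 u).const_add 10
    exact ((h0.log hs.ne').log (by linarith)).rpow_const (Or.inl hll.ne')
  refine ⟨fun u => (hd u).differentiableAt, fun u => ?_⟩
  rw [(hd u).deriv]
  obtain ⟨hl, hb⟩ := hL u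
  have hs : 0 < 10 + u ^ 2 := by positivity
  have hll : 0 < Real.log (Real.log (10 + u ^ 2)) := Real.log_pos (by linarith)
  unfold g
  have e2 : 2 * u ^ 2 / (10 + u ^ 2) = u * (2 * u / (10 + u ^ 2)) := by ring
  have hn : 0 ≤ 2 * u ^ 2 / (10 + u ^ 2) := by positivity
  rw [e2] at hb hn
  generalize 2 * u / (10 + u ^ 2) = q at *
  generalize Real.log (10 + u ^ 2) = L at *
  generalize Real.log L = M at *
  have hLp : 0 < L := by linarith
  have hp : 0 < M ^ (c - 1) := Real.rpow_pos_of_pos hll _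
  have hM : M ^ c = M * M ^ (c - 1) := by
    rw [Real.rpow_sub_one hll.ne']; field_simp
  have e3 : u * (q / L * c * M ^ (c - 1)) = (u * q) / L * c * M ^ (c - 1) := by ring
  have hq : 0 ≤ u * q / L := by positivity
  have hq2 : u * q / L ≤ M := by
    rw [div_le_iff₀ hLp]; linarith
  rw [e3, abs_of_nonneg (by positivity), hM]
  refine mul_le_mul_of_nonneg_right ?_ hp.le
  nlinarith
end
end
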